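/- arXiv:math/0507441 — 3 statements merged into one kernel-verified Lean document; each statement's English description precedes it below -/
import Mathlib

section
/- Uniform Tits alternative for Zariski-dense subgroups of SL_d(ℤ) (the case 𝕂 = ℚ, S = {∞}, 𝔾 = SL_d of Theorem 2): For every d ≥ 2 there exists a constant m = m(d) ≥ 1 with the following property: for every finite symmetric subset Σ of SL_d(ℤ) with 1 ∈ Σ whose generated subgroup is Zariski dense in SL_d(ℝ), the set Σ^m contains two independent elements. -/
open Matrix Pointwise

namespace UT

/-- index type of the `i`-th compound matrix -/
abbrev PC (d i : ℕ) : Type := Set.powersetCard (Fin d) i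

noncomputable instance instFintypePC (d i : ℕ) : Fintype (PC d i) := Fintype.ofFinite _

noncomputable instance instDecEqPC (d i : ℕ) : DecidableEq (PC d i) := Classical.decEq _

/-- increasing enumeration of a subset -/
noncomputable def en {d i : ℕ} (I : PC d i) : Fin i ↪o Fin d := Set.powersetCard.ofFinEmbEquiv.symm I

lemma mem_range_en {d i : ℕ} (I : PC d i) (x : Fin d) : x ∈ Set.range (en I) ↔ x ∈ I.1 :=
  Set.powersetCard.mem_range_ofFinEmbEquiv_symm_iff_mem I x

lemma exists_mem_not_mem {d i : ℕ} {I J : PC d i} (h : I ≠ J) :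
    ∃ k : Fin i, ∀ l : Fin i, en I k ≠ en J l := by
  have : ∃ x ∈ I.1, x ∉ J.1 := by
    by_contra! hc
    apply h
    apply Subtype.ext
    apply Finset.eq_of_subset_of_card_le hc
    have h1 : I.1.card = i := I.2
    have h2 : J.1.card = i := J.2
    omega
  obtain ⟨x, hx, hxJ⟩ := this
  obtain ⟨k, rfl⟩ := (mem_range_en I x).2 hx
  refine ⟨k, fun l hl => hxJ ?_⟩
  rw [← mem_range_en, hl]
  exact ⟨l, rfl⟩

/-- compound matrix -/
noncomputable def cmp {d : ℕ} (i : ℕ) (A : Matrix (Fin d) (Fin d) ℝ) : Matrix (PC d i) (PC d i) ℝ :=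
  Matrix.of fun J I => (A.submatrix (en J) (en I)).det

lemma cmp_apply {d : ℕ} (i : ℕ) (A : Matrix (Fin d) (Fin d) ℝ) (J I : PC d i) :
    cmp i A J I = (A.submatrix (en J) (en I)).det := rfl

lemma cmp_eq {d : ℕ} (i : ℕ) (A : Matrix (Fin d) (Fin d) ℝ) :
    cmp i A = LinearMap.toMatrix ((Pi.basisFun ℝ (Fin d)).exteriorPower i)
      ((Pi.basisFun ℝ (Fin d)).exteriorPower i) (exteriorPower.map i (Matrix.toLin' A)) := by
  ext J I
  rw [LinearMap.toMatrix_apply, exteriorPower.basis_apply, exteriorPower.ιMulti_family,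
    exteriorPower.map_apply_ιMulti, exteriorPower.basis_repr_apply,
    exteriorPower.ιMultiDual_apply_ιMulti, cmp_apply, ← Matrix.det_transpose]
  congr 1
  ext a b
  simp [en, Matrix.transpose_apply]

lemma cmp_mul {d : ℕ} (i : ℕ) (A B : Matrix (Fin d) (Fin d) ℝ) :
    cmp i (A * B) = cmp i A * cmp i B := by
  rw [cmp_eq, cmp_eq, cmp_eq, Matrix.toLin'_mul, exteriorPower.map_comp,
    LinearMap.toMatrix_comp _ ((Pi.basisFun ℝ (Fin d)).exteriorPower i)]

lemma cmp_diagonal {d : ℕ} (i : ℕ) (a : Fin d → ℝ) :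
    cmp i (Matrix.diagonal a) = Matrix.diagonal fun I : PC d i => ∏ x ∈ I.1, a x := by
  ext J I
  rw [cmp_apply]
  by_cases h : J = I
  · subst h
    rw [Matrix.diagonal_apply_eq, Matrix.submatrix_diagonal _ _ (en J).injective, Matrix.det_diagonal]
    have : J.1 = Finset.univ.map (en J).toEmbedding := by
      ext x
      rw [← mem_range_en]
      simp
    conv_rhs => rw [this]
    simp
  · rw [Matrix.diagonal_apply_ne _ h]
    obtain ⟨k, hk⟩ := exists_mem_not_mem h
    apply Matrix.det_eq_zero_of_row_eq_zero k
    intro j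
    simp [Matrix.diagonal_apply_ne _ (hk j)]

lemma cmp_one {d : ℕ} (i : ℕ) : cmp i (1 : Matrix (Fin d) (Fin d) ℝ) = 1 := by
  rw [← Matrix.diagonal_one, cmp_diagonal]
  simp

lemma cmp_single {d i : ℕ} (J I : PC d i) : ∃ z : Matrix (Fin d) (Fin d) ℝ,
    cmp i z = Matrix.single J I 1 := by
  refine ⟨Matrix.of fun x y => if ∃ k, en J k = x ∧ en I k = y then 1 else 0, ?_⟩
  ext J' I'
  rw [cmp_apply]
  by_cases hJ : J' = J
  · by_cases hI : I' = I
    · subst hJ hI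
      rw [Matrix.single_apply_same]
      rw [show (Matrix.of fun x y => if ∃ k, en J' k = x ∧ en I' k = y then (1 : ℝ) else 0).submatrix
        (en J') (en I') = 1 from ?_, Matrix.det_one]
      ext a b
      simp [Matrix.one_apply, eq_comm]
    · rw [Matrix.single_apply_of_ne _ _ _ _ _ (by tauto)]
      obtain ⟨k, hk⟩ := exists_mem_not_mem hI
      apply Matrix.det_eq_zero_of_column_eq_zero k
      intro j
      simp only [submatrix_apply, of_apply, ite_eq_right_iff, one_ne_zero, imp_false]
      rintro ⟨l, -, hl⟩
      exact hk l hl.symm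
  · rw [Matrix.single_apply_of_ne _ _ _ _ _ (by tauto)]
    obtain ⟨k, hk⟩ := exists_mem_not_mem hJ
    apply Matrix.det_eq_zero_of_row_eq_zero k
    intro j
    simp only [submatrix_apply, of_apply, ite_eq_right_iff, one_ne_zero, imp_false]
    rintro ⟨l, hl, -⟩
    exact hk l hl.symm

lemma abs_det_le {n : Type*} [Fintype n] [DecidableEq n] {A : Matrix n n ℝ} {x : ℝ}
    (hx : ∀ i j, |A i j| ≤ x) :
    |A.det| ≤ (Fintype.card n).factorial * x ^ Fintype.card n := by
  have := Matrix.det_le (abv := AbsoluteValue.abs) (A := A) (x := x) hx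
  simpa using this

lemma abs_cmp_le {d i : ℕ} {A : Matrix (Fin d) (Fin d) ℝ} {x : ℝ}
    (hx : ∀ i j, |A i j| ≤ x) (J I : PC d i) :
    |cmp i A J I| ≤ i.factorial * x ^ i := by
  rw [cmp_apply]
  simpa using abs_det_le (A := A.submatrix (en J) (en I)) (x := x) (fun a b => hx _ _)

end UT


namespace UT

lemma abs_dot_le {ι : Type*} [Fintype ι] (x y : ι → ℝ) :
    |x ⬝ᵥ y| ≤ Fintype.card ι * ‖x‖ * ‖y‖ := by
  unfold dotProduct
  calc |∑ i, x i * y i| ≤ ∑ i, |x i * y i| := Finset.abs_sum_le_sum_abs _ _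
    _ ≤ ∑ _i : ι, ‖x‖ * ‖y‖ := by
        apply Finset.sum_le_sum
        intro i _
        rw [abs_mul]
        exact mul_le_mul (norm_le_pi_norm x i) (norm_le_pi_norm y i) (abs_nonneg _) (norm_nonneg _)
    _ = _ := by simp [mul_assoc]

lemma norm_mulVec_le {ι : Type*} [Fintype ι] (M : Matrix ι ι ℝ) (v : ι → ℝ) {e : ℝ} (he : 0 ≤ e)
    (hM : ∀ i j, |M i j| ≤ e) : ‖M *ᵥ v‖ ≤ Fintype.card ι * e * ‖v‖ := by
  rw [pi_norm_le_iff_of_nonneg (by positivity)]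
  intro i
  refine (abs_dot_le _ _).trans ?_
  gcongr
  rw [pi_norm_le_iff_of_nonneg he]
  exact fun j => hM i j

lemma norm_vecMul_le {ι : Type*} [Fintype ι] (M : Matrix ι ι ℝ) (v : ι → ℝ) {e : ℝ} (he : 0 ≤ e)
    (hM : ∀ i j, |M i j| ≤ e) : ‖v ᵥ* M‖ ≤ Fintype.card ι * e * ‖v‖ := by
  rw [← Matrix.mulVec_transpose]
  exact norm_mulVec_le _ _ he fun i j => hM j i

lemma abs_mul_le {ι : Type*} [Fintype ι] (M M' : Matrix ι ι ℝ) {e e' : ℝ} (he : 0 ≤ e)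
    (hM : ∀ i j, |M i j| ≤ e) (hM' : ∀ i j, |M' i j| ≤ e') (i j : ι) :
    |(M * M') i j| ≤ Fintype.card ι * e * e' := by
  rw [Matrix.mul_apply]
  calc |∑ k, M i k * M' k j| ≤ ∑ k, |M i k * M' k j| := Finset.abs_sum_le_sum_abs _ _
    _ ≤ ∑ _k : ι, e * e' := by
        apply Finset.sum_le_sum
        intro k _
        rw [abs_mul]
        exact mul_le_mul (hM i k) (hM' k j) (abs_nonneg _) he
    _ = _ := by simp [mul_assoc]

/-- One step of the ping-pong. -/
lemma step {ι : Type*} [Fintype ι] {M E : Matrix ι ι ℝ} {p ξ q v : ι → ℝ} {c δ ε Λ N m : ℝ}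
    (hN : N = Fintype.card ι) (hN1 : 1 ≤ N)
    (hM : M = vecMulVec p ξ + E) (hE : ∀ i j, |E i j| ≤ ε * ‖p‖ * ‖ξ‖)
    (hδ : 0 < δ) (hδ1 : δ ≤ 1) (hε : 0 ≤ ε) (hεδ : 8 * N ^ 2 * ε ≤ δ ^ 2)
    (hΛ : Λ ≤ ‖p‖ * ‖ξ‖) (hΛδ : 8 ≤ δ * Λ)
    (hpq : δ * ‖ξ‖ * ‖q‖ ≤ |ξ ⬝ᵥ q|)
    (hv : 2 * N * ‖v - c • q‖ ≤ δ * (|c| * ‖q‖)) (hm0 : 0 ≤ m) (hm : m ≤ |c| * ‖q‖) :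
    ∃ c', 2 * N * ‖M *ᵥ v - c' • p‖ ≤ δ * (|c'| * ‖p‖) ∧ 4 * m ≤ |c'| * ‖p‖ := by
  have h1 : M *ᵥ v - (ξ ⬝ᵥ v) • p = E *ᵥ v := by
    rw [hM, Matrix.add_mulVec]
    have : vecMulVec p ξ *ᵥ v = (ξ ⬝ᵥ v) • p := by
      ext i
      simp [Matrix.mulVec, dotProduct, vecMulVec_apply, Finset.sum_mul]
      exact Finset.sum_congr rfl fun _ _ => by ring
    rw [this]; abel
  have h2 : ξ ⬝ᵥ v = c * (ξ ⬝ᵥ q) + ξ ⬝ᵥ (v - c • q) := by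
    rw [dotProduct_sub, dotProduct_smul, smul_eq_mul]; ring
  have h3 := abs_dot_le ξ (v - c • q)
  rw [← hN] at h3
  set r := ‖v - c • q‖ with hr
  set x := |c| * ‖q‖ with hx
  have hx0 : 0 ≤ x := by positivity
  have h4 : δ / 2 * ‖ξ‖ * x ≤ |ξ ⬝ᵥ v| := by
    have ha : |c * (ξ ⬝ᵥ q)| ≥ δ * ‖ξ‖ * x := by
      rw [abs_mul]
      calc δ * ‖ξ‖ * x = |c| * (δ * ‖ξ‖ * ‖q‖) := by rw [hx]; ring
        _ ≤ _ := by gcongr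
    have hb : |ξ ⬝ᵥ v| ≥ |c * (ξ ⬝ᵥ q)| - |ξ ⬝ᵥ (v - c • q)| := by
      rw [h2]
      have := abs_sub_abs_le_abs_sub (c * (ξ ⬝ᵥ q)) (-(ξ ⬝ᵥ (v - c • q)))
      rw [abs_neg, sub_neg_eq_add] at this
      exact this
    have hc : N * ‖ξ‖ * r ≤ δ / 2 * ‖ξ‖ * x := by
      nlinarith [norm_nonneg ξ, mul_le_mul_of_nonneg_left hv (norm_nonneg ξ)]
    linarith
  have h5 : ‖v‖ ≤ 2 * x := by
    have : v = c • q + (v - c • q) := by abel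
    have h6 : ‖v‖ ≤ x + r := by
      calc ‖v‖ = ‖c • q + (v - c • q)‖ := by rw [← this]
        _ ≤ ‖c • q‖ + r := norm_add_le _ _
        _ = x + r := by rw [norm_smul, Real.norm_eq_abs]
    have hr0 : 0 ≤ r := norm_nonneg _
    nlinarith
  have h6 : ‖E *ᵥ v‖ ≤ N * (ε * ‖p‖ * ‖ξ‖) * ‖v‖ := by
    rw [hN]; exact norm_mulVec_le _ _ (by positivity) hE
  refine ⟨ξ ⬝ᵥ v, ?_, ?_⟩
  · rw [h1]
    have h7 : N * (ε * ‖p‖ * ‖ξ‖) * ‖v‖ ≤ N * (ε * ‖p‖ * ‖ξ‖) * (2 * x) := by gcongr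
    have h8 : δ * (δ / 2 * ‖ξ‖ * x * ‖p‖) ≤ δ * (|ξ ⬝ᵥ v| * ‖p‖) := by gcongr
    have h9 : (8 * N ^ 2 * ε) * (‖p‖ * ‖ξ‖ * x) ≤ δ ^ 2 * (‖p‖ * ‖ξ‖ * x) := by gcongr
    have h10 : 2 * N * ‖E *ᵥ v‖ ≤ 2 * N * (N * (ε * ‖p‖ * ‖ξ‖) * (2 * x)) := by
      gcongr; linarith
    nlinarith
  · have h7 : δ / 2 * ‖ξ‖ * x * ‖p‖ ≤ |ξ ⬝ᵥ v| * ‖p‖ := by gcongr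
    have h8 : (δ * Λ) * x ≤ δ * (‖p‖ * ‖ξ‖) * x := by gcongr
    nlinarith

lemma schottky {Γ ι : Type*} [Group Γ] [Fintype ι] [DecidableEq ι] (R : Γ →* Matrix ι ι ℝ)
    (f : Fin 2 → Γ) (p ξ : Fin 2 × Bool → ι → ℝ) {δ ε Λ N : ℝ}
    (hN : N = Fintype.card ι) (hN1 : 1 ≤ N)
    (hp : ∀ s, 0 < ‖p s‖)
    (hE : ∀ s : Fin 2 × Bool, ∀ i j, |(R (bif s.2 then f s.1 else (f s.1)⁻¹)
       - vecMulVec (p s) (ξ s)) i j| ≤ ε * ‖p s‖ * ‖ξ s‖)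
    (hδ : 0 < δ) (hδ1 : δ ≤ 1) (hε : 0 ≤ ε) (hεδ : 8 * N ^ 2 * ε ≤ δ ^ 2)
    (hΛ : ∀ s, Λ ≤ ‖p s‖ * ‖ξ s‖) (hΛδ : 8 ≤ δ * Λ)
    (hpq : ∀ s t : Fin 2 × Bool, (s.1 = t.1 → s.2 = t.2) → δ * ‖ξ s‖ * ‖p t‖ ≤ |ξ s ⬝ᵥ p t|) :
    Function.Injective (FreeGroup.lift f) := by
  set L : Fin 2 × Bool → Γ := fun s => bif s.2 then f s.1 else (f s.1)⁻¹ with hL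
  have key : ∀ (l : List (Fin 2 × Bool)) (s : Fin 2 × Bool), FreeGroup.IsReduced (s :: l) →
      ∃ v0 : ι → ℝ, 0 < ‖v0‖ ∧ ∃ c, 2 * N * ‖R ((List.map L (s :: l)).prod) *ᵥ v0 - c • p s‖
        ≤ δ * (|c| * ‖p s‖) ∧ 4 * ‖v0‖ ≤ |c| * ‖p s‖ := by
    intro l
    induction l with
    | nil =>
      intro s _
      refine ⟨p s, hp s, ?_⟩
      simp only [List.map_cons, List.map_nil, List.prod_cons, List.prod_nil, mul_one]
      refine step hN hN1 (E := R (L s) - vecMulVec (p s) (ξ s)) (by abel) (hE s) hδ hδ1 hε hεδ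
        (hΛ s) hΛδ (q := p s) (hpq s s (fun _ => rfl)) (c := 1) ?_ (norm_nonneg _) (by simp)
      simp; positivity
    | cons t l ih =>
      intro s hs
      rw [FreeGroup.IsReduced, List.isChain_cons_cons] at hs
      obtain ⟨v0, hv0, c, hc1, hc2⟩ := ih t hs.2
      refine ⟨v0, hv0, ?_⟩
      rw [List.map_cons, List.prod_cons, map_mul, ← Matrix.mulVec_mulVec]
      obtain ⟨c', h1, h2⟩ := step hN hN1 (M := R (L s)) (E := R (L s) - vecMulVec (p s) (ξ s)) (by abel) (hE s)
        hδ hδ1 hε hεδ (hΛ s) hΛδ (q := p t) (hpq s t hs.1) hc1 (by positivity) hc2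
      exact ⟨c', h1, by linarith⟩
  rw [injective_iff_map_eq_one]
  intro w hw
  by_contra hne
  have hword : w.toWord ≠ [] := fun h => hne (FreeGroup.toWord_eq_nil_iff.1 h)
  obtain ⟨s, l, hsl⟩ := List.exists_cons_of_ne_nil hword
  have hred : FreeGroup.IsReduced (s :: l) := hsl ▸ FreeGroup.isReduced_toWord
  obtain ⟨v0, hv0, c, hc1, hc2⟩ := key l s hred
  have h1 : (List.map L (s :: l)).prod = 1 := by
    rw [← hw, ← FreeGroup.mk_toWord (x := w), hsl, FreeGroup.lift_mk]
  rw [h1, map_one, Matrix.one_mulVec] at hc1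
  have h2 : ‖c • p s‖ ≤ ‖v0‖ + ‖v0 - c • p s‖ := by
    have : c • p s = v0 - (v0 - c • p s) := by abel
    calc ‖c • p s‖ = ‖v0 - (v0 - c • p s)‖ := by rw [← this]
      _ ≤ _ := norm_sub_le _ _
  rw [norm_smul, Real.norm_eq_abs] at h2
  have h3 : 0 ≤ ‖v0 - c • p s‖ := norm_nonneg _
  have h4 : 0 ≤ |c| * ‖p s‖ := by positivity
  nlinarith

end UT


namespace UT

/-- evaluation of a polynomial at a matrix -/
noncomputable def ev {d : ℕ} (A : Matrix (Fin d) (Fin d) ℝ) (p : MvPolynomial (Fin d × Fin d) ℝ) : ℝ :=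
  MvPolynomial.eval (fun ij => A ij.1 ij.2) p

/-- the real matrix of an integer matrix -/
noncomputable def toR (d : ℕ) : Matrix.SpecialLinearGroup (Fin d) ℤ →* Matrix (Fin d) (Fin d) ℝ where
  toFun g := (Matrix.SpecialLinearGroup.map (n := Fin d) (Int.castRingHom ℝ) g : Matrix (Fin d) (Fin d) ℝ)
  map_one' := by simp
  map_mul' := by simp

/-- Zariski density -/
def ZD {d : ℕ} (S : Finset (Matrix.SpecialLinearGroup (Fin d) ℤ)) : Prop :=
  ∀ p : MvPolynomial (Fin d × Fin d) ℝ,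
          (∀ g : Matrix.SpecialLinearGroup (Fin d) ℝ,
            g ∈ Subgroup.closure
              ((Matrix.SpecialLinearGroup.map (n := Fin d) (Int.castRingHom ℝ)) ''
                (S : Set (Matrix.SpecialLinearGroup (Fin d) ℤ))) →
            MvPolynomial.eval (fun ij => (g : Matrix (Fin d) (Fin d) ℝ) ij.1 ij.2) p = 0) →
          ∀ g : Matrix.SpecialLinearGroup (Fin d) ℝ,
            MvPolynomial.eval (fun ij => (g : Matrix (Fin d) (Fin d) ℝ) ij.1 ij.2) p = 0

/-- the standing hypotheses -/
structure Good {d : ℕ} (S : Finset (Matrix.SpecialLinearGroup (Fin d) ℤ)) : Prop where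
  one : 1 ∈ S
  inv : ∀ s ∈ S, s⁻¹ ∈ S
  zd : ZD S

lemma ev_smul {d D : ℕ} {p : MvPolynomial (Fin d × Fin d) ℝ} (hp : p.IsHomogeneous D) (t : ℝ)
    (A : Matrix (Fin d) (Fin d) ℝ) : ev (t • A) p = t ^ D * ev A p := by
  unfold ev
  rw [MvPolynomial.eval_eq, MvPolynomial.eval_eq, Finset.mul_sum]
  apply Finset.sum_congr rfl
  intro m hm
  have h1 : ∑ i ∈ m.support, m i = D := by
    have := hp.degree_eq_sum_deg_support hm
    exact this.symm
  simp only [Matrix.smul_apply, smul_eq_mul, mul_pow, Finset.prod_mul_distrib]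
  rw [Finset.prod_pow_eq_pow_sum, h1]
  ring

lemma hom_eq_zero {d D : ℕ} (hd : 2 ≤ d) {p : MvPolynomial (Fin d × Fin d) ℝ} (hp : p.IsHomogeneous D)
    (h : ∀ g : Matrix.SpecialLinearGroup (Fin d) ℝ, ev (g : Matrix (Fin d) (Fin d) ℝ) p = 0) : p = 0 := by
  have hpos : ∀ A : Matrix (Fin d) (Fin d) ℝ, 0 < A.det → ev A p = 0 := by
    intro A hA
    set t : ℝ := A.det ^ ((d : ℝ)⁻¹) with ht
    have ht0 : 0 < t := Real.rpow_pos_of_pos hA _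
    have htd : t ^ d = A.det := by
      rw [ht, Real.rpow_inv_natCast_pow hA.le (by omega)]
    have hdet : (t⁻¹ • A).det = 1 := by
      rw [Matrix.det_smul, Fintype.card_fin, inv_pow, htd]
      exact inv_mul_cancel₀ hA.ne'
    have h1 := h ⟨t⁻¹ • A, hdet⟩
    have h2 : A = t • (t⁻¹ • A) := by rw [smul_smul, mul_inv_cancel₀ ht0.ne', one_smul]
    rw [h2, ev_smul hp, h1, mul_zero]
  have hall : ∀ Y : Matrix (Fin d) (Fin d) ℝ, ev Y p = 0 := by
    intro Y
    set q : Polynomial ℝ := MvPolynomial.aeval (fun ij : Fin d × Fin d =>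
      Polynomial.C ((1 : Matrix (Fin d) (Fin d) ℝ) ij.1 ij.2) +
        Polynomial.X * Polynomial.C ((Y - 1) ij.1 ij.2)) p with hq
    have hqe : ∀ t : ℝ, q.eval t = ev (1 + t • (Y - 1)) p := by
      intro t
      rw [hq, ev, ← Polynomial.coe_evalRingHom, MvPolynomial.aeval_def, MvPolynomial.hom_eval₂,
        MvPolynomial.eval, MvPolynomial.coe_eval₂Hom]
      congr 1
      · ext x; simp
      · ext ij; simp
    have hq0 : q = 0 := by
      apply Polynomial.eq_zero_of_infinite_isRoot
      have hcont : Continuous fun t : ℝ => (1 + t • (Y - 1)).det := by fun_prop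
      have hopen : IsOpen {t : ℝ | 0 < (1 + t • (Y - 1)).det} := isOpen_lt continuous_const hcont
      have hmem : (0 : ℝ) ∈ {t : ℝ | 0 < (1 + t • (Y - 1)).det} := by simp
      refine Set.Infinite.mono ?_ (infinite_of_mem_nhds (0 : ℝ) (hopen.mem_nhds hmem))
      intro t ht
      simp only [Set.mem_setOf_eq, Polynomial.IsRoot.def]
      rw [hqe]
      exact hpos _ ht
    have := hqe 1
    rw [hq0] at this
    simpa using this.symm
  apply MvPolynomial.funext
  intro x
  have := hall (Matrix.of fun i j => x (i, j))
  simpa [ev] using this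

lemma mem_closure {d : ℕ} {S : Finset (Matrix.SpecialLinearGroup (Fin d) ℤ)} (hS : Good S)
    {g : Matrix.SpecialLinearGroup (Fin d) ℝ}
    (hg : g ∈ Subgroup.closure
              ((Matrix.SpecialLinearGroup.map (n := Fin d) (Int.castRingHom ℝ)) ''
                (S : Set (Matrix.SpecialLinearGroup (Fin d) ℤ)))) :
    ∃ n : ℕ, ∃ f ∈ (S : Set (Matrix.SpecialLinearGroup (Fin d) ℤ)) ^ n,
      Matrix.SpecialLinearGroup.map (n := Fin d) (Int.castRingHom ℝ) f = g := by
  have hSinv : (S : Set (Matrix.SpecialLinearGroup (Fin d) ℤ))⁻¹ = S := by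
    ext x
    rw [Set.mem_inv]
    exact ⟨fun h => by simpa using hS.inv _ h, fun h => hS.inv _ h⟩
  induction hg using Subgroup.closure_induction with
  | mem x hx =>
    obtain ⟨s, hs, rfl⟩ := hx
    exact ⟨1, s, by simpa using hs, rfl⟩
  | one => exact ⟨0, 1, by simp, by simp⟩
  | mul x y _ _ hx hy =>
    obtain ⟨n, f, hf, rfl⟩ := hx
    obtain ⟨m, f', hf', rfl⟩ := hy
    exact ⟨n + m, f * f', by rw [pow_add]; exact Set.mul_mem_mul hf hf', by simp⟩
  | inv x _ hx =>
    obtain ⟨n, f, hf, rfl⟩ := hx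
    refine ⟨n, f⁻¹, ?_, by simp⟩
    rw [← hSinv, inv_pow, Set.mem_inv, inv_inv]
    exact hf

lemma pow_mono {d : ℕ} {S : Finset (Matrix.SpecialLinearGroup (Fin d) ℤ)} (hS : Good S) {m n : ℕ}
    (h : m ≤ n) : (S : Set (Matrix.SpecialLinearGroup (Fin d) ℤ)) ^ m ⊆
      (S : Set (Matrix.SpecialLinearGroup (Fin d) ℤ)) ^ n :=
  Set.pow_subset_pow_right hS.one h

lemma inv_mem_pow {d : ℕ} {S : Finset (Matrix.SpecialLinearGroup (Fin d) ℤ)} (hS : Good S) {m : ℕ}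
    {f} (hf : f ∈ (S : Set (Matrix.SpecialLinearGroup (Fin d) ℤ)) ^ m) :
      f⁻¹ ∈ (S : Set (Matrix.SpecialLinearGroup (Fin d) ℤ)) ^ m := by
  have hSinv : (S : Set (Matrix.SpecialLinearGroup (Fin d) ℤ))⁻¹ = S := by
    ext x
    rw [Set.mem_inv]
    exact ⟨fun h => by simpa using hS.inv _ h, fun h => hS.inv _ h⟩
  rw [← hSinv, inv_pow, Set.mem_inv, inv_inv]
  exact hf

/-- left translation of polynomials -/
noncomputable def trl {d : ℕ} (s : Matrix (Fin d) (Fin d) ℝ) (p : MvPolynomial (Fin d × Fin d) ℝ) :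
    MvPolynomial (Fin d × Fin d) ℝ :=
  MvPolynomial.aeval (fun ij : Fin d × Fin d =>
    ∑ k, MvPolynomial.C (s ij.1 k) * MvPolynomial.X (k, ij.2)) p

lemma ev_trl {d : ℕ} (s A : Matrix (Fin d) (Fin d) ℝ) (p : MvPolynomial (Fin d × Fin d) ℝ) :
    ev A (trl s p) = ev (s * A) p := by
  unfold ev trl
  rw [MvPolynomial.aeval_def, MvPolynomial.hom_eval₂]
  conv_rhs => rw [MvPolynomial.eval, MvPolynomial.coe_eval₂Hom]
  congr 1
  · ext x; simp
  · ext ij; simp [Matrix.mul_apply]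

lemma trl_hom {d D : ℕ} (s : Matrix (Fin d) (Fin d) ℝ) {p : MvPolynomial (Fin d × Fin d) ℝ}
    (hp : p.IsHomogeneous D) : (trl s p).IsHomogeneous D := by
  have := hp.aeval (n := 1) (fun ij : Fin d × Fin d =>
    ∑ k, MvPolynomial.C (s ij.1 k) * MvPolynomial.X (k, ij.2)) (fun ij => by
      apply MvPolynomial.IsHomogeneous.sum
      intro k _
      exact MvPolynomial.isHomogeneous_C_mul_X _ _)
  rwa [one_mul] at this

/-- polynomials vanishing on the ball -/
noncomputable def van {d : ℕ} (D : ℕ) (S : Finset (Matrix.SpecialLinearGroup (Fin d) ℤ)) (n : ℕ) :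
    Submodule ℝ (MvPolynomial (Fin d × Fin d) ℝ) where
  carrier := {p | p.IsHomogeneous D ∧
    ∀ f ∈ (S : Set (Matrix.SpecialLinearGroup (Fin d) ℤ)) ^ n, ev (toR d f) p = 0}
  zero_mem' := ⟨MvPolynomial.isHomogeneous_zero _ _ _, fun f _ => by simp [ev]⟩
  add_mem' := by
    rintro p q ⟨hp, hp'⟩ ⟨hq, hq'⟩
    refine ⟨hp.add hq, fun f hf => ?_⟩
    have h1 := hp' f hf
    have h2 := hq' f hf
    simp only [ev] at h1 h2 ⊢
    rw [map_add, h1, h2, add_zero]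
  smul_mem' := by
    rintro c p ⟨hp, hp'⟩
    refine ⟨?_, fun f hf => ?_⟩
    · rw [MvPolynomial.smul_eq_C_mul]; exact hp.C_mul c
    · have h1 := hp' f hf
      simp only [ev] at h1 ⊢
      rw [MvPolynomial.smul_eval, h1, mul_zero]

lemma chain {V : Type*} [AddCommGroup V] [Module ℝ V] (H : Submodule ℝ V) [FiniteDimensional ℝ H]
    (W : ℕ → Submodule ℝ V) (hH : ∀ n, W n ≤ H) (hanti : ∀ n, W (n + 1) ≤ W n)
    (hst : ∀ n, W n = W (n + 1) → W (n + 1) = W (n + 2)) (m : ℕ) :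
    W (Module.finrank ℝ H) ≤ W m := by
  have hmono : Antitone W := antitone_nat_of_succ_le hanti
  have : ∀ n, FiniteDimensional ℝ (W n) := fun n =>
    Submodule.finiteDimensional_of_le (hH n)
  have : ∃ n ≤ Module.finrank ℝ H, W n = W (n + 1) := by
    by_contra! hc
    have key : ∀ n, n ≤ Module.finrank ℝ H + 1 →
        Module.finrank ℝ (W n) + n ≤ Module.finrank ℝ H := by
      intro n
      induction n with
      | zero => intro _; simpa using Submodule.finrank_mono (hH 0)
      | succ n ih =>
        intro hn
        have h1 := ih (by omega)
        have h2 : W (n + 1) < W n := lt_of_le_of_ne (hanti n) (hc n (by omega)).symm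
        have h3 := Submodule.finrank_lt_finrank_of_lt h2
        omega
    have := key _ le_rfl
    omega
  obtain ⟨n, hn, hWn⟩ := this
  have h1 : ∀ j, W (n + j) = W (n + j + 1) := by
    intro j
    induction j with
    | zero => exact hWn
    | succ j ih => exact hst _ ih
  have h2 : ∀ j, W (n + j) = W n := by
    intro j
    induction j with
    | zero => rfl
    | succ j ih => rw [← ih, h1 j]; rfl
  calc W (Module.finrank ℝ H) ≤ W n := hmono hn
    _ = W (n + m) := (h2 m).symm
    _ ≤ W m := hmono (by omega)

/-- radius in the escape lemma -/
noncomputable def kE (d D : ℕ) : ℕ :=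
  Module.finrank ℝ (MvPolynomial.homogeneousSubmodule (Fin d × Fin d) ℝ D)

/-- qualitative escape -/
lemma escape {d D : ℕ} (hd : 2 ≤ d) {S : Finset (Matrix.SpecialLinearGroup (Fin d) ℤ)} (hS : Good S)
    {p : MvPolynomial (Fin d × Fin d) ℝ} (hp : p.IsHomogeneous D) (hp0 : p ≠ 0) :
    ∃ f ∈ (S : Set (Matrix.SpecialLinearGroup (Fin d) ℤ)) ^ (kE d D), ev (toR d f) p ≠ 0 := by
  by_contra! hc
  have hmem : p ∈ van D S (kE d D) := ⟨hp, hc⟩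
  have : FiniteDimensional ℝ (MvPolynomial.homogeneousSubmodule (Fin d × Fin d) ℝ D) :=
    Module.Finite.iff_fg.2 (MvPolynomial.homogeneousSubmodule_fg _ _ _)
  have hiff : ∀ n p, p ∈ van D S (n + 1) ↔ p.IsHomogeneous D ∧ ∀ s ∈ S, trl (toR d s) p ∈ van D S n := by
    intro n p
    constructor
    · rintro ⟨h1, h2⟩
      refine ⟨h1, fun s hs => ⟨trl_hom _ h1, fun f hf => ?_⟩⟩
      rw [ev_trl, ← map_mul]
      apply h2
      rw [pow_succ']
      exact Set.mul_mem_mul hs hf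
    · rintro ⟨h1, h2⟩
      refine ⟨h1, fun f hf => ?_⟩
      rw [pow_succ'] at hf
      obtain ⟨s, hs, f₁, hf₁, rfl⟩ := Set.mem_mul.1 hf
      rw [map_mul, ← ev_trl]
      exact (h2 s hs).2 f₁ hf₁
  have hall := chain (MvPolynomial.homogeneousSubmodule (Fin d × Fin d) ℝ D) (van D S)
    (fun n p hp => hp.1)
    (fun n p hp => ⟨hp.1, fun f hf => hp.2 f (pow_mono hS (Nat.le_succ n) hf)⟩)
    (by
      intro n hn
      ext p
      rw [hiff (n + 1), hiff n, ← hn])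
  apply hp0
  apply hom_eq_zero hd hp
  apply hS.zd p
  intro g hg
  obtain ⟨n, f, hf, rfl⟩ := mem_closure hS hg
  exact (hall n hmem).2 f hf

end UT


namespace UT

lemma exists_basis_rows {X : Type*} {ι : Type*} [Fintype ι] [DecidableEq ι] (s : Set X) (v : X → ι → ℝ)
    (h : ∀ c : ι → ℝ, c ≠ 0 → ∃ x ∈ s, v x ⬝ᵥ c ≠ 0) :
    ∃ w : ι → X, (∀ j, w j ∈ s) ∧ (Matrix.of fun j α => v (w j) α).det ≠ 0 := by
  have hspan : Submodule.span ℝ (v '' s) = ⊤ := by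
    by_contra hne
    obtain ⟨f, hf0, hf⟩ := Submodule.exists_le_ker_of_lt_top _ (lt_top_iff_ne_top.2 hne)
    have hfe : ∀ x : ι → ℝ, f x = x ⬝ᵥ fun i => f (Pi.single i 1) := by
      intro x
      conv_lhs => rw [← Finset.univ_sum_single x]
      rw [map_sum, dotProduct]
      apply Finset.sum_congr rfl
      intro i _
      rw [← smul_eq_mul, ← map_smul]
      congr 1
      ext j
      simp [Pi.single_apply]
    obtain ⟨x, hx, hx'⟩ := h (fun i => f (Pi.single i 1)) (by
      intro h0
      apply hf0
      ext1 x
      ext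
      have := congrFun h0 x
      simpa using this)
    apply hx'
    rw [← hfe]
    exact hf (Submodule.subset_span ⟨x, hx, rfl⟩)
  obtain ⟨b, hb, hb1, hb2⟩ := exists_linearIndependent ℝ (v '' s)
  rw [hspan] at hb1
  let bas := Module.Basis.mk hb2 (by rw [Subtype.range_coe]; exact hb1.ge)
  let e := bas.indexEquiv (Pi.basisFun ℝ ι)
  have hw : ∀ j : ι, ∃ x ∈ s, v x = (e.symm j : ι → ℝ) := fun j => hb (e.symm j).2
  choose w hw1 hw2 using hw
  refine ⟨w, hw1, ?_⟩
  have : LinearIndependent ℝ (Matrix.of fun j α => v (w j) α).row := by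
    have h1 : (Matrix.of fun j α => v (w j) α).row = (fun x : b => (x : ι → ℝ)) ∘ e.symm := by
      ext j α
      simp [Matrix.row, hw2]
    rw [h1]
    exact hb2.comp _ e.symm.injective
  rw [Matrix.linearIndependent_rows_iff_isUnit, Matrix.isUnit_iff_isUnit_det] at this
  exact this.ne_zero

/-- exponents of degree `D` -/
abbrev Ix (d D : ℕ) : Type := {k : Fin d × Fin d → ℕ // k ∈ Finset.piAntidiag Finset.univ D}

/-- monomial -/
def mono {d D : ℕ} (α : Ix d D) (A : Matrix (Fin d) (Fin d) ℝ) : ℝ := ∏ ij, A ij.1 ij.2 ^ α.1 ij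

lemma sum_Ix {d D : ℕ} (α : Ix d D) : ∑ ij, α.1 ij = D := by
  have := α.2
  rw [Finset.mem_piAntidiag] at this
  exact this.1

lemma abs_mono_le {d D : ℕ} (α : Ix d D) {A : Matrix (Fin d) (Fin d) ℝ} {x : ℝ}
    (h : ∀ i j, |A i j| ≤ x) : |mono α A| ≤ x ^ D := by
  unfold mono
  have h0 : x ^ D = ∏ ij, x ^ α.1 ij := by
    rw [Finset.prod_pow_eq_pow_sum, sum_Ix α]
  rw [Finset.abs_prod, h0]
  apply Finset.prod_le_prod
  · intros; positivity
  · intro ij _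
    rw [abs_pow]
    gcongr
    exact h _ _

lemma ev_eq_sum {d D : ℕ} {p : MvPolynomial (Fin d × Fin d) ℝ} (hp : p.IsHomogeneous D)
    (A : Matrix (Fin d) (Fin d) ℝ) :
    ev A p = (fun α : Ix d D => mono α A) ⬝ᵥ fun α : Ix d D => p.coeff (Finsupp.equivFunOnFinite.symm α.1) := by
  rw [ev, MvPolynomial.eval_eq', dotProduct]
  symm
  apply Finset.sum_bij_ne_zero (fun (α : Ix d D) _ _ => Finsupp.equivFunOnFinite.symm α.1)
  · intro α _ h
    rw [MvPolynomial.mem_support_iff]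
    exact right_ne_zero_of_mul h
  · intro α _ _ β _ _ h
    exact Subtype.ext (Finsupp.equivFunOnFinite.symm.injective h)
  · intro m hm h
    refine ⟨⟨m, ?_⟩, Finset.mem_univ _, ?_, ?_⟩
    · rw [Finset.mem_piAntidiag]
      refine ⟨?_, fun _ _ => Finset.mem_univ _⟩
      have := hp.degree_eq_sum_deg_support hm
      refine Eq.trans ?_ this.symm
      symm
      rw [Finset.sum_subset (Finset.subset_univ _)]
      intro x _ hx
      exact Finsupp.notMem_support_iff.1 hx
    · rw [mul_comm]
      simpa [mono] using h
    · simp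
  · intro α _ _
    simp [mono, mul_comm]

lemma exists_poly {d D : ℕ} (c : Ix d D → ℝ) (hc : c ≠ 0) : ∃ p : MvPolynomial (Fin d × Fin d) ℝ,
    p.IsHomogeneous D ∧ p ≠ 0 ∧ ∀ A, ev A p = (fun α : Ix d D => mono α A) ⬝ᵥ c := by
  let p : MvPolynomial (Fin d × Fin d) ℝ :=
    ∑ α : Ix d D, MvPolynomial.monomial (Finsupp.equivFunOnFinite.symm α.1) (c α)
  have hp : p.IsHomogeneous D := by
    apply MvPolynomial.IsHomogeneous.sum
    intro α _
    apply MvPolynomial.isHomogeneous_monomial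
    rw [Finsupp.degree_eq_sum]
    simpa using sum_Ix α
  have hco : ∀ α : Ix d D, p.coeff (Finsupp.equivFunOnFinite.symm α.1) = c α := by
    intro α
    simp only [p, MvPolynomial.coeff_sum, MvPolynomial.coeff_monomial]
    rw [Finset.sum_eq_single α]
    · simp
    · intro β _ hβ
      rw [if_neg]
      intro h
      exact hβ (Subtype.ext (Finsupp.equivFunOnFinite.symm.injective h))
    · simp
  refine ⟨p, hp, ?_, ?_⟩
  · intro h0
    apply hc
    ext α
    rw [← hco, h0]; simp
  · intro A
    rw [ev_eq_sum hp]
    simp only [hco]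

/-- conjugated representation -/
noncomputable def cj {d : ℕ} (P : (Matrix (Fin d) (Fin d) ℝ)ˣ) :
    Matrix.SpecialLinearGroup (Fin d) ℤ →* Matrix (Fin d) (Fin d) ℝ where
  toFun g := (↑P⁻¹ : Matrix (Fin d) (Fin d) ℝ) * toR d g * P
  map_one' := by simp
  map_mul' x y := by
    rw [map_mul]
    simp only [mul_assoc, Units.mul_inv_cancel_left]

lemma cj_apply {d : ℕ} (P : (Matrix (Fin d) (Fin d) ℝ)ˣ) (g) :
    cj P g = (↑P⁻¹ : Matrix (Fin d) (Fin d) ℝ) * toR d g * P := rfl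

lemma trace_cj {d : ℕ} (P : (Matrix (Fin d) (Fin d) ℝ)ˣ) (g) :
    (cj P g).trace = (toR d g).trace := by
  rw [cj_apply, Matrix.trace_mul_comm, ← mul_assoc, Units.mul_inv, one_mul]

lemma det_cj {d : ℕ} (P : (Matrix (Fin d) (Fin d) ℝ)ˣ) (g) :
    (cj P g).det = 1 := by
  rw [cj_apply, det_mul, det_mul, mul_right_comm, ← det_mul, Units.inv_mul, det_one, one_mul]
  exact (Matrix.SpecialLinearGroup.map (n := Fin d) (Int.castRingHom ℝ) g).2

lemma trace_int {d : ℕ} (g : Matrix.SpecialLinearGroup (Fin d) ℤ) :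
    (toR d g).trace = ((g.1.trace : ℤ) : ℝ) := by
  simp [toR, Matrix.trace]

/-- swap on exponents -/
def sw (d D : ℕ) : Equiv.Perm (Ix d D) where
  toFun α := ⟨fun ij => α.1 ij.swap, by
    rw [Finset.mem_piAntidiag]
    refine ⟨?_, fun _ _ => Finset.mem_univ _⟩
    refine Eq.trans ?_ (sum_Ix α)
    exact Equiv.sum_comp (Equiv.prodComm _ _) α.1⟩
  invFun α := ⟨fun ij => α.1 ij.swap, by
    rw [Finset.mem_piAntidiag]
    refine ⟨?_, fun _ _ => Finset.mem_univ _⟩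
    refine Eq.trans ?_ (sum_Ix α)
    exact Equiv.sum_comp (Equiv.prodComm _ _) α.1⟩
  left_inv α := by simp
  right_inv α := by simp

lemma mono_transpose {d D : ℕ} (α : Ix d D) (A : Matrix (Fin d) (Fin d) ℝ) :
    ∏ ij : Fin d × Fin d, A ij.2 ij.1 ^ α.1 ij = mono (sw d D α) A := by
  unfold mono sw
  exact Equiv.prod_comp (Equiv.prodComm (Fin d) (Fin d)) (fun ij => A ij.1 ij.2 ^ α.1 ij.swap)

lemma trace_pow {d D : ℕ} (A B : Matrix (Fin d) (Fin d) ℝ) :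
    (A * B).trace ^ D = ∑ α : Ix d D, mono α A * (Nat.multinomial Finset.univ α.1 : ℝ) * mono (sw d D α) B := by
  have h1 : (A * B).trace = ∑ ij : Fin d × Fin d, A ij.1 ij.2 * B ij.2 ij.1 := by
    rw [Fintype.sum_prod_type]
    simp [Matrix.trace, Matrix.mul_apply]
  rw [h1, Finset.sum_pow_eq_sum_piAntidiag, ← Finset.sum_coe_sort]
  apply Finset.sum_congr rfl
  intro α _
  simp only [mul_pow, Finset.prod_mul_distrib]
  rw [mono_transpose α B]
  simp only [mono]
  ring

/-- product of multinomials -/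
noncomputable def KK (d D : ℕ) : ℝ := ∏ α : Ix d D, (Nat.multinomial Finset.univ α.1 : ℝ)

lemma one_le_KK (d D : ℕ) : 1 ≤ KK d D := by
  unfold KK
  have : ∏ α : Ix d D, (1 : ℝ) ≤ ∏ α : Ix d D, (Nat.multinomial Finset.univ α.1 : ℝ) := by
    apply Finset.prod_le_prod
    · intros; positivity
    · intro α _
      exact_mod_cast Nat.multinomial_pos _ _
  simpa using this

/-- the evaluation matrix -/
def EE {d D : ℕ} (w : Ix d D → Matrix (Fin d) (Fin d) ℝ) : Matrix (Ix d D) (Ix d D) ℝ :=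
  Matrix.of fun j α => mono α (w j)

lemma abs_det_gram {d D : ℕ} (w : Ix d D → Matrix (Fin d) (Fin d) ℝ) :
    |(Matrix.of fun j k => (w j * w k).trace ^ D : Matrix (Ix d D) (Ix d D) ℝ).det| = (EE w).det ^ 2 * KK d D := by
  have : (Matrix.of fun j k => (w j * w k).trace ^ D : Matrix (Ix d D) (Ix d D) ℝ) =
      EE w * Matrix.diagonal (fun α : Ix d D => (Nat.multinomial Finset.univ α.1 : ℝ)) *
        ((EE w).submatrix id (sw d D))ᵀ := by
    ext j k
    rw [Matrix.of_apply, trace_pow, Matrix.mul_apply]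
    apply Finset.sum_congr rfl
    intro α _
    rw [Matrix.mul_diagonal]
    rfl
  rw [this, det_mul, det_mul, det_transpose, Matrix.det_permute', det_diagonal, ← KK]
  have hK := one_le_KK d D
  rw [abs_mul, abs_mul, abs_mul, abs_of_nonneg (by linarith : 0 ≤ KK d D)]
  have hs : |(((Equiv.Perm.sign (sw d D) : ℤˣ) : ℤ) : ℝ)| = 1 := by
    rcases Int.units_eq_one_or (Equiv.Perm.sign (sw d D)) with h | h <;> simp [h]
  rw [hs]
  nlinarith [sq_abs (EE w).det]

lemma aux_one_le {x y : ℝ} (hy : 1 ≤ y) (h : 1 ≤ x ^ 2 * y) : 1 ≤ |x| * y := by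
  have h3 : 1 ≤ (|x| * y) ^ 2 := by
    rw [mul_pow, sq_abs]
    have : x ^ 2 * y ≤ x ^ 2 * y ^ 2 := by
      gcongr
      nlinarith
    linarith
  exact (one_le_sq_iff₀ (by positivity)).1 h3

lemma exists_words {d D : ℕ} (hd : 2 ≤ d) {S : Finset (Matrix.SpecialLinearGroup (Fin d) ℤ)} (hS : Good S) :
    ∃ w : Ix d D → Matrix.SpecialLinearGroup (Fin d) ℤ,
      (∀ j, w j ∈ (S : Set (Matrix.SpecialLinearGroup (Fin d) ℤ)) ^ (kE d D)) ∧
      ∀ P : (Matrix (Fin d) (Fin d) ℝ)ˣ, 1 ≤ |(EE fun j => cj P (w j)).det| * KK d D := by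
  obtain ⟨w, hw, hdet⟩ := exists_basis_rows ((S : Set (Matrix.SpecialLinearGroup (Fin d) ℤ)) ^ (kE d D))
    (fun f => fun α : Ix d D => mono α (toR d f)) (by
      intro c hc
      obtain ⟨p, hp, hp0, hpe⟩ := exists_poly c hc
      obtain ⟨f, hf, hf0⟩ := escape hd hS hp hp0
      exact ⟨f, hf, by rwa [← hpe]⟩)
  refine ⟨w, hw, fun P => ?_⟩
  have hK := one_le_KK d D
  have h1 : ((EE fun j => cj P (w j)).det) ^ 2 * KK d D =
      ((EE fun j => toR d (w j)).det) ^ 2 * KK d D := by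
    rw [← abs_det_gram, ← abs_det_gram]
    simp only [← map_mul, trace_cj]
  have h2 : 1 ≤ ((EE fun j => toR d (w j)).det) ^ 2 * KK d D := by
    have hne : ((EE fun j => toR d (w j)).det) ^ 2 * KK d D ≠ 0 := by
      apply mul_ne_zero
      · exact pow_ne_zero _ hdet
      · linarith
    rw [← abs_det_gram] at hne ⊢
    have hdetz : (Matrix.of fun j k => (toR d (w j) * toR d (w k)).trace ^ D : Matrix (Ix d D) (Ix d D) ℝ).det
        = (((Matrix.of fun j k => ((w j * w k).1.trace) ^ D : Matrix (Ix d D) (Ix d D) ℤ).det : ℤ) : ℝ) := by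
      refine Eq.trans ?_ (RingHom.map_det (Int.castRingHom ℝ) _).symm
      congr 1
      ext j k
      rw [Matrix.of_apply, ← map_mul, trace_int]
      simp
    rw [hdetz] at hne ⊢
    rw [← Int.cast_abs] at hne ⊢
    have : (1 : ℤ) ≤ |(Matrix.of fun j k => ((w j * w k).1.trace) ^ D : Matrix (Ix d D) (Ix d D) ℤ).det| := by
      apply Int.one_le_abs
      intro h0
      apply hne
      rw [h0]; simp
    exact_mod_cast this
  rw [← h1] at h2
  exact aux_one_le hK h2

/-- adjugate bound -/
lemma abs_adjugate_le {ι : Type*} [Fintype ι] [DecidableEq ι] (A : Matrix ι ι ℝ) {x : ℝ} (hx : 1 ≤ x)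
    (h : ∀ i j, |A i j| ≤ x) (i j : ι) :
    |A.adjugate i j| ≤ (Fintype.card ι).factorial * x ^ Fintype.card ι := by
  rw [Matrix.adjugate_apply]
  apply abs_det_le
  intro k l
  rw [Matrix.updateRow_apply]
  split_ifs
  · rw [Pi.single_apply]
    split_ifs
    · simpa using hx
    · simp; linarith
  · exact h k l

lemma mono_dot_le {ι : Type*} [Fintype ι] [DecidableEq ι] {E : Matrix ι ι ℝ} {c : ι → ℝ} {m : ι → ℝ}
    {K x y b : ℝ} (hK : 1 ≤ K) (hdet : 1 ≤ |E.det| * K) (hx : 1 ≤ x) (hE : ∀ i j, |E i j| ≤ x)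
    (hb0 : 0 ≤ b) (hb : ∀ j, |(E *ᵥ c) j| ≤ b) (hy : 0 ≤ y) (hm : ∀ j, |m j| ≤ y) :
    |m ⬝ᵥ c| ≤ ((Fintype.card ι : ℝ) ^ 2 * K * ((Fintype.card ι).factorial : ℝ) + 1) * y *
      x ^ Fintype.card ι * b := by
  have hadj := abs_adjugate_le E hx hE
  obtain ⟨N, hN⟩ : ∃ N, N = Fintype.card ι := ⟨_, rfl⟩
  rw [← hN] at hadj ⊢
  have h1 : E.adjugate *ᵥ (E *ᵥ c) = E.det • c := by
    rw [Matrix.mulVec_mulVec, Matrix.adjugate_mul, Matrix.smul_mulVec, Matrix.one_mulVec]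
  have h2 : ‖E *ᵥ c‖ ≤ b := by
    rw [pi_norm_le_iff_of_nonneg hb0]
    exact hb
  have h3 := norm_mulVec_le E.adjugate (E *ᵥ c) (by positivity) hadj
  rw [h1, ← hN] at h3
  have hcn : ‖c‖ ≤ K * (N * (N.factorial * x ^ N) * b) := by
    rw [norm_smul] at h3
    calc ‖c‖ ≤ (|E.det| * K) * ‖c‖ := le_mul_of_one_le_left (norm_nonneg _) hdet
      _ = K * (‖E.det‖ * ‖c‖) := by rw [Real.norm_eq_abs]; ring
      _ ≤ K * (N * (N.factorial * x ^ N) * b) := by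
        refine mul_le_mul_of_nonneg_left ?_ (by linarith)
        refine h3.trans ?_
        gcongr
  have hmn : ‖m‖ ≤ y := by
    rw [pi_norm_le_iff_of_nonneg hy]
    exact hm
  calc _ ≤ (N : ℝ) * ‖m‖ * ‖c‖ := by rw [hN]; exact abs_dot_le _ _
    _ ≤ N * y * (K * (N * (N.factorial * x ^ N) * b)) := by gcongr
    _ = ((N : ℝ) ^ 2 * K * (N.factorial : ℝ)) * y * x ^ N * b := by ring
    _ ≤ _ := by gcongr; linarith

lemma qescape (d D : ℕ) (hd : 2 ≤ d) : ∃ C : ℝ, 1 ≤ C ∧ ∃ M : ℕ,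
    ∀ S : Finset (Matrix.SpecialLinearGroup (Fin d) ℤ), Good S →
    ∀ P : (Matrix (Fin d) (Fin d) ℝ)ˣ, ∀ B : ℝ, 1 ≤ B →
    (∀ f ∈ (S : Set (Matrix.SpecialLinearGroup (Fin d) ℤ)) ^ (kE d D), ∀ i j, |cj P f i j| ≤ B) →
    ∀ p : MvPolynomial (Fin d × Fin d) ℝ, p.IsHomogeneous D →
    ∀ z : Matrix (Fin d) (Fin d) ℝ, ∀ R : ℝ, 1 ≤ R → (∀ i j, |z i j| ≤ R) →
    ∃ f ∈ (S : Set (Matrix.SpecialLinearGroup (Fin d) ℤ)) ^ (kE d D),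
      |ev z p| ≤ C * R ^ D * B ^ M * |ev (cj P f) p| := by
  have hK := one_le_KK d D
  refine ⟨(Fintype.card (Ix d D) : ℝ) ^ 2 * KK d D * ((Fintype.card (Ix d D)).factorial : ℝ) + 1, ?_,
    D * Fintype.card (Ix d D), ?_⟩
  · have : 0 ≤ (Fintype.card (Ix d D) : ℝ) ^ 2 * KK d D * ((Fintype.card (Ix d D)).factorial : ℝ) :=
      mul_nonneg (mul_nonneg (sq_nonneg _) (zero_le_one.trans hK)) (Nat.cast_nonneg _)
    exact le_add_of_nonneg_left this
  intro S hS P B hB hbd p hp z R hR hz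
  rcases isEmpty_or_nonempty (Ix d D) with he | hne
  · refine ⟨1, ?_, ?_⟩
    · exact Set.one_mem_pow (by simpa using hS.one)
    · have : ev z p = 0 := by
        rw [ev_eq_sum hp, dotProduct, Finset.univ_eq_empty, Finset.sum_empty]
      have h2 : ev (cj P 1) p = 0 := by
        rw [ev_eq_sum hp, dotProduct, Finset.univ_eq_empty, Finset.sum_empty]
      rw [this, h2, abs_zero, mul_zero]
  obtain ⟨w, hw, hdet⟩ := exists_words (D := D) hd hS
  obtain ⟨j₀, hj₀⟩ := Finite.exists_max fun j => |ev (cj P (w j)) p|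
  refine ⟨w j₀, hw j₀, ?_⟩
  have h0 := mono_dot_le (E := EE fun j => cj P (w j))
    (c := fun α : Ix d D => p.coeff (Finsupp.equivFunOnFinite.symm α.1))
    (m := fun α : Ix d D => mono α z) hK (hdet P) (one_le_pow₀ (n := D) hB)
    (fun i j => abs_mono_le j (hbd _ (hw i))) (abs_nonneg (ev (cj P (w j₀)) p))
    (by
      intro j
      refine le_trans (le_of_eq ?_) (hj₀ j)
      rw [ev_eq_sum hp]
      rfl) (y := R ^ D) (pow_nonneg (zero_le_one.trans hR) _) (fun α => abs_mono_le α hz)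
  rw [← ev_eq_sum hp, ← pow_mul] at h0
  exact h0

end UT


namespace UT

lemma exists_lin_words {d : ℕ} (hd : 2 ≤ d) {S : Finset (Matrix.SpecialLinearGroup (Fin d) ℤ)} (hS : Good S) :
    ∃ w : Fin d × Fin d → Matrix.SpecialLinearGroup (Fin d) ℤ,
      (∀ j, w j ∈ (S : Set (Matrix.SpecialLinearGroup (Fin d) ℤ)) ^ (kE d 1)) ∧
      (Matrix.of fun j ij => toR d (w j) ij.1 ij.2 : Matrix (Fin d × Fin d) (Fin d × Fin d) ℝ).det ≠ 0 := by
  apply exists_basis_rows ((S : Set (Matrix.SpecialLinearGroup (Fin d) ℤ)) ^ (kE d 1))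
    (fun f => fun ij : Fin d × Fin d => toR d f ij.1 ij.2)
  intro c hc
  obtain ⟨f, hf, hf0⟩ := escape (D := 1) hd hS (p := ∑ ij, MvPolynomial.C (c ij) * MvPolynomial.X ij) (by
    apply MvPolynomial.IsHomogeneous.sum
    intro k _
    exact MvPolynomial.isHomogeneous_C_mul_X _ _) (by
    intro h0
    apply hc
    ext ij
    have := congrArg (MvPolynomial.coeff (Finsupp.single ij 1)) h0
    rw [MvPolynomial.coeff_sum, Finset.sum_eq_single ij] at this
    · simpa using this
    · intro b _ hb
      rw [MvPolynomial.coeff_C_mul, MvPolynomial.coeff_X, if_neg, mul_zero]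
      intro h
      exact hb (Finsupp.single_left_injective one_ne_zero h)
    · simp)
  refine ⟨f, hf, ?_⟩
  convert hf0 using 1
  simp [ev, dotProduct, mul_comm]

lemma exists_max_frame {d : ℕ} {ι : Type*} [Finite ι] (v : ι → Fin d → ℝ)
    (h : ∀ c : Fin d → ℝ, c ≠ 0 → ∃ j, v j ⬝ᵥ c ≠ 0) :
    ∃ P : (Matrix (Fin d) (Fin d) ℝ)ˣ, ∃ J : Fin d → ι, (∀ i m, P.1 i m = v (J m) i) ∧
      ∀ l i, |((↑P⁻¹ : Matrix (Fin d) (Fin d) ℝ) *ᵥ v l) i| ≤ 1 := by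
  obtain ⟨u, _, hu⟩ := exists_basis_rows (Set.univ : Set ι) v (fun c hc => by
    obtain ⟨j, hj⟩ := h c hc
    exact ⟨j, trivial, hj⟩)
  let F : (Fin d → ι) → Matrix (Fin d) (Fin d) ℝ := fun J => Matrix.of fun i m => v (J m) i
  have : Nonempty (Fin d → ι) := ⟨u⟩
  obtain ⟨J, hJ⟩ := Finite.exists_max fun J => |(F J).det|
  have hu' : (F u).det ≠ 0 := by
    rw [← Matrix.det_transpose]
    exact hu
  have hJ0 : (F J).det ≠ 0 := by
    intro h0
    have := hJ u
    rw [h0, abs_zero] at this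
    exact hu' (abs_nonpos_iff.1 this)
  have hunit : IsUnit (F J) := (Matrix.isUnit_iff_isUnit_det _).2 (isUnit_iff_ne_zero.2 hJ0)
  obtain ⟨P, hP⟩ := hunit
  refine ⟨P, J, fun i m => by rw [hP]; rfl, fun l i => ?_⟩
  have h1 : (F J).det • ((↑P⁻¹ : Matrix (Fin d) (Fin d) ℝ) *ᵥ v l) = cramer (F J) (v l) := by
    rw [← Matrix.mulVec_smul, ← Matrix.mulVec_cramer, Matrix.mulVec_mulVec, ← hP, Units.inv_mul,
      Matrix.one_mulVec]
  have h2 := congrFun h1 i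
  rw [Pi.smul_apply, smul_eq_mul, Matrix.cramer_apply] at h2
  have h3 : (F J).updateCol i (v l) = F (Function.update J i l) := by
    ext a b
    rw [Matrix.updateCol_apply]
    simp only [F, Matrix.of_apply, Function.update_apply]
    split_ifs <;> rfl
  rw [h3] at h2
  have h4 := hJ (Function.update J i l)
  rw [← h2, abs_mul] at h4
  have h5 : 0 < |(F J).det| := abs_pos.2 hJ0
  by_contra! hc
  nlinarith

lemma solve_bound {ι : Type*} [Fintype ι] [DecidableEq ι] {c G Y : Matrix ι ι ℝ} {T : ℝ} (hT : 1 ≤ T)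
    (h : c * G = Y) (hG : 1 ≤ |G.det|) (hGb : ∀ i j, |G i j| ≤ T) (hY : ∀ i j, |Y i j| ≤ T) (i j : ι) :
    |c i j| ≤ Fintype.card ι * T * ((Fintype.card ι).factorial * T ^ Fintype.card ι) := by
  have h1 : G.det • c = Y * G.adjugate := by
    rw [← h, Matrix.mul_assoc, Matrix.mul_adjugate, Matrix.mul_smul, Matrix.mul_one]
  have h2 := abs_mul_le Y G.adjugate (by linarith) hY (abs_adjugate_le G hT hGb) i j
  rw [← h1, Matrix.smul_apply, smul_eq_mul, abs_mul] at h2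
  refine le_trans ?_ h2
  exact le_mul_of_one_le_left (abs_nonneg _) hG

lemma norm_lemma (d : ℕ) (hd : 2 ≤ d) : ∃ K M : ℕ, ∃ C : ℝ, 1 ≤ C ∧
    ∀ S : Finset (Matrix.SpecialLinearGroup (Fin d) ℤ), Good S → ∀ T : ℝ, 1 ≤ T →
    (∀ w ∈ (S : Set (Matrix.SpecialLinearGroup (Fin d) ℤ)) ^ K, |(toR d w).trace| ≤ T) →
    ∃ P : (Matrix (Fin d) (Fin d) ℝ)ˣ, ∀ s ∈ S, ∀ i j, |cj P s i j| ≤ C * T ^ M := by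
  obtain ⟨N, hN⟩ : ∃ N, N = Fintype.card (Fin d × Fin d) := ⟨_, rfl⟩
  refine ⟨1 + kE d 1 + kE d 1, N + 1, N * N * N.factorial + 1, by
    have : (0 : ℝ) ≤ N * N * N.factorial := by positivity
    linarith, ?_⟩
  intro S hS T hT htr
  obtain ⟨w, hw, hdet⟩ := exists_lin_words hd hS
  set W : Matrix (Fin d × Fin d) (Fin d × Fin d) ℝ := Matrix.of fun j ij => toR d (w j) ij.1 ij.2 with hW
  let σ : Equiv.Perm (Fin d × Fin d) := Equiv.prodComm _ _
  let G : Matrix (Fin d × Fin d) (Fin d × Fin d) ℝ := Matrix.of fun j k => (toR d (w j * w k)).trace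
  have htrace : ∀ (A : Matrix (Fin d) (Fin d) ℝ) (k : Fin d × Fin d),
      (A * toR d (w k)).trace = ∑ ij : Fin d × Fin d, A ij.1 ij.2 * (W.submatrix id σ)ᵀ ij k := by
    intro A k
    rw [Fintype.sum_prod_type]
    simp [Matrix.trace, Matrix.mul_apply, W, σ]
  have hGW : G = W * (W.submatrix id σ)ᵀ := by
    ext j k
    simp only [G, Matrix.of_apply, map_mul, htrace]
    rfl
  have hG1 : 1 ≤ |G.det| := by
    have hne : G.det ≠ 0 := by
      rw [hGW, det_mul, det_transpose, Matrix.det_permute']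
      refine mul_ne_zero hdet (mul_ne_zero ?_ hdet)
      rcases Int.units_eq_one_or (Equiv.Perm.sign σ) with h | h <;> simp [h]
    have hdetz : G.det = (((Matrix.of fun j k => (w j * w k).1.trace :
        Matrix (Fin d × Fin d) (Fin d × Fin d) ℤ).det : ℤ) : ℝ) := by
      refine Eq.trans ?_ (RingHom.map_det (Int.castRingHom ℝ) _).symm
      congr 1
      ext j k
      simp only [G, Matrix.of_apply, trace_int]
      simp
    rw [hdetz] at hne ⊢
    rw [← Int.cast_abs]
    exact_mod_cast Int.one_le_abs (by exact_mod_cast hne)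
  have hGb : ∀ i j, |G i j| ≤ T := by
    intro i j
    apply htr
    apply pow_mono hS (show kE d 1 + kE d 1 ≤ _ by omega)
    rw [pow_add]
    exact Set.mul_mem_mul (hw _) (hw _)
  have hd0 : 0 < d := by omega
  let z0 : Fin d := ⟨0, hd0⟩
  obtain ⟨P, J, hPJ, hPb⟩ := exists_max_frame (fun j : Fin d × Fin d => fun i => toR d (w j) i z0) (by
    intro c hc
    by_contra! h0
    apply hc
    have : W *ᵥ (fun ij => if ij.2 = z0 then c ij.1 else 0) = 0 := by
      ext j
      have := h0 j
      simp only [dotProduct] at this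
      simp only [Matrix.mulVec, dotProduct, Pi.zero_apply]
      rw [Fintype.sum_prod_type]
      refine Eq.trans ?_ this
      apply Finset.sum_congr rfl
      intro i _
      simp [W]
    have h2 := Matrix.eq_zero_of_mulVec_eq_zero hdet this
    ext i
    simpa using congrFun h2 (i, z0))
  refine ⟨P, fun s hs i m => ?_⟩
  let X : Matrix (Fin d × Fin d) (Fin d × Fin d) ℝ := Matrix.of fun j ij => toR d (s * w j) ij.1 ij.2
  let Y : Matrix (Fin d × Fin d) (Fin d × Fin d) ℝ := Matrix.of fun j k => (toR d (s * w j * w k)).trace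
  have hY : Y = X * (W.submatrix id σ)ᵀ := by
    ext j k
    simp only [Y, Matrix.of_apply]
    rw [map_mul, htrace]
    rfl
  have hYb : ∀ i j, |Y i j| ≤ T := by
    intro i j
    apply htr
    rw [pow_add, pow_add, pow_one]
    exact Set.mul_mem_mul (Set.mul_mem_mul hs (hw _)) (hw _)
  have hcW : (X * W⁻¹) * W = X := by
    rw [Matrix.mul_assoc, Matrix.nonsing_inv_mul _ (isUnit_iff_ne_zero.2 hdet), Matrix.mul_one]
  set c := X * W⁻¹ with hc
  have hcb := solve_bound (c := c) (G := G) (Y := Y) hT (by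
    rw [hGW, hY, ← Matrix.mul_assoc, hcW]) hG1 hGb hYb
  rw [← hN] at hcb
  have hcol : ∀ a, (toR d s * P.1) a m = ∑ l, c (J m) l * toR d (w l) a z0 := by
    intro a
    have h1 : (toR d s * P.1) a m = toR d (s * w (J m)) a z0 := by
      rw [map_mul, Matrix.mul_apply, Matrix.mul_apply]
      simp only [hPJ]
    rw [h1]
    have := congrFun (congrFun hcW (J m)) (a, z0)
    rw [Matrix.mul_apply] at this
    exact this.symm
  have hent : cj P s i m = ∑ l, c (J m) l * ((↑P⁻¹ : Matrix (Fin d) (Fin d) ℝ) *ᵥ fun a => toR d (w l) a z0) i := by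
    rw [cj_apply, Matrix.mul_assoc, Matrix.mul_apply]
    simp only [hcol, Matrix.mulVec, dotProduct, Finset.mul_sum]
    rw [Finset.sum_comm]
    apply Finset.sum_congr rfl
    intro l _
    apply Finset.sum_congr rfl
    intro a _
    ring
  rw [hent]
  calc _ ≤ ∑ l, |c (J m) l * ((↑P⁻¹ : Matrix (Fin d) (Fin d) ℝ) *ᵥ fun a => toR d (w l) a z0) i| :=
        Finset.abs_sum_le_sum_abs _ _
    _ ≤ ∑ _l : Fin d × Fin d, ((N : ℝ) * T * (N.factorial * T ^ N)) * 1 := by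
        apply Finset.sum_le_sum
        intro l _
        rw [abs_mul]
        have h1 := hcb (J m) l
        have h2 := hPb l i
        gcongr
    _ = N * N * N.factorial * T ^ (N + 1) := by
        rw [Finset.sum_const, Finset.card_univ, ← hN, nsmul_eq_mul]; ring
    _ ≤ _ := by gcongr; linarith

end UT


namespace UT

lemma hom_det {σ ι : Type*} [Fintype ι] [DecidableEq ι] {n : ℕ} (M : Matrix ι ι (MvPolynomial σ ℝ))
    (h : ∀ i j, (M i j).IsHomogeneous n) : M.det.IsHomogeneous (Fintype.card ι * n) := by
  rw [Matrix.det_apply]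
  apply MvPolynomial.IsHomogeneous.sum
  intro τ _
  have h1 : (∏ i, M (τ i) i).IsHomogeneous (Fintype.card ι * n) := by
    have := MvPolynomial.IsHomogeneous.prod Finset.univ (fun i => M (τ i) i) (fun _ => n) (fun i _ => h _ _)
    simpa using this
  rcases Int.units_eq_one_or (Equiv.Perm.sign τ) with h | h
  · simpa [h] using h1
  · simpa [h] using h1.neg

/-- generic matrix -/
noncomputable abbrev XX (d : ℕ) : Matrix (Fin d) (Fin d) (MvPolynomial (Fin d × Fin d) ℝ) :=
  Matrix.of fun i j => MvPolynomial.X (i, j)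

/-- evaluation as a ring hom -/
noncomputable abbrev evH {d : ℕ} (A : Matrix (Fin d) (Fin d) ℝ) : MvPolynomial (Fin d × Fin d) ℝ →+* ℝ :=
  MvPolynomial.eval (fun ij => A ij.1 ij.2)

lemma evH_apply {d : ℕ} (A : Matrix (Fin d) (Fin d) ℝ) (p) : evH A p = ev A p := rfl

lemma evH_XX {d : ℕ} (A : Matrix (Fin d) (Fin d) ℝ) : (evH A).mapMatrix (XX d) = A := by
  ext i j
  simp

lemma ev_det {d : ℕ} (A : Matrix (Fin d) (Fin d) ℝ) : ev A (XX d).det = A.det := by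
  rw [← evH_apply, RingHom.map_det, evH_XX]

lemma big_trace (d R : ℕ) (hd : 2 ≤ d) : ∃ k : ℕ, ∀ S : Finset (Matrix.SpecialLinearGroup (Fin d) ℤ), Good S →
    ∃ f ∈ (S : Set (Matrix.SpecialLinearGroup (Fin d) ℤ)) ^ k, (R : ℝ) < |(toR d f).trace| := by
  let fac : ℤ → MvPolynomial (Fin d × Fin d) ℝ := fun j =>
    (XX d).trace ^ d - MvPolynomial.C ((j : ℝ) ^ d) * (XX d).det
  let p := ∏ j ∈ Finset.Icc (-(R : ℤ)) R, fac j
  have hfac : ∀ j A, ev A (fac j) = A.trace ^ d - (j : ℝ) ^ d * A.det := by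
    intro j A
    rw [← ev_det A, ← evH_apply, ← evH_apply]
    simp only [fac, map_sub, map_mul, map_pow, MvPolynomial.eval_C]
    congr 2
    simp [Matrix.trace]
  have hev : ∀ A, ev A p = ∏ j ∈ Finset.Icc (-(R : ℤ)) R, (A.trace ^ d - (j : ℝ) ^ d * A.det) := by
    intro A
    simp only [← hfac, ← evH_apply]
    exact map_prod _ _ _
  have hhom : p.IsHomogeneous (∑ j ∈ Finset.Icc (-(R : ℤ)) R, d) := by
    apply MvPolynomial.IsHomogeneous.prod
    intro j _
    apply MvPolynomial.IsHomogeneous.sub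
    · have h1 : (XX d).trace.IsHomogeneous 1 := by
        apply MvPolynomial.IsHomogeneous.sum
        intro i _
        exact MvPolynomial.isHomogeneous_X _ _
      simpa using h1.pow d
    · apply MvPolynomial.IsHomogeneous.C_mul
      have := hom_det (n := 1) (XX d) (fun i j => MvPolynomial.isHomogeneous_X _ _)
      simpa using this
  have hp0 : p ≠ 0 := by
    intro h0
    have h1 := hev (Matrix.single ⟨0, by omega⟩ ⟨0, by omega⟩ 1)
    have hdet : (Matrix.single (⟨0, by omega⟩ : Fin d) (⟨0, by omega⟩ : Fin d) (1 : ℝ)).det = 0 := by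
      apply Matrix.det_eq_zero_of_row_eq_zero (⟨1, by omega⟩ : Fin d)
      intro j
      rw [Matrix.single_apply]
      simp
    rw [h0, hdet] at h1
    simp [ev] at h1
  refine ⟨kE d (∑ j ∈ Finset.Icc (-(R : ℤ)) R, d), fun S hS => ?_⟩
  obtain ⟨f, hf, hne⟩ := escape hd hS hhom hp0
  refine ⟨f, hf, ?_⟩
  by_contra! hle
  apply hne
  rw [hev]
  rw [trace_int, ← Int.cast_abs] at hle
  have hle' : |f.1.trace| ≤ (R : ℤ) := by exact_mod_cast hle
  apply Finset.prod_eq_zero (i := f.1.trace)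
  · rw [Finset.mem_Icc]; exact abs_le.1 hle'
  · have : (toR d f).det = 1 := (Matrix.SpecialLinearGroup.map (n := Fin d) (Int.castRingHom ℝ) f).2
    rw [this, trace_int]; ring

lemma pow_entry_lower {d : ℕ} (hd : 0 < d) (A : Matrix (Fin d) (Fin d) ℝ) (n : ℕ) :
    ∃ i j, (|A.trace| / d) ^ n ≤ d * |(A ^ n) i j| := by
  let M : Matrix (Fin d) (Fin d) ℂ := A.map (algebraMap ℝ ℂ)
  have hMtr : M.trace = (A.trace : ℂ) := by
    simp [M, Matrix.trace]
  have hcard : M.charpoly.roots.card = d := by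
    have := IsAlgClosed.splits M.charpoly
    rw [(Polynomial.splits_iff_card_roots.1 this), Matrix.charpoly_natDegree_eq_dim, Fintype.card_fin]
  have : ∃ l ∈ M.charpoly.roots, |A.trace| / d ≤ ‖l‖ := by
    by_contra! hc
    have h1 : ‖M.trace‖ ≤ (M.charpoly.roots.map fun l => ‖l‖).sum := by
      rw [Matrix.trace_eq_sum_roots_charpoly]
      exact norm_multiset_sum_le _
    have hne : M.charpoly.roots ≠ 0 := by
      intro h0; rw [h0] at hcard; simp at hcard; omega
    have h2 : (M.charpoly.roots.map fun l => ‖l‖).sum < (M.charpoly.roots.map fun _ => |A.trace| / d).sum :=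
      Multiset.sum_lt_sum_of_nonempty hne hc
    rw [hMtr, Complex.norm_real, Real.norm_eq_abs] at h1
    rw [Multiset.map_const', Multiset.sum_replicate, hcard, nsmul_eq_mul, mul_div_cancel₀] at h2
    · linarith
    · positivity
  obtain ⟨l, hl, hle⟩ := this
  have hroot : Polynomial.IsRoot M.charpoly l := Polynomial.isRoot_of_mem_roots hl
  have hdet : (Matrix.scalar (Fin d) l - M).det = 0 := by
    rw [← Matrix.eval_charpoly]; exact hroot
  obtain ⟨v, hv0, hv⟩ := Matrix.exists_mulVec_eq_zero_iff.2 hdet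
  have hMv : M *ᵥ v = l • v := by
    rw [Matrix.sub_mulVec, sub_eq_zero] at hv
    rw [← hv]
    ext i
    simp [Matrix.mulVec_diagonal]
  have hMn : ∀ n : ℕ, (M ^ n) *ᵥ v = l ^ n • v := by
    intro n
    induction n with
    | zero => simp
    | succ n ih => rw [pow_succ, ← Matrix.mulVec_mulVec, hMv, Matrix.mulVec_smul, ih, smul_smul, pow_succ']
  have hMA : ∀ i j, (M ^ n) i j = ((A ^ n) i j : ℂ) := by
    intro i j
    have : M ^ n = (A ^ n).map (algebraMap ℝ ℂ) := by
      have := map_pow ((algebraMap ℝ ℂ).mapMatrix (m := Fin d)) A n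
      exact this.symm
    rw [this]; rfl
  have : Nonempty (Fin d) := ⟨⟨0, hd⟩⟩
  obtain ⟨i, hi⟩ := Finite.exists_max fun i => ‖v i‖
  obtain ⟨j, hj⟩ := Finite.exists_max fun j => |(A ^ n) i j|
  have hvi : 0 < ‖v i‖ := by
    by_contra! hc
    apply hv0
    ext k
    have := (hi k).trans hc
    simpa using norm_le_zero_iff.1 this
  refine ⟨i, j, ?_⟩
  have h3 : ‖l‖ ^ n * ‖v i‖ ≤ (d * |(A ^ n) i j|) * ‖v i‖ := by
    have h4 := congrFun (hMn n) i
    rw [Pi.smul_apply, smul_eq_mul] at h4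
    rw [← norm_pow, ← norm_mul, ← h4, Matrix.mulVec, dotProduct]
    calc _ ≤ ∑ k, ‖(M ^ n) i k * v k‖ := norm_sum_le _ _
      _ ≤ ∑ _k : Fin d, |(A ^ n) i j| * ‖v i‖ := by
          apply Finset.sum_le_sum
          intro k _
          rw [norm_mul, hMA, Complex.norm_real, Real.norm_eq_abs]
          exact mul_le_mul (hj k) (hi k) (norm_nonneg _) (abs_nonneg _)
      _ = _ := by simp [mul_assoc]
  have h5 := le_of_mul_le_mul_right h3 hvi
  refine le_trans ?_ h5
  gcongr

end UT


namespace UT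

/-- matrix coefficient of the compound representation -/
noncomputable def bil {d i : ℕ} (ξ p : PC d i → ℝ) (z : Matrix (Fin d) (Fin d) ℝ) : ℝ :=
  ξ ⬝ᵥ (cmp i z *ᵥ p)

/-- polynomial for `bil` -/
noncomputable def lpoly {d i : ℕ} (M : Matrix (Fin d) (Fin d) (MvPolynomial (Fin d × Fin d) ℝ))
    (ξ p : PC d i → ℝ) : MvPolynomial (Fin d × Fin d) ℝ :=
  ∑ J, ∑ I, MvPolynomial.C (ξ J * p I) * (M.submatrix (en J) (en I)).det

lemma ev_lpoly {d i : ℕ} (M : Matrix (Fin d) (Fin d) (MvPolynomial (Fin d × Fin d) ℝ))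
    (ξ p : PC d i → ℝ) (A : Matrix (Fin d) (Fin d) ℝ) :
    ev A (lpoly M ξ p) = bil ξ p ((evH A).mapMatrix M) := by
  rw [← evH_apply, lpoly, map_sum, bil, dotProduct]
  apply Finset.sum_congr rfl
  intro J _
  rw [map_sum, Matrix.mulVec, dotProduct, Finset.mul_sum]
  apply Finset.sum_congr rfl
  intro I _
  rw [map_mul, RingHom.map_det, cmp_apply, MvPolynomial.eval_C]
  have : (evH A).mapMatrix (M.submatrix (en J) (en I)) = ((evH A).mapMatrix M).submatrix (en J) (en I) := rfl
  rw [this]; ring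

lemma lpoly_hom {d i n : ℕ} (M : Matrix (Fin d) (Fin d) (MvPolynomial (Fin d × Fin d) ℝ))
    (h : ∀ i j, (M i j).IsHomogeneous n) (ξ p : PC d i → ℝ) : (lpoly M ξ p).IsHomogeneous (i * n) := by
  apply MvPolynomial.IsHomogeneous.sum
  intro J _
  apply MvPolynomial.IsHomogeneous.sum
  intro I _
  apply MvPolynomial.IsHomogeneous.C_mul
  have := hom_det (M.submatrix (en J) (en I)) (fun a b => h _ _)
  simpa using this

lemma adj_hom {d : ℕ} (hd : 2 ≤ d) (a b : Fin d) : ((XX d).adjugate a b).IsHomogeneous (d - 1) := by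
  obtain ⟨n, rfl⟩ : ∃ n, d = n + 1 := ⟨d - 1, by omega⟩
  rw [Matrix.adjugate_fin_succ_eq_det_submatrix]
  have h1 := hom_det (n := 1) ((XX (n + 1)).submatrix b.succAbove a.succAbove)
    (fun i j => MvPolynomial.isHomogeneous_X _ _)
  rw [Fintype.card_fin, mul_one] at h1
  rcases neg_one_pow_eq_or (MvPolynomial (Fin (n + 1) × Fin (n + 1)) ℝ) (b + a : ℕ) with h | h
  · rw [h, one_mul]; exact h1
  · rw [h, neg_one_mul]; exact h1.neg

/-- the two matrices -/
noncomputable def MX (d : ℕ) (b : Bool) : Matrix (Fin d) (Fin d) (MvPolynomial (Fin d × Fin d) ℝ) :=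
  bif b then XX d else (XX d).adjugate

/-- `z` or its adjugate -/
noncomputable def za {d : ℕ} (z : Matrix (Fin d) (Fin d) ℝ) (b : Bool) : Matrix (Fin d) (Fin d) ℝ :=
  bif b then z else z.adjugate

lemma evH_MX {d : ℕ} (A : Matrix (Fin d) (Fin d) ℝ) (b : Bool) : (evH A).mapMatrix (MX d b) = za A b := by
  cases b
  · change (evH A).mapMatrix ((XX d).adjugate) = A.adjugate
    rw [RingHom.map_adjugate, evH_XX]
  · exact evH_XX A

lemma MX_hom {d : ℕ} (hd : 2 ≤ d) (b : Bool) (i j : Fin d) :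
    (MX d b i j).IsHomogeneous (bif b then 1 else d - 1) := by
  cases b
  · exact adj_hom hd i j
  · exact MvPolynomial.isHomogeneous_X _ _

lemma exists_ev_ne {d : ℕ} {p : MvPolynomial (Fin d × Fin d) ℝ} (hp : p ≠ 0) : ∃ A, ev A p ≠ 0 := by
  by_contra! h
  apply hp
  apply MvPolynomial.funext
  intro x
  have := h (Matrix.of fun i j => x (i, j))
  simpa [ev] using this

lemma lpoly_ne {d i : ℕ} {ξ p : PC d i → ℝ} (hξ : ξ ≠ 0) (hp : p ≠ 0) (b : Bool) :
    lpoly (MX d b) ξ p ≠ 0 := by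
  have htrue : lpoly (MX d true) ξ p ≠ 0 := by
    obtain ⟨J, hJ⟩ := Function.ne_iff.1 hξ
    obtain ⟨I, hI⟩ := Function.ne_iff.1 hp
    obtain ⟨z, hz⟩ := cmp_single J I
    intro h0
    have h1 := ev_lpoly (MX d true) ξ p z
    rw [evH_MX, h0] at h1
    simp only [za, cond_true, bil, hz] at h1
    rw [Matrix.single_mulVec_eq, dotProduct_smul, dotProduct_single] at h1
    simp [ev] at h1
    rcases h1 with h | h
    · exact hI h
    · exact hJ h
  cases b
  · obtain ⟨z, hz⟩ := exists_ev_ne (mul_ne_zero htrue (Matrix.det_mvPolynomialX_ne_zero (Fin d) ℝ))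
    rw [← evH_apply, map_mul, evH_apply, evH_apply, ev_lpoly, evH_MX] at hz
    have hz1 := left_ne_zero_of_mul hz
    have hz2 := right_ne_zero_of_mul hz
    have hz2 : z.det ≠ 0 := by
      rw [← ev_det]; exact hz2
    intro h0
    have h1 := ev_lpoly (MX d false) ξ p z⁻¹
    rw [evH_MX, h0] at h1
    simp only [za, cond_false, cond_true] at h1 hz1
    have hadj : z⁻¹.adjugate = (z.det)⁻¹ • z := by
      have h3 : z⁻¹.adjugate = z⁻¹.det • z⁻¹⁻¹ := by
        rw [Matrix.inv_def z⁻¹, smul_smul, Ring.mul_inverse_cancel, one_smul]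
        rw [Matrix.det_nonsing_inv]
        simpa using hz2
      rw [h3, Matrix.nonsing_inv_nonsing_inv _ (isUnit_iff_ne_zero.2 hz2), Matrix.det_nonsing_inv, Ring.inverse_eq_inv']
    have hcmp : cmp i z⁻¹.adjugate = ((z.det)⁻¹ ^ i) • cmp i z := by
      ext J I
      rw [hadj, cmp_apply, Matrix.smul_apply, cmp_apply]
      have h5 : ((z.det)⁻¹ • z).submatrix (en J) (en I) = (z.det)⁻¹ • z.submatrix (en J) (en I) := rfl
      rw [h5, Matrix.det_smul]
      simp
    rw [bil, hcmp, Matrix.smul_mulVec, dotProduct_smul] at h1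
    simp [ev] at h1
    rcases h1 with h | h
    · exact hz2 h.1
    · exact hz1 h
  · exact htrue

/-- the product of the eight matrix coefficients -/
noncomputable def FF {d i : ℕ} (ξ p : Bool → PC d i → ℝ) (z : Matrix (Fin d) (Fin d) ℝ) : ℝ :=
  ∏ s : Bool × Bool × Bool, bil (ξ s.1) (p s.2.1) (za z s.2.2)

/-- its polynomial -/
noncomputable def FP {d i : ℕ} (ξ p : Bool → PC d i → ℝ) : MvPolynomial (Fin d × Fin d) ℝ :=
  ∏ s : Bool × Bool × Bool, lpoly (MX d s.2.2) (ξ s.1) (p s.2.1)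

lemma ev_FP {d i : ℕ} (ξ p : Bool → PC d i → ℝ) (z : Matrix (Fin d) (Fin d) ℝ) :
    ev z (FP ξ p) = FF ξ p z := by
  rw [← evH_apply, FP, map_prod, FF]
  apply Finset.prod_congr rfl
  intro s _
  rw [evH_apply, ev_lpoly, evH_MX]

lemma FP_hom {d i : ℕ} (hd : 2 ≤ d) (ξ p : Bool → PC d i → ℝ) :
    (FP ξ p).IsHomogeneous (∑ s : Bool × Bool × Bool, i * (bif s.2.2 then 1 else d - 1)) := by
  apply MvPolynomial.IsHomogeneous.prod
  intro s _
  exact lpoly_hom _ (MX_hom hd _) _ _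

lemma FP_ne {d i : ℕ} {ξ p : Bool → PC d i → ℝ} (hξ : ∀ b, ξ b ≠ 0) (hp : ∀ b, p b ≠ 0) : FP ξ p ≠ 0 := by
  rw [FP, Finset.prod_ne_zero_iff]
  intro s _
  exact lpoly_ne (hξ _) (hp _) _

lemma compact_lemma (d i : ℕ) : ∃ c R : ℝ, 0 < c ∧ 1 ≤ R ∧
    ∀ ξ p : Bool → PC d i → ℝ, (∀ b, ‖ξ b‖ = 1) → (∀ b, ‖p b‖ = 1) →
    ∃ z : Matrix (Fin d) (Fin d) ℝ, (∀ a b, |z a b| ≤ R) ∧ c ≤ |FF ξ p z| := by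
  let V := PC d i → ℝ
  let K0 : Set (Bool → V) := Set.univ.pi fun _ => Metric.sphere (0 : V) 1
  have hK0 : IsCompact K0 := isCompact_univ_pi fun _ => isCompact_sphere _ _
  have hmemK : ∀ x : Bool → V, x ∈ K0 ↔ ∀ b, ‖x b‖ = 1 := by
    intro x; simp [K0]
  have hK : IsCompact (K0 ×ˢ K0) := hK0.prod hK0
  have key := hK.induction_on (p := fun s => ∃ c R : ℝ, 0 < c ∧ 1 ≤ R ∧ ∀ q ∈ s,
    ∃ z : Matrix (Fin d) (Fin d) ℝ, (∀ a b, |z a b| ≤ R) ∧ c ≤ |FF q.1 q.2 z|) ?_ ?_ ?_ ?_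
  · obtain ⟨c, R, hc, hR, h⟩ := key
    refine ⟨c, R, hc, hR, fun ξ p hξ hp => h (ξ, p) ⟨(hmemK _).2 hξ, (hmemK _).2 hp⟩⟩
  · exact ⟨1, 1, one_pos, le_rfl, fun q hq => absurd hq (Set.notMem_empty _)⟩
  · rintro s t hst ⟨c, R, hc, hR, h⟩
    exact ⟨c, R, hc, hR, fun q hq => h q (hst hq)⟩
  · rintro s t ⟨c, R, hc, hR, h⟩ ⟨c', R', hc', hR', h'⟩
    refine ⟨min c c', max R R', lt_min hc hc', le_max_of_le_left hR, ?_⟩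
    rintro q (hq | hq)
    · obtain ⟨z, hz, hz'⟩ := h q hq
      exact ⟨z, fun a b => (hz a b).trans (le_max_left _ _), (min_le_left _ _).trans hz'⟩
    · obtain ⟨z, hz, hz'⟩ := h' q hq
      exact ⟨z, fun a b => (hz a b).trans (le_max_right _ _), (min_le_right _ _).trans hz'⟩
  · rintro ⟨ξ, p⟩ ⟨hξ, hp⟩
    have hne : FP ξ p ≠ 0 := FP_ne
      (fun b h => by have := (hmemK ξ).1 hξ b; rw [h, norm_zero] at this; exact zero_ne_one this)
      (fun b h => by have := (hmemK p).1 hp b; rw [h, norm_zero] at this; exact zero_ne_one this)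
    obtain ⟨z, hz⟩ := exists_ev_ne hne
    rw [ev_FP] at hz
    have hcont : Continuous fun q : (Bool → V) × (Bool → V) => |FF q.1 q.2 z| := by
      unfold FF bil dotProduct Matrix.mulVec dotProduct
      fun_prop
    refine ⟨{q | |FF ξ p z| / 2 < |FF q.1 q.2 z|}, ?_, |FF ξ p z| / 2, 1 + ∑ a, ∑ b, |z a b|,
      half_pos (abs_pos.2 hz), ?_, ?_⟩
    · apply mem_nhdsWithin_of_mem_nhds
      apply (isOpen_lt continuous_const hcont).mem_nhds
      exact half_lt_self (abs_pos.2 hz)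
    · have : 0 ≤ ∑ a, ∑ b, |z a b| := Finset.sum_nonneg fun a _ => Finset.sum_nonneg fun b _ => abs_nonneg _
      linarith
    · intro q hq
      refine ⟨z, fun a b => ?_, le_of_lt hq⟩
      have h1 : |z a b| ≤ ∑ b, |z a b| :=
        Finset.single_le_sum (f := fun b => |z a b|) (fun b _ => abs_nonneg _) (Finset.mem_univ b)
      have h2 : ∑ b, |z a b| ≤ ∑ a, ∑ b, |z a b| :=
        Finset.single_le_sum (f := fun a => ∑ b, |z a b|) (fun a _ => Finset.sum_nonneg fun b _ => abs_nonneg _) (Finset.mem_univ a)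
      linarith

lemma prod_lower {σ : Type*} [Fintype σ] [DecidableEq σ] {x : σ → ℝ} {U c : ℝ} (hU : 1 ≤ U)
    (hx : ∀ s, |x s| ≤ U) (hc : c ≤ |∏ s, x s|) (s : σ) : c ≤ U ^ Fintype.card σ * |x s| := by
  rw [← Finset.mul_prod_erase Finset.univ x (Finset.mem_univ s), abs_mul, Finset.abs_prod] at hc
  have h1 : ∏ i ∈ Finset.univ.erase s, |x i| ≤ U ^ (Finset.univ.erase s).card := by
    rw [← Finset.prod_const]
    exact Finset.prod_le_prod (fun _ _ => abs_nonneg _) (fun _ _ => hx _)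
  have h2 : U ^ (Finset.univ.erase s).card ≤ U ^ Fintype.card σ :=
    pow_le_pow_right₀ hU (Finset.card_le_univ _)
  calc c ≤ _ := hc
    _ ≤ |x s| * U ^ Fintype.card σ := by gcongr; linarith
    _ = _ := mul_comm _ _

lemma cj_inv {d : ℕ} (P : (Matrix (Fin d) (Fin d) ℝ)ˣ) (f) : cj P f⁻¹ = (cj P f).adjugate := by
  have h1 : cj P f⁻¹ * cj P f = 1 := by rw [← map_mul, inv_mul_cancel, map_one]
  have h2 : cj P f * (cj P f).adjugate = 1 := by rw [Matrix.mul_adjugate, det_cj, one_smul]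
  exact left_inv_eq_right_inv h1 h2

lemma abs_bil_le {d i : ℕ} {ξ p : PC d i → ℝ} {z : Matrix (Fin d) (Fin d) ℝ} {B : ℝ} (hB : 1 ≤ B)
    (hz : ∀ a b, |z a b| ≤ B) :
    |bil ξ p z| ≤ (Fintype.card (PC d i)) ^ 2 * (i.factorial * B ^ i) * ‖ξ‖ * ‖p‖ := by
  have h2 := norm_mulVec_le (cmp i z) p (by positivity) (fun J I => abs_cmp_le hz J I)
  calc _ ≤ _ := abs_dot_le _ _
    _ ≤ Fintype.card (PC d i) * ‖ξ‖ * (Fintype.card (PC d i) * (i.factorial * B ^ i) * ‖p‖) := by gcongr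
    _ = _ := by ring

lemma bil_smul {d i : ℕ} (ξ p : PC d i → ℝ) (a b : ℝ) (z : Matrix (Fin d) (Fin d) ℝ) :
    bil (a • ξ) (b • p) z = a * b * bil ξ p z := by
  rw [bil, Matrix.mulVec_smul, smul_dotProduct, dotProduct_smul, bil, smul_eq_mul, smul_eq_mul]; ring

/-- simultaneous quantitative transversality -/
lemma es1 (d i : ℕ) (hd : 2 ≤ d) : ∃ k M : ℕ, ∃ C : ℝ, 1 ≤ C ∧
    ∀ S : Finset (Matrix.SpecialLinearGroup (Fin d) ℤ), Good S →
    ∀ P : (Matrix (Fin d) (Fin d) ℝ)ˣ, ∀ B : ℝ, 1 ≤ B →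
    (∀ f ∈ (S : Set (Matrix.SpecialLinearGroup (Fin d) ℤ)) ^ k, ∀ i j, |cj P f i j| ≤ B) →
    ∀ ξ p : Bool → PC d i → ℝ, (∀ b, 0 < ‖ξ b‖) → (∀ b, 0 < ‖p b‖) →
    ∃ f ∈ (S : Set (Matrix.SpecialLinearGroup (Fin d) ℤ)) ^ k, ∀ b b',
      ‖ξ b‖ * ‖p b'‖ ≤ C * B ^ M * |bil (ξ b) (p b') (cj P f)| ∧
      ‖ξ b‖ * ‖p b'‖ ≤ C * B ^ M * |bil (ξ b) (p b') (cj P f⁻¹)| := by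
  obtain ⟨D, hD⟩ : ∃ D, D = ∑ s : Bool × Bool × Bool, i * (bif s.2.2 then 1 else d - 1) := ⟨_, rfl⟩
  obtain ⟨C₁, hC₁, M, hq⟩ := qescape d D hd
  obtain ⟨c, R, hc, hR, hz⟩ := compact_lemma d i
  obtain ⟨N, hN⟩ : ∃ N, N = Fintype.card (PC d i) := ⟨_, rfl⟩
  obtain ⟨A, hA⟩ : ∃ A : ℝ, A = (N : ℝ) ^ 2 * i.factorial + 1 := ⟨_, rfl⟩
  have hA1 : 1 ≤ A := by
    have : (0 : ℝ) ≤ (N : ℝ) ^ 2 * i.factorial := by positivity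
    linarith
  refine ⟨kE d D, M + i * 8, c⁻¹ * C₁ * R ^ D * A ^ 8 + 1, ?_, ?_⟩
  · have : 0 ≤ c⁻¹ * C₁ * R ^ D * A ^ 8 := by positivity
    linarith
  intro S hS P B hB hbd ξ p hξ hp
  set ξ' : Bool → PC d i → ℝ := fun b => ‖ξ b‖⁻¹ • ξ b with hξ'
  set p' : Bool → PC d i → ℝ := fun b => ‖p b‖⁻¹ • p b with hp'
  have hξ1 : ∀ b, ‖ξ' b‖ = 1 := fun b => by
    rw [hξ', norm_smul, norm_inv, norm_norm, inv_mul_cancel₀ (hξ b).ne']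
  have hp1 : ∀ b, ‖p' b‖ = 1 := fun b => by
    rw [hp', norm_smul, norm_inv, norm_norm, inv_mul_cancel₀ (hp b).ne']
  obtain ⟨z, hzR, hzc⟩ := hz ξ' p' hξ1 hp1
  obtain ⟨f, hf, hfe⟩ := hq S hS P B hB hbd (FP ξ' p') (hD ▸ FP_hom hd ξ' p') z R hR hzR
  rw [ev_FP, ev_FP] at hfe
  refine ⟨f, hf, ?_⟩
  have hza : ∀ b, za (cj P f) b = cj P (bif b then f else f⁻¹) := by
    intro b; cases b
    · exact (cj_inv P f).symm
    · rfl
  have hU : ∀ s : Bool × Bool × Bool, |bil (ξ' s.1) (p' s.2.1) (za (cj P f) s.2.2)| ≤ A * B ^ i := by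
    intro s
    rw [hza]
    have h1 : ∀ a b, |cj P (bif s.2.2 then f else f⁻¹) a b| ≤ B := by
      cases s.2.2
      · exact hbd _ (inv_mem_pow hS hf)
      · exact hbd _ hf
    refine (abs_bil_le hB h1).trans ?_
    rw [hξ1, hp1, ← hN, hA]
    have : 0 ≤ B ^ i := by positivity
    nlinarith
  have hU1 : 1 ≤ A * B ^ i := by
    have := one_le_pow₀ (n := i) hB
    nlinarith
  have hlow := fun s => prod_lower hU1 hU (le_refl _) s
  have hmain : ∀ s : Bool × Bool × Bool, ‖ξ s.1‖ * ‖p s.2.1‖ ≤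
      (c⁻¹ * C₁ * R ^ D * A ^ 8 + 1) * B ^ (M + i * 8) * |bil (ξ s.1) (p s.2.1) (za (cj P f) s.2.2)| := by
    intro s
    have h1 := hlow s
    have h2 : c ≤ C₁ * R ^ D * B ^ M * ((A * B ^ i) ^ 8 * |bil (ξ' s.1) (p' s.2.1) (za (cj P f) s.2.2)|) := by
      refine hzc.trans (hfe.trans ?_)
      refine mul_le_mul_of_nonneg_left ?_ (by positivity)
      exact h1
    have h3 : |bil (ξ' s.1) (p' s.2.1) (za (cj P f) s.2.2)| =
        (‖ξ s.1‖ * ‖p s.2.1‖)⁻¹ * |bil (ξ s.1) (p s.2.1) (za (cj P f) s.2.2)| := by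
      rw [hξ', hp', bil_smul, abs_mul, mul_inv, abs_of_pos (mul_pos (inv_pos.2 (hξ _)) (inv_pos.2 (hp _)))]
    rw [h3] at h2
    set y := |bil (ξ s.1) (p s.2.1) (za (cj P f) s.2.2)|
    have hy : 0 ≤ y := abs_nonneg _
    have hn : 0 < ‖ξ s.1‖ * ‖p s.2.1‖ := mul_pos (hξ _) (hp _)
    set n := ‖ξ s.1‖ * ‖p s.2.1‖
    calc n = c⁻¹ * c * n := by field_simp
      _ ≤ c⁻¹ * (C₁ * R ^ D * B ^ M * ((A * B ^ i) ^ 8 * (n⁻¹ * y))) * n := by gcongr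
      _ = (c⁻¹ * C₁ * R ^ D * A ^ 8) * B ^ (M + i * 8) * y := by
          rw [pow_add, pow_mul]; field_simp
      _ ≤ _ := by gcongr; linarith
  intro b b'
  have e1 := hmain (b, b', true)
  have e2 := hmain (b, b', false)
  simp only [hza] at e1 e2
  exact ⟨e1, e2⟩

end UT


namespace UT

/-- `M` is close to the rank one matrix `p ξ` -/
def Ct {ι : Type*} [Fintype ι] (M : Matrix ι ι ℝ) (p ξ : ι → ℝ) (ε Λ : ℝ) : Prop :=
  0 < ‖p‖ ∧ (∀ i j, |(M - vecMulVec p ξ) i j| ≤ ε * ‖p‖ * ‖ξ‖) ∧ Λ ≤ ‖p‖ * ‖ξ‖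

lemma Ct.mul {ι : Type*} [Fintype ι] [DecidableEq ι] {M L L' Q Q' : Matrix ι ι ℝ} {p ξ : ι → ℝ}
    {ε Λ β κ : ℝ} (h : Ct M p ξ ε Λ) (hβ : 0 ≤ β) (hκ : κ = Fintype.card ι * β) (hκ0 : 0 < κ) (hε : 0 ≤ ε)
    (hL : ∀ i j, |L i j| ≤ β) (hL' : ∀ i j, |L' i j| ≤ β) (hQ : ∀ i j, |Q i j| ≤ β)
    (hQ' : ∀ i j, |Q' i j| ≤ β) (hLL : L' * L = 1) (hQQ : Q * Q' = 1) :
    Ct (L * M * Q) (L *ᵥ p) (ξ ᵥ* Q) (ε * κ ^ 4) (Λ / κ ^ 2) := by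
  obtain ⟨h1, h2, h3⟩ := h
  have hp : ‖p‖ ≤ κ * ‖L *ᵥ p‖ := by
    have := norm_mulVec_le L' (L *ᵥ p) hβ hL'
    rwa [Matrix.mulVec_mulVec, hLL, Matrix.one_mulVec, ← hκ] at this
  have hξ : ‖ξ‖ ≤ κ * ‖ξ ᵥ* Q‖ := by
    have := norm_vecMul_le Q' (ξ ᵥ* Q) hβ hQ'
    rwa [Matrix.vecMul_vecMul, hQQ, Matrix.vecMul_one, ← hκ] at this
  refine ⟨?_, ?_, ?_⟩
  · by_contra! hc
    nlinarith
  · intro i j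
    have e1 : L * M * Q - vecMulVec (L *ᵥ p) (ξ ᵥ* Q) = L * (M - vecMulVec p ξ) * Q := by
      rw [Matrix.mul_sub, Matrix.sub_mul, Matrix.mul_vecMulVec, Matrix.vecMulVec_mul]
    rw [e1]
    have e2 := abs_mul_le L (M - vecMulVec p ξ) hβ hL h2
    rw [← hκ] at e2
    have e3 := abs_mul_le (L * (M - vecMulVec p ξ)) Q (by positivity) e2 hQ i j
    refine e3.trans ?_
    calc Fintype.card ι * (κ * (ε * ‖p‖ * ‖ξ‖)) * β = (Fintype.card ι * β) * κ * ε * (‖p‖ * ‖ξ‖) := by ring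
      _ = κ * κ * ε * (‖p‖ * ‖ξ‖) := by rw [← hκ]
      _ ≤ κ * κ * ε * ((κ * ‖L *ᵥ p‖) * (κ * ‖ξ ᵥ* Q‖)) := by gcongr
      _ = _ := by ring
  · rw [div_le_iff₀ (by positivity)]
    calc Λ ≤ ‖p‖ * ‖ξ‖ := h3
      _ ≤ (κ * ‖L *ᵥ p‖) * (κ * ‖ξ ᵥ* Q‖) := by gcongr
      _ = _ := by ring

lemma Ct.base {ι : Type*} [Fintype ι] [DecidableEq ι] {α : ι → ℝ} (hα : ∀ I, 0 < α I) {I₀ J₀ : ι}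
    {G β δ : ℝ} (hG : 0 < G) (hgap : ∀ I, I ≠ I₀ → G * α I ≤ α I₀) (hmin : ∀ J, α J₀ ≤ α J)
    (hGJ : G * α J₀ ≤ α I₀) {H : Matrix ι ι ℝ} (hH : ∀ i j, |H i j| ≤ β) (hδ : 0 < δ)
    (hHδ : δ ≤ |H I₀ J₀|) :
    Ct (Matrix.diagonal α * H * Matrix.diagonal (fun I => (α I)⁻¹)) (Pi.single I₀ 1)
      (fun J => α I₀ * H I₀ J * (α J)⁻¹) (β / (G * δ)) (G * δ) := by
  have hn : ‖(Pi.single I₀ 1 : ι → ℝ)‖ = 1 := by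
    rw [Pi.norm_single]; simp
  have hβ : 0 ≤ β := (abs_nonneg _).trans (hH I₀ I₀)
  have hr : α I₀ * δ * (α J₀)⁻¹ ≤ ‖fun J => α I₀ * H I₀ J * (α J)⁻¹‖ := by
    refine le_trans ?_ (norm_le_pi_norm (fun J => α I₀ * H I₀ J * (α J)⁻¹) J₀)
    have h1 := hα I₀
    have h2 := hα J₀
    rw [Real.norm_eq_abs, abs_mul, abs_mul, abs_of_pos h1, abs_of_pos (inv_pos.2 h2)]
    gcongr
  refine ⟨by rw [hn]; exact one_pos, ?_, ?_⟩
  · intro I J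
    rw [hn, mul_one, Matrix.sub_apply, Matrix.mul_diagonal, Matrix.diagonal_mul, vecMulVec_apply]
    by_cases hI : I = I₀
    · subst hI
      rw [Pi.single_eq_same, one_mul, sub_self, abs_zero]
      positivity
    · rw [Pi.single_eq_of_ne hI, zero_mul, sub_zero]
      have h1 := hα I
      have h2 := hα J
      have h3 := hα J₀
      have h4 := hα I₀
      rw [abs_mul, abs_mul, abs_of_pos h1, abs_of_pos (inv_pos.2 h2)]
      have h5 : α I ≤ α I₀ / G := by rw [le_div_iff₀ hG]; linarith [hgap I hI]
      calc α I * |H I J| * (α J)⁻¹ ≤ (α I₀ / G) * β * (α J₀)⁻¹ := by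
            gcongr
            · exact hH I J
            · exact hmin J
        _ = β / (G * δ) * (α I₀ * δ * (α J₀)⁻¹) := by field_simp
        _ ≤ _ := by gcongr
  · rw [hn, one_mul]
    refine le_trans ?_ hr
    have h3 := hα J₀
    rw [← div_eq_mul_inv, le_div_iff₀ h3]
    nlinarith

lemma Ct.congr {ι : Type*} [Fintype ι] {M M' : Matrix ι ι ℝ} {p ξ : ι → ℝ} {ε Λ : ℝ} (h : Ct M p ξ ε Λ)
    (hM : M = M') : Ct M' p ξ ε Λ := hM ▸ h

lemma Ct.weaken {ι : Type*} [Fintype ι] {M : Matrix ι ι ℝ} {p ξ : ι → ℝ} {ε Λ ε' Λ' : ℝ} (h : Ct M p ξ ε Λ)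
    (h1 : ε ≤ ε') (h2 : Λ' ≤ Λ) : Ct M p ξ ε' Λ' := by
  refine ⟨h.1, fun i j => (h.2.1 i j).trans ?_, h2.trans h.2.2⟩
  gcongr

lemma Ct.pos {ι : Type*} [Fintype ι] {M : Matrix ι ι ℝ} {p ξ : ι → ℝ} {ε Λ : ℝ} (h : Ct M p ξ ε Λ)
    (hΛ : 0 < Λ) : 0 < ‖ξ‖ := by
  have h1 := h.2.2
  have h2 := h.1
  by_contra! hc
  nlinarith

/-- the ping-pong pair -/
lemma construct {Γ ι : Type*} [Group Γ] [Fintype ι] [DecidableEq ι] (R : Γ →* Matrix ι ι ℝ) (F : Set Γ)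
    {N β κ Q G : ℝ} (hN : N = Fintype.card ι) (hN1 : 1 ≤ N) (hβ : 1 ≤ β) (hκ : κ = Fintype.card ι * β) (hQ : 1 ≤ Q)
    (hF : ∀ f ∈ F, ∀ i j, |R f i j| ≤ β) (hF' : ∀ f ∈ F, ∀ i j, |R f⁻¹ i j| ≤ β)
    (hES : ∀ ξ p : Bool → ι → ℝ, (∀ b, 0 < ‖ξ b‖) → (∀ b, 0 < ‖p b‖) → ∃ f ∈ F, ∀ b b',
      ‖ξ b‖ * ‖p b'‖ ≤ Q * |ξ b ⬝ᵥ (R f *ᵥ p b')| ∧ ‖ξ b‖ * ‖p b'‖ ≤ Q * |ξ b ⬝ᵥ (R f⁻¹ *ᵥ p b')|)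
    (g : Γ) {K₁ K₂ K₁' K₂' : Matrix ι ι ℝ} {α : ι → ℝ} (hα : ∀ I, 0 < α I)
    (hg : R g = K₁ * Matrix.diagonal α * K₂) (hg' : R g⁻¹ = K₂' * Matrix.diagonal (fun I => (α I)⁻¹) * K₁')
    (h11 : K₁ * K₁' = 1) (h22 : K₂ * K₂' = 1)
    (hK₁ : ∀ i j, |K₁ i j| ≤ β) (hK₁' : ∀ i j, |K₁' i j| ≤ β)
    (hK₂ : ∀ i j, |K₂ i j| ≤ β) (hK₂' : ∀ i j, |K₂' i j| ≤ β)
    {I₀ I₁ : ι} (hI : I₁ ≠ I₀) (hgap : ∀ I, I ≠ I₀ → G * α I ≤ α I₀) (hG : 8 * Q ^ 3 * κ ^ 25 ≤ G) :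
    ∃ h ∈ F, ∃ u ∈ F, ∃ y ∈ F,
      Function.Injective (FreeGroup.lift ![g * h * g⁻¹ * u, y * (g * h * g⁻¹ * u) * y⁻¹]) := by
  have hκ1 : 1 ≤ κ := by rw [hκ, ← hN]; nlinarith
  have hκ0 : 0 < κ := by linarith
  have hQ0 : 0 < Q := by linarith
  have hG0 : 0 < G := lt_of_lt_of_le (by positivity) hG
  have hNκ : N ≤ κ := by rw [hκ, ← hN]; nlinarith
  have hβκ : β ≤ κ := by rw [hκ, ← hN]; nlinarith
  have hβ0 : 0 ≤ β := by linarith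
  have hone : ∀ i j, |(1 : Matrix ι ι ℝ) i j| ≤ β := by
    intro i j
    rw [Matrix.one_apply]; split_ifs <;> simp <;> linarith
  have h11' : K₁' * K₁ = 1 := mul_eq_one_comm.1 h11
  have hinv : ∀ f : Γ, R f * R f⁻¹ = 1 := fun f => by rw [← map_mul, mul_inv_cancel, map_one]
  have hinv' : ∀ f : Γ, R f⁻¹ * R f = 1 := fun f => by rw [← map_mul, inv_mul_cancel, map_one]
  have : Nonempty ι := ⟨I₀⟩
  obtain ⟨J₀, hJ₀⟩ := Finite.exists_min α
  have hGJ : G * α J₀ ≤ α I₀ := le_trans (by have := hJ₀ I₁; gcongr) (hgap I₁ hI)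
  have hn : ∀ I : ι, ‖(Pi.single I 1 : ι → ℝ)‖ = 1 := fun I => by rw [Pi.norm_single]; simp
  -- choice of h
  obtain ⟨ξ₀, hξ₀⟩ : ∃ ξ₀, ξ₀ = (Pi.single I₀ 1 : ι → ℝ) ᵥ* K₂ := ⟨_, rfl⟩
  obtain ⟨p₀, hp₀⟩ : ∃ p₀, p₀ = K₂' *ᵥ (Pi.single J₀ 1 : ι → ℝ) := ⟨_, rfl⟩
  have hξ₀n : 1 ≤ κ * ‖ξ₀‖ := by
    have := norm_vecMul_le K₂' ξ₀ hβ0 hK₂'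
    rwa [hξ₀, Matrix.vecMul_vecMul, h22, Matrix.vecMul_one, ← hκ, ← hξ₀, hn] at this
  have hp₀n : 1 ≤ κ * ‖p₀‖ := by
    have := norm_mulVec_le K₂ p₀ hβ0 hK₂
    rwa [hp₀, Matrix.mulVec_mulVec, h22, Matrix.one_mulVec, ← hκ, ← hp₀, hn] at this
  have hξ₀0 : 0 < ‖ξ₀‖ := by
    by_contra! hc; nlinarith
  have hp₀0 : 0 < ‖p₀‖ := by
    by_contra! hc; nlinarith
  obtain ⟨h, hh, hhe⟩ := hES (fun _ => ξ₀) (fun _ => p₀) (fun _ => hξ₀0) (fun _ => hp₀0)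
  have hhe := hhe true true
  have hδ₀ : (0 : ℝ) < (Q * κ ^ 2)⁻¹ := by positivity
  -- base contraction
  have hbase : ∀ m : Γ, (∀ i j, |R m i j| ≤ β) → ‖ξ₀‖ * ‖p₀‖ ≤ Q * |ξ₀ ⬝ᵥ (R m *ᵥ p₀)| →
      ∃ ξ, Ct (R (g * m * g⁻¹)) (K₁ *ᵥ Pi.single I₀ 1) ξ (Q * κ ^ 9 / G) (G / (Q * κ ^ 4)) := by
    intro m hm hmξ
    let H := K₂ * R m * K₂'
    have hH : ∀ i j, |H i j| ≤ κ ^ 3 := by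
      intro i j
      have e1 := abs_mul_le K₂ (R m) hβ0 hK₂ hm
      rw [← hκ] at e1
      have e2 := abs_mul_le (K₂ * R m) K₂' (by positivity) e1 hK₂' i j
      refine e2.trans ?_
      calc Fintype.card ι * (κ * β) * β = (Fintype.card ι * β) * κ * β := by ring
        _ = κ * κ * β := by rw [← hκ]
        _ ≤ κ * κ * κ := by gcongr
        _ = _ := by ring
    have hHe : ξ₀ ⬝ᵥ (R m *ᵥ p₀) = H I₀ J₀ := by
      rw [hξ₀, hp₀, Matrix.mulVec_mulVec, ← Matrix.dotProduct_mulVec, Matrix.mulVec_mulVec, ← Matrix.mul_assoc]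
      simp [H]
    rw [hHe] at hmξ
    have hHδ : (Q * κ ^ 2)⁻¹ ≤ |H I₀ J₀| := by
      rw [inv_le_iff_one_le_mul₀ (by positivity)]
      calc 1 ≤ (κ * ‖ξ₀‖) * (κ * ‖p₀‖) := one_le_mul_of_one_le_of_one_le hξ₀n hp₀n
        _ = κ ^ 2 * (‖ξ₀‖ * ‖p₀‖) := by ring
        _ ≤ κ ^ 2 * (Q * |H I₀ J₀|) := by gcongr
        _ = _ := by ring
    have hct := Ct.base hα hG0 hgap hJ₀ hGJ hH hδ₀ hHδ
    have hct2 := hct.mul hβ0 hκ hκ0 (by positivity) hK₁ hK₁' hK₁' hK₁ h11' h11'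
    refine ⟨_, (hct2.congr ?_).weaken (le_of_eq ?_) (le_of_eq ?_)⟩
    · rw [map_mul, map_mul, hg, hg']
      simp only [H, Matrix.mul_assoc]
    · field_simp
    · field_simp
  obtain ⟨ξ, hξ⟩ := hbase h (hF h hh) hhe.1
  obtain ⟨ξ', hξ'⟩ := hbase h⁻¹ (hF' h hh) hhe.2
  have hx' : (g * h * g⁻¹)⁻¹ = g * h⁻¹ * g⁻¹ := by group
  rw [← hx'] at hξ'
  obtain ⟨x, hx⟩ : ∃ x, x = g * h * g⁻¹ := ⟨_, rfl⟩
  rw [← hx] at hξ hξ'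
  clear hx' hbase
  obtain ⟨p, hp⟩ : ∃ p, p = K₁ *ᵥ (Pi.single I₀ 1 : ι → ℝ) := ⟨_, rfl⟩
  rw [← hp] at hξ hξ'
  have hΛ1 : 0 < G / (Q * κ ^ 4) := by positivity
  have hp0 := hξ.1
  have hξn := hξ.pos hΛ1
  have hξn' := hξ'.pos hΛ1
  -- choice of u
  obtain ⟨u, hu, hue⟩ := hES (fun b => bif b then ξ else ξ') (fun _ => p)
    (fun b => by cases b; exacts [hξn', hξn]) (fun _ => hp0)
  have hu1 : ‖ξ‖ * ‖p‖ ≤ Q * |ξ ⬝ᵥ (R u *ᵥ p)| := (hue true true).1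
  have hu2 : ‖ξ'‖ * ‖p‖ ≤ Q * |ξ' ⬝ᵥ (R u⁻¹ *ᵥ p)| := (hue false true).2
  have hca := hξ.mul hβ0 hκ hκ0 (by positivity) hone hone (hF u hu) (hF' u hu) (mul_one 1) (hinv u)
  have hca' := hξ'.mul hβ0 hκ hκ0 (by positivity) (hF' u hu) (hF u hu) hone hone (hinv u) (mul_one 1)
  rw [one_mul, Matrix.one_mulVec, ← map_mul] at hca
  rw [mul_one, Matrix.vecMul_one, ← map_mul, ← _root_.mul_inv_rev] at hca'
  obtain ⟨a, ha⟩ : ∃ a, a = x * u := ⟨_, rfl⟩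
  rw [← ha] at hca hca'
  let pa : Bool → ι → ℝ := fun b => bif b then p else R u⁻¹ *ᵥ p
  let ξa : Bool → ι → ℝ := fun b => bif b then ξ ᵥ* R u else ξ'
  have hcab : ∀ b : Bool, Ct (R (bif b then a else a⁻¹)) (pa b) (ξa b) (Q * κ ^ 13 / G) (G / (Q * κ ^ 6)) := by
    intro b
    cases b
    · exact hca'.weaken (le_of_eq (by field_simp)) (le_of_eq (by field_simp))
    · exact hca.weaken (le_of_eq (by field_simp)) (le_of_eq (by field_simp))
  have hΛ2 : 0 < G / (Q * κ ^ 6) := by positivity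
  have hpa0 : ∀ b, 0 < ‖pa b‖ := fun b => (hcab b).1
  have hξa0 : ∀ b, 0 < ‖ξa b‖ := fun b => (hcab b).pos hΛ2
  have haa : ∀ b, ‖ξa b‖ * ‖pa b‖ ≤ Q * κ * |ξa b ⬝ᵥ pa b| := by
    intro b
    cases b
    · have e1 := norm_mulVec_le (R u⁻¹) p hβ0 (hF' u hu)
      rw [← hκ] at e1
      change ‖ξ'‖ * ‖R u⁻¹ *ᵥ p‖ ≤ Q * κ * |ξ' ⬝ᵥ (R u⁻¹ *ᵥ p)|
      calc _ ≤ ‖ξ'‖ * (κ * ‖p‖) := by gcongr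
        _ = κ * (‖ξ'‖ * ‖p‖) := by ring
        _ ≤ κ * (Q * |ξ' ⬝ᵥ (R u⁻¹ *ᵥ p)|) := by gcongr
        _ = _ := by ring
    · have e1 := norm_vecMul_le (R u) ξ hβ0 (hF u hu)
      rw [← hκ] at e1
      change ‖ξ ᵥ* R u‖ * ‖p‖ ≤ Q * κ * |(ξ ᵥ* R u) ⬝ᵥ p|
      rw [← Matrix.dotProduct_mulVec]
      calc _ ≤ (κ * ‖ξ‖) * ‖p‖ := by gcongr
        _ = κ * (‖ξ‖ * ‖p‖) := by ring
        _ ≤ κ * (Q * |ξ ⬝ᵥ (R u *ᵥ p)|) := by gcongr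
        _ = _ := by ring
  obtain ⟨y, hy, hye⟩ := hES ξa pa hξa0 hpa0
  refine ⟨h, hh, u, hu, y, hy, ?_⟩
  rw [← hx, ← ha]
  -- the data of b
  let pb : Bool → ι → ℝ := fun b => R y *ᵥ pa b
  let ξb : Bool → ι → ℝ := fun b => ξa b ᵥ* R y⁻¹
  have hcbb : ∀ b : Bool, Ct (R (bif b then (y * a * y⁻¹) else (y * a * y⁻¹)⁻¹)) (pb b) (ξb b)
      (Q * κ ^ 17 / G) (G / (Q * κ ^ 8)) := by
    intro b
    have := (hcab b).mul hβ0 hκ hκ0 (by positivity) (hF y hy) (hF' y hy) (hF' y hy) (hF y hy) (hinv' y) (hinv' y)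
    refine (this.congr ?_).weaken (le_of_eq (by field_simp)) (le_of_eq (by field_simp))
    cases b
    · rw [← map_mul, ← map_mul]
      congr 1
      simp only [cond_false]
      group
    · rw [← map_mul, ← map_mul]
      rfl
  have hpbn : ∀ b, ‖pb b‖ ≤ κ * ‖pa b‖ := fun b => by
    rw [hκ]; exact norm_mulVec_le (R y) (pa b) hβ0 (hF y hy)
  have hξbn : ∀ b, ‖ξb b‖ ≤ κ * ‖ξa b‖ := fun b => by
    rw [hκ]; exact norm_vecMul_le (R y⁻¹) (ξa b) hβ0 (hF' y hy)
  have hbb : ∀ b, ξb b ⬝ᵥ pb b = ξa b ⬝ᵥ pa b := by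
    intro b
    change (ξa b ᵥ* R y⁻¹) ⬝ᵥ (R y *ᵥ pa b) = _
    rw [← Matrix.dotProduct_mulVec, Matrix.mulVec_mulVec, hinv', Matrix.one_mulVec]
  have hδ : 0 < (Q * κ ^ 3)⁻¹ := by positivity
  have e01 : κ ^ 13 ≤ κ ^ 17 := pow_le_pow_right₀ hκ1 (by norm_num)
  have e02 : κ ^ 6 ≤ κ ^ 8 := pow_le_pow_right₀ hκ1 (by norm_num)
  have e03 : κ ≤ κ ^ 3 := le_self_pow₀ hκ1 (by norm_num)
  have e04 : 1 ≤ κ ^ 3 := one_le_pow₀ hκ1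
  have hcab' : ∀ b : Bool, Ct (R (bif b then a else a⁻¹)) (pa b) (ξa b) (Q * κ ^ 17 / G) (G / (Q * κ ^ 8)) := by
    intro b
    refine (hcab b).weaken ?_ ?_
    · gcongr
    · gcongr
  let pp : Fin 2 × Bool → ι → ℝ := fun s => ![pa s.2, pb s.2] s.1
  let ξξ : Fin 2 × Bool → ι → ℝ := fun s => ![ξa s.2, ξb s.2] s.1
  have hall : ∀ s : Fin 2 × Bool, Ct (R (bif s.2 then ![a, y * a * y⁻¹] s.1 else (![a, y * a * y⁻¹] s.1)⁻¹))
      (pp s) (ξξ s) (Q * κ ^ 17 / G) (G / (Q * κ ^ 8)) := by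
    rintro ⟨s, b⟩
    fin_cases s
    · exact hcab' b
    · exact hcbb b
  refine schottky R ![a, y * a * y⁻¹] pp ξξ (δ := (Q * κ ^ 3)⁻¹) (ε := Q * κ ^ 17 / G)
    (Λ := G / (Q * κ ^ 8)) hN hN1 (fun s => (hall s).1) (fun s => (hall s).2.1) hδ ?_ (by positivity) ?_
    (fun s => (hall s).2.2) ?_ ?_
  · apply inv_le_one_of_one_le₀
    exact one_le_mul_of_one_le_of_one_le hQ e04
  · have : 8 * N ^ 2 * (Q * κ ^ 17) * (Q * κ ^ 3) ^ 2 ≤ G := by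
      calc _ ≤ 8 * κ ^ 2 * (Q * κ ^ 17) * (Q * κ ^ 3) ^ 2 := by gcongr
        _ = 8 * Q ^ 3 * κ ^ 25 := by ring
        _ ≤ G := hG
    rw [inv_pow, ← mul_div_assoc, div_le_iff₀ hG0, ← div_eq_inv_mul, le_div_iff₀ (by positivity)]
    exact this
  · have : 8 * (Q * κ ^ 3 * (Q * κ ^ 8)) ≤ G := by
      calc _ = 8 * Q ^ 2 * κ ^ 11 := by ring
        _ ≤ 8 * Q ^ 3 * κ ^ 25 := by
          have e1 : Q ^ 2 ≤ Q ^ 3 := pow_le_pow_right₀ hQ (by norm_num)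
          have e2 : κ ^ 11 ≤ κ ^ 25 := pow_le_pow_right₀ hκ1 (by norm_num)
          gcongr
        _ ≤ G := hG
    rw [← div_eq_inv_mul, div_div, le_div_iff₀ (by positivity)]
    linarith
  · have hfin : ∀ {v w z : ℝ}, v ≤ Q * κ ^ 3 * z → (Q * κ ^ 3)⁻¹ * v ≤ z := by
      intro v w z hv
      rw [← div_eq_inv_mul, div_le_iff₀ (by positivity)]
      linarith
    rintro ⟨s, b⟩ ⟨t, b'⟩ hst
    rw [mul_assoc]
    apply hfin (w := 0)
    fin_cases s <;> fin_cases t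
    · have hb : b = b' := hst rfl
      subst hb
      change ‖ξa b‖ * ‖pa b‖ ≤ Q * κ ^ 3 * |ξa b ⬝ᵥ pa b|
      refine (haa b).trans ?_
      gcongr
    · change ‖ξa b‖ * ‖pb b'‖ ≤ Q * κ ^ 3 * |ξa b ⬝ᵥ (R y *ᵥ pa b')|
      calc _ ≤ ‖ξa b‖ * (κ * ‖pa b'‖) := by gcongr; exact hpbn b'
        _ = κ * (‖ξa b‖ * ‖pa b'‖) := by ring
        _ ≤ κ * (Q * |ξa b ⬝ᵥ (R y *ᵥ pa b')|) := mul_le_mul_of_nonneg_left (hye b b').1 hκ0.le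
        _ ≤ κ ^ 3 * (Q * |ξa b ⬝ᵥ (R y *ᵥ pa b')|) := by gcongr
        _ = _ := by ring
    · change ‖ξb b‖ * ‖pa b'‖ ≤ Q * κ ^ 3 * |(ξa b ᵥ* R y⁻¹) ⬝ᵥ pa b'|
      rw [← Matrix.dotProduct_mulVec]
      calc _ ≤ (κ * ‖ξa b‖) * ‖pa b'‖ := by gcongr; exact hξbn b
        _ = κ * (‖ξa b‖ * ‖pa b'‖) := by ring
        _ ≤ κ * (Q * |ξa b ⬝ᵥ (R y⁻¹ *ᵥ pa b')|) := mul_le_mul_of_nonneg_left (hye b b').2 hκ0.le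
        _ ≤ κ ^ 3 * (Q * |ξa b ⬝ᵥ (R y⁻¹ *ᵥ pa b')|) := by gcongr
        _ = _ := by ring
    · have hb : b = b' := hst rfl
      subst hb
      change ‖ξb b‖ * ‖pb b‖ ≤ Q * κ ^ 3 * |ξb b ⬝ᵥ pb b|
      rw [hbb]
      calc _ ≤ (κ * ‖ξa b‖) * (κ * ‖pa b‖) := by gcongr; exacts [hξbn b, hpbn b]
        _ = κ ^ 2 * (‖ξa b‖ * ‖pa b‖) := by ring
        _ ≤ κ ^ 2 * (Q * κ * |ξa b ⬝ᵥ pa b|) := mul_le_mul_of_nonneg_left (haa b) (by positivity)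
        _ = _ := by ring

end UT

namespace UT

/-- singular value decomposition of a real matrix of determinant one -/
lemma svd {d : ℕ} (g : Matrix (Fin d) (Fin d) ℝ) (hg : g.det = 1) :
    ∃ (U V : Matrix (Fin d) (Fin d) ℝ) (a : Fin d → ℝ), U * Uᵀ = 1 ∧ V * Vᵀ = 1 ∧ (∀ i, 0 < a i) ∧
      (∏ i, a i = 1) ∧ g = U * diagonal a * V ∧ (∀ i j, |U i j| ≤ 1) ∧ (∀ i j, |V i j| ≤ 1) := by
  have hu : IsUnit g := by
    rw [Matrix.isUnit_iff_isUnit_det, hg]; exact isUnit_one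
  have hpd : (gᴴ * g).PosDef :=
    Matrix.PosDef.conjTranspose_mul_self g (Matrix.mulVec_injective_of_isUnit hu)
  have hH := hpd.isHermitian
  have hpos := hpd.eigenvalues_pos
  obtain ⟨q, hq⟩ : ∃ q : Matrix (Fin d) (Fin d) ℝ, q = hH.eigenvectorUnitary := ⟨_, rfl⟩
  obtain ⟨μ, hμ⟩ : ∃ μ : Fin d → ℝ, μ = hH.eigenvalues := ⟨_, rfl⟩
  have hqu : q ∈ Matrix.unitaryGroup (Fin d) ℝ := hq ▸ hH.eigenvectorUnitary.2
  have hq1 : qᵀ * q = 1 := by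
    have := (Matrix.mem_unitaryGroup_iff' (A := q)).1 hqu
    simpa [Matrix.star_eq_conjTranspose] using this
  have hq2 : q * qᵀ = 1 := mul_eq_one_comm.1 hq1
  have hsp : gᵀ * g = q * diagonal μ * qᵀ := by
    have := hH.spectral_theorem
    rw [Unitary.conjStarAlgAut_apply] at this
    rw [hq, hμ]
    simpa [Matrix.star_eq_conjTranspose] using this
  rw [← hμ] at hpos
  have ha : ∀ i, 0 < √(μ i) := fun i => Real.sqrt_pos.2 (hpos i)
  have hsp2 : qᵀ * (gᵀ * g) * q = diagonal μ := by
    rw [hsp]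
    calc _ = (qᵀ * q) * diagonal μ * (qᵀ * q) := by simp only [Matrix.mul_assoc]
      _ = _ := by rw [hq1]; simp
  have hUU : (g * q * diagonal fun i => (√(μ i))⁻¹)ᵀ * (g * q * diagonal fun i => (√(μ i))⁻¹) = 1 := by
    rw [Matrix.transpose_mul, Matrix.transpose_mul, Matrix.diagonal_transpose]
    calc _ = (diagonal fun i => (√(μ i))⁻¹) * (qᵀ * (gᵀ * g) * q) * (diagonal fun i => (√(μ i))⁻¹) := by
          simp only [Matrix.mul_assoc]
      _ = 1 := by
        rw [hsp2, Matrix.diagonal_mul_diagonal, Matrix.diagonal_mul_diagonal, ← Matrix.diagonal_one]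
        congr 1
        funext i
        have := ha i
        field_simp
        rw [Real.sq_sqrt (hpos i).le]
  have hbd : ∀ W : Matrix (Fin d) (Fin d) ℝ, Wᵀ * W = 1 → ∀ i j, |W i j| ≤ 1 := by
    intro W hW i j
    have : W ∈ Matrix.unitaryGroup (Fin d) ℝ := by
      rw [Matrix.mem_unitaryGroup_iff', Matrix.star_eq_conjTranspose]
      simpa using hW
    simpa using entry_norm_bound_of_unitary this i j
  refine ⟨g * q * diagonal fun i => (√(μ i))⁻¹, qᵀ, fun i => √(μ i), mul_eq_one_comm.1 hUU, by simpa using hq1,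
    ha, ?_, ?_, hbd _ hUU, hbd _ (by simpa using hq2)⟩
  · have h1 : ∏ i, μ i = 1 := by
      have := congrArg Matrix.det hsp2
      simp only [Matrix.det_mul, Matrix.det_transpose, hg, Matrix.det_diagonal] at this
      have h2 := congrArg Matrix.det hq1
      simp only [Matrix.det_mul, Matrix.det_transpose, Matrix.det_one] at h2
      linarith
    have h2 : (∏ i, √(μ i)) ^ 2 = 1 := by
      rw [← Finset.prod_pow, ← h1]
      exact Finset.prod_congr rfl fun i _ => Real.sq_sqrt (hpos i).le
    have h3 : 0 < ∏ i, √(μ i) := Finset.prod_pos fun i _ => ha i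
    nlinarith
  · have : (diagonal fun i => (√(μ i))⁻¹) * (diagonal fun i => √(μ i)) = 1 := by
      rw [Matrix.diagonal_mul_diagonal, ← Matrix.diagonal_one]
      congr 1
      funext i
      exact inv_mul_cancel₀ (ha i).ne'
    rw [Matrix.mul_assoc (g * q), this, mul_one, Matrix.mul_assoc, hq2, mul_one]

/-- existence of a gap -/
lemma gap {d : ℕ} {a : Fin d → ℝ} (ha : ∀ i, 0 < a i) (hprod : ∏ i, a i = 1) {G : ℝ} (hG : 1 < G)
    {j₀ : Fin d} (hj₀ : G ^ d ≤ a j₀) :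
    ∃ i, 0 < i ∧ i < d ∧ ∃ I₀ I₁ : PC d i, I₁ ≠ I₀ ∧
      ∀ I : PC d i, I ≠ I₀ → G * ∏ x ∈ I.1, a x ≤ ∏ x ∈ I₀.1, a x := by
  have hG0 : 0 < G := by linarith
  obtain ⟨t, ht⟩ : ∃ t : Fin d, ∀ j, a j ≤ G ^ (t : ℕ) ∨ G ^ ((t : ℕ) + 1) ≤ a j := by
    by_contra! hc
    choose j hj1 hj2 using hc
    have hinj : Function.Injective j := by
      have key : ∀ s t : Fin d, s < t → j s ≠ j t := by
        intro s t hst he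
        have h1 := hj2 s
        rw [he] at h1
        have h2 := hj1 t
        have h3 : G ^ ((s : ℕ) + 1) ≤ G ^ (t : ℕ) := pow_le_pow_right₀ hG.le hst
        linarith
      intro s t he
      rcases lt_trichotomy s t with h | h | h
      · exact absurd he (key s t h)
      · exact h
      · exact absurd he.symm (key t s h)
    obtain ⟨t, ht⟩ := (Finite.injective_iff_surjective.1 hinj) j₀
    have h1 := hj2 t
    rw [ht] at h1
    have h3 : G ^ ((t : ℕ) + 1) ≤ G ^ d := pow_le_pow_right₀ hG.le t.2
    linarith
  classical
  let A : Finset (Fin d) := Finset.univ.filter fun j => G ^ ((t : ℕ) + 1) ≤ a j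
  have hjA : j₀ ∈ A := by
    simp only [A, Finset.mem_filter, Finset.mem_univ, true_and]
    exact (pow_le_pow_right₀ hG.le t.2).trans hj₀
  obtain ⟨j₁, hj₁⟩ : ∃ j, a j ≤ 1 := by
    by_contra! hc
    have : (1 : ℝ) < ∏ i, a i := by
      have := Finset.prod_lt_prod_of_nonempty (s := Finset.univ) (f := fun _ : Fin d => (1 : ℝ)) (g := a)
        (fun _ _ => one_pos) (fun i _ => hc i) ⟨j₀, Finset.mem_univ _⟩
      simpa using this
    linarith
  have hjA1 : j₁ ∉ A := by
    simp only [A, Finset.mem_filter, Finset.mem_univ, true_and, not_le]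
    have : 1 < G ^ ((t : ℕ) + 1) := one_lt_pow₀ hG (by omega)
    linarith
  have hne : j₁ ≠ j₀ := fun h => hjA1 (h ▸ hjA)
  refine ⟨A.card, Finset.card_pos.2 ⟨j₀, hjA⟩, ?_, ⟨A, rfl⟩, ⟨insert j₁ (A.erase j₀), ?_⟩, ?_, ?_⟩
  · have := Finset.card_lt_univ_of_notMem hjA1
    simpa using this
  · change (insert j₁ (A.erase j₀)).card = _
    rw [Finset.card_insert_of_notMem (fun h => hjA1 (Finset.mem_of_mem_erase h)), Finset.card_erase_of_mem hjA]
    have := Finset.card_pos.2 ⟨j₀, hjA⟩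
    omega
  · intro h
    have := congrArg Subtype.val h
    simp only at this
    exact hjA1 (this ▸ Finset.mem_insert_self _ _)
  · rintro ⟨I, hI⟩ hIA
    change I.card = A.card at hI
    have hIA : I ≠ A := fun h => hIA (by subst h; rfl)
    change G * ∏ x ∈ I, a x ≤ ∏ x ∈ A, a x
    have hc : (I \ A).card = (A \ I).card := by
      have h1 := Finset.card_sdiff_add_card_inter I A
      have h2 := Finset.card_sdiff_add_card_inter A I
      rw [Finset.inter_comm] at h2
      omega
    have hpos : (A \ I).card ≠ 0 := by
      intro h0
      rw [Finset.card_eq_zero, Finset.sdiff_eq_empty_iff_subset] at h0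
      exact hIA (Finset.eq_of_subset_of_card_le h0 hI.le).symm
    rw [← Finset.prod_inter_mul_prod_sdiff I A, ← Finset.prod_inter_mul_prod_sdiff A I, Finset.inter_comm A I,
      mul_comm (∏ x ∈ I ∩ A, a x), mul_comm (∏ x ∈ I ∩ A, a x), ← mul_assoc]
    have h1 : ∏ x ∈ I \ A, a x ≤ (G ^ (t : ℕ)) ^ (A \ I).card := by
      rw [← hc, ← Finset.prod_const]
      apply Finset.prod_le_prod (fun i _ => (ha i).le)
      intro i hi
      rcases ht i with h | h
      · exact h
      · simp [A] at hi
        linarith [hi.2]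
    have h2 : (G ^ ((t : ℕ) + 1)) ^ (A \ I).card ≤ ∏ x ∈ A \ I, a x := by
      rw [← Finset.prod_const]
      apply Finset.prod_le_prod (fun i _ => by positivity)
      intro i hi
      simp [A] at hi
      exact hi.1
    have h3 : 0 ≤ ∏ x ∈ I ∩ A, a x := Finset.prod_nonneg fun i _ => (ha i).le
    refine mul_le_mul_of_nonneg_right ?_ h3
    calc G * ∏ x ∈ I \ A, a x ≤ G ^ (A \ I).card * (G ^ (t : ℕ)) ^ (A \ I).card := by
          have h4 : G ≤ G ^ (A \ I).card := le_self_pow₀ hG.le hpos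
          have h5 : 0 ≤ ∏ x ∈ I \ A, a x := Finset.prod_nonneg fun i _ => (ha i).le
          exact mul_le_mul h4 h1 h5 (by positivity)
      _ = (G ^ ((t : ℕ) + 1)) ^ (A \ I).card := by rw [← mul_pow, pow_succ']
      _ ≤ _ := h2

end UT

namespace UT

lemma es (d : ℕ) (hd : 2 ≤ d) : ∃ k M : ℕ, ∃ C : ℝ, 1 ≤ C ∧
    ∀ S : Finset (Matrix.SpecialLinearGroup (Fin d) ℤ), Good S →
    ∀ P : (Matrix (Fin d) (Fin d) ℝ)ˣ, ∀ B : ℝ, 1 ≤ B →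
    (∀ f ∈ (S : Set (Matrix.SpecialLinearGroup (Fin d) ℤ)) ^ k, ∀ i j, |cj P f i j| ≤ B) →
    ∀ i < d, ∀ ξ p : Bool → PC d i → ℝ, (∀ b, 0 < ‖ξ b‖) → (∀ b, 0 < ‖p b‖) →
    ∃ f ∈ (S : Set (Matrix.SpecialLinearGroup (Fin d) ℤ)) ^ k, ∀ b b',
      ‖ξ b‖ * ‖p b'‖ ≤ C * B ^ M * |bil (ξ b) (p b') (cj P f)| ∧
      ‖ξ b‖ * ‖p b'‖ ≤ C * B ^ M * |bil (ξ b) (p b') (cj P f⁻¹)| := by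
  choose k M C hC h using fun i => es1 d i hd
  have hC0 : ∀ i, 0 ≤ C i := fun i => by linarith [hC i]
  refine ⟨∑ i ∈ Finset.range d, k i, ∑ i ∈ Finset.range d, M i, ∑ i ∈ Finset.range d, C i, ?_, ?_⟩
  · exact (hC 0).trans (Finset.single_le_sum (fun i _ => hC0 i) (Finset.mem_range.2 (by omega)))
  intro S hS P B hB hf i hi ξ p hξ hp
  have hi' : i ∈ Finset.range d := Finset.mem_range.2 hi
  have hk : k i ≤ ∑ i ∈ Finset.range d, k i := Finset.single_le_sum (fun _ _ => Nat.zero_le _) hi'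
  have hM : M i ≤ ∑ i ∈ Finset.range d, M i := Finset.single_le_sum (fun _ _ => Nat.zero_le _) hi'
  have hCi : C i ≤ ∑ i ∈ Finset.range d, C i := Finset.single_le_sum (fun i _ => hC0 i) hi'
  obtain ⟨f, hfk, hff⟩ := h i S hS P B hB (fun f h => hf f (pow_mono hS hk h)) ξ p hξ hp
  have hCM : C i * B ^ M i ≤ (∑ i ∈ Finset.range d, C i) * B ^ (∑ i ∈ Finset.range d, M i) := by
    have := pow_le_pow_right₀ hB hM
    have := hC0 i
    exact mul_le_mul hCi (by assumption) (by positivity) (this.trans hCi)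
  refine ⟨f, pow_mono hS hk hfk, fun b b' => ⟨(hff b b').1.trans ?_, (hff b b').2.trans ?_⟩⟩
  · exact mul_le_mul_of_nonneg_right hCM (abs_nonneg _)
  · exact mul_le_mul_of_nonneg_right hCM (abs_nonneg _)

lemma word_bound {d : ℕ} {S : Finset (Matrix.SpecialLinearGroup (Fin d) ℤ)}
    {P : (Matrix (Fin d) (Fin d) ℝ)ˣ} {X : ℝ} (hX : 1 ≤ X) (hd : 1 ≤ d)
    (h : ∀ s ∈ S, ∀ i j, |cj P s i j| ≤ X) (k : ℕ) :
    ∀ f ∈ (S : Set (Matrix.SpecialLinearGroup (Fin d) ℤ)) ^ k, ∀ i j, |cj P f i j| ≤ (d * X) ^ k := by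
  induction k with
  | zero =>
    intro f hf i j
    simp only [pow_zero, Set.mem_one] at hf
    rw [hf, map_one, Matrix.one_apply]
    split_ifs <;> simp
  | succ k ih =>
    intro f hf i j
    rw [pow_succ, Set.mem_mul] at hf
    obtain ⟨f₁, hf₁, s, hs, rfl⟩ := hf
    rw [map_mul]
    have := abs_mul_le (cj P f₁) (cj P s) (by positivity) (ih f₁ hf₁) (h s hs) i j
    simp only [Fintype.card_fin] at this
    refine this.trans (le_of_eq ?_)
    ring

lemma card_PC_le (d i : ℕ) : Fintype.card (PC d i) ≤ 2 ^ d := by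
  have := Fintype.card_le_of_injective (fun I : PC d i => I.1) Subtype.val_injective
  simpa using this

lemma final (d : ℕ) (hd : 2 ≤ d) : ∃ m : ℕ, 1 ≤ m ∧
    ∀ S : Finset (Matrix.SpecialLinearGroup (Fin d) ℤ), Good S →
      ∃ a ∈ (S : Set (Matrix.SpecialLinearGroup (Fin d) ℤ)) ^ m,
      ∃ b ∈ (S : Set (Matrix.SpecialLinearGroup (Fin d) ℤ)) ^ m,
      Function.Injective (FreeGroup.lift ![a, b] :
                FreeGroup (Fin 2) →* Matrix.SpecialLinearGroup (Fin d) ℤ) := by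
  obtain ⟨KN, MN, CN, hCN, hnorm⟩ := norm_lemma d hd
  obtain ⟨k, ME, CE, hCE, hes⟩ := es d hd
  obtain ⟨kT, hbig⟩ := big_trace d (d ^ 2 + d.factorial + 2 ^ d + 8 + ⌈CN⌉₊ + ⌈CE⌉₊) hd
  obtain ⟨K, hK⟩ : ∃ K, K = max KN kT := ⟨_, rfl⟩
  obtain ⟨b, hb⟩ : ∃ b, b = (MN + 2) * k := ⟨_, rfl⟩
  obtain ⟨e, he⟩ : ∃ e, e = 1 + 3 * (1 + b * ME) + 25 * (2 + b * d) := ⟨_, rfl⟩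
  obtain ⟨n, hn⟩ : ∃ n, n = 2 * (e * d + 1) := ⟨_, rfl⟩
  refine ⟨2 * (K * n) + 4 * k + 1, by omega, ?_⟩
  intro S hS
  -- the element of maximal trace
  have hfin : ((S : Set (Matrix.SpecialLinearGroup (Fin d) ℤ)) ^ K).Finite := by
    classical
    rw [← Finset.coe_pow]
    exact Finset.finite_toSet _
  have hne : ((S : Set (Matrix.SpecialLinearGroup (Fin d) ℤ)) ^ K).Nonempty := ⟨1, Set.one_mem_pow hS.one⟩
  obtain ⟨γ, hγ, hmax⟩ := hfin.exists_maximalFor (fun w => |(toR d w).trace|) _ hne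
  have hmax' : ∀ w ∈ (S : Set (Matrix.SpecialLinearGroup (Fin d) ℤ)) ^ K,
      |(toR d w).trace| ≤ |(toR d γ).trace| := by
    intro w hw
    by_contra! hc
    exact absurd (hmax hw hc.le) (not_le.2 hc)
  obtain ⟨T, hT⟩ : ∃ T, T = |(toR d γ).trace| := ⟨_, rfl⟩
  rw [← hT] at hmax'
  have hTbig : ((d ^ 2 + d.factorial + 2 ^ d + 8 + ⌈CN⌉₊ + ⌈CE⌉₊ : ℕ) : ℝ) ≤ T := by
    obtain ⟨f, hf, hf2⟩ := hbig S hS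
    exact hf2.le.trans (hmax' f (pow_mono hS (hK ▸ le_max_right _ _) hf))
  push_cast at hTbig
  have z1 : (0 : ℝ) ≤ (d : ℝ) ^ 2 := by positivity
  have z2 : (0 : ℝ) ≤ (d.factorial : ℝ) := by positivity
  have z3 : (0 : ℝ) ≤ (2 : ℝ) ^ d := by positivity
  have z4 : CN ≤ ⌈CN⌉₊ := Nat.le_ceil _
  have z5 : CE ≤ ⌈CE⌉₊ := Nat.le_ceil _
  have hTd : (d : ℝ) ^ 2 ≤ T := by linarith
  have hTf : (d.factorial : ℝ) ≤ T := by linarith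
  have hT2 : (2 : ℝ) ^ d ≤ T := by linarith
  have hT8 : 8 ≤ T := by linarith
  have hTN : CN ≤ T := by linarith
  have hTE : CE ≤ T := by linarith
  have hT1 : 1 ≤ T := by linarith
  have hT0 : 0 < T := by linarith
  have hd1 : (1 : ℝ) ≤ d := by exact_mod_cast (by omega : 1 ≤ d)
  clear hTbig z1 z2 z3 z4 z5
  -- the norm
  obtain ⟨P, hP⟩ := hnorm S hS T hT1 (fun w hw => hmax' w (pow_mono hS (hK ▸ le_max_left _ _) hw))
  have hB : ∀ f ∈ (S : Set (Matrix.SpecialLinearGroup (Fin d) ℤ)) ^ k, ∀ i j, |cj P f i j| ≤ T ^ b := by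
    intro f hf i j
    have h1 : 1 ≤ CN * T ^ MN := one_le_mul_of_one_le_of_one_le hCN (one_le_pow₀ hT1)
    refine (word_bound h1 (by omega) hP k f hf i j).trans ?_
    rw [hb, pow_mul]
    have hdT : (d : ℝ) ≤ T := (le_self_pow₀ hd1 two_ne_zero).trans hTd
    refine pow_le_pow_left₀ (by positivity) ?_ k
    calc (d : ℝ) * (CN * T ^ MN) ≤ T * (T * T ^ MN) := by gcongr
      _ = _ := by ring
  have hB1 : 1 ≤ T ^ b := one_le_pow₀ hT1
  have hES := hes S hS P (T ^ b) hB1 hB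
  -- singular values
  obtain ⟨U, V, a, hU, hV, ha, hprod, hsvd, hU1, hV1⟩ := svd (cj P (γ ^ n)) (det_cj P _)
  have hGd : ∃ j₀, (T ^ e) ^ d ≤ a j₀ := by
    obtain ⟨i, j, hij⟩ := pow_entry_lower (by omega : 0 < d) (cj P γ) n
    rw [trace_cj, ← hT, ← map_pow, hsvd] at hij
    by_contra! hc
    have h1 : |(U * diagonal a * V) i j| < d * (T ^ e) ^ d := by
      rw [Matrix.mul_apply]
      calc _ ≤ ∑ x, |(U * diagonal a) i x * V x j| := Finset.abs_sum_le_sum_abs _ _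
        _ ≤ ∑ x, a x := by
          apply Finset.sum_le_sum
          intro x _
          rw [Matrix.mul_diagonal, abs_mul, abs_mul, abs_of_pos (ha x)]
          have := hU1 i x
          have := hV1 x j
          have := ha x
          calc _ ≤ 1 * a x * 1 := by gcongr
            _ = a x := by ring
        _ < ∑ _x : Fin d, (T ^ e) ^ d := Finset.sum_lt_sum_of_nonempty ⟨i, Finset.mem_univ _⟩ (fun x _ => hc x)
        _ = _ := by simp
    have h2 : T ≤ (T / d) ^ 2 := by
      rw [div_pow, le_div_iff₀ (by positivity)]
      nlinarith
    have h3 : T ^ (e * d + 1) ≤ (T / d) ^ n := by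
      rw [hn, pow_mul]
      exact pow_le_pow_left₀ hT0.le h2 _
    have h4 : T ^ (e * d + 1) < T ^ (e * d + 1) := by
      calc _ ≤ d * |(U * diagonal a * V) i j| := h3.trans hij
        _ < d * (d * (T ^ e) ^ d) := by gcongr
        _ = (d : ℝ) ^ 2 * (T ^ e) ^ d := by ring
        _ ≤ T * (T ^ e) ^ d := by gcongr
        _ = _ := by rw [pow_succ, pow_mul, mul_comm]
    exact lt_irrefl _ h4
  obtain ⟨j₀, hj₀⟩ := hGd
  have he0 : e ≠ 0 := by omega
  obtain ⟨i, hi0, hid, I₀, I₁, hI, hgap⟩ := gap ha hprod (one_lt_pow₀ (by linarith : 1 < T) he0) hj₀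
  -- the representation
  let R : Matrix.SpecialLinearGroup (Fin d) ℤ →* Matrix (PC d i) (PC d i) ℝ :=
    { toFun := fun g => cmp i (cj P g)
      map_one' := by rw [map_one, cmp_one]
      map_mul' := fun x y => by rw [map_mul, cmp_mul] }
  have hR : ∀ g, R g = cmp i (cj P g) := fun g => rfl
  have hfac : (i.factorial : ℝ) ≤ T := by
    refine le_trans ?_ hTf
    exact_mod_cast Nat.factorial_le hid.le
  have hβ : 1 ≤ T * (T ^ b) ^ d := one_le_mul_of_one_le_of_one_le hT1 (one_le_pow₀ hB1)
  have hF : ∀ f ∈ (S : Set (Matrix.SpecialLinearGroup (Fin d) ℤ)) ^ k, ∀ I J, |R f I J| ≤ T * (T ^ b) ^ d := by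
    intro f hf I J
    rw [hR]
    refine (abs_cmp_le (hB f hf) I J).trans ?_
    have := pow_le_pow_right₀ hB1 hid.le
    gcongr
  have hO : ∀ W : Matrix (Fin d) (Fin d) ℝ, (∀ i j, |W i j| ≤ 1) → ∀ I J, |cmp i W I J| ≤ T * (T ^ b) ^ d := by
    intro W hW I J
    refine (abs_cmp_le hW I J).trans ?_
    rw [one_pow]
    have := one_le_pow₀ hB1 (n := d)
    gcongr
  have hinvg : cj P (γ ^ n)⁻¹ = Vᵀ * diagonal (fun i => (a i)⁻¹) * Uᵀ := by
    have h1 : cj P (γ ^ n)⁻¹ * cj P (γ ^ n) = 1 := by rw [← map_mul, inv_mul_cancel, map_one]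
    have hV' : Vᵀ * V = 1 := mul_eq_one_comm.1 hV
    have h2 : cj P (γ ^ n) * (Vᵀ * diagonal (fun i => (a i)⁻¹) * Uᵀ) = 1 := by
      rw [hsvd]
      calc _ = U * (diagonal a * ((V * Vᵀ) * diagonal (fun i => (a i)⁻¹))) * Uᵀ := by
            simp only [Matrix.mul_assoc]
        _ = 1 := by
          rw [hV, one_mul, Matrix.diagonal_mul_diagonal]
          have : (fun i => a i * (a i)⁻¹) = fun _ => 1 := by
            funext i
            exact mul_inv_cancel₀ (ha i).ne'
          rw [this, Matrix.diagonal_one, mul_one, hU]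
    exact left_inv_eq_right_inv h1 h2
  have hcard : (Fintype.card (PC d i) : ℝ) ≤ T := by
    refine le_trans ?_ hT2
    exact_mod_cast card_PC_le d i
  have hcard1 : (1 : ℝ) ≤ Fintype.card (PC d i) := by
    have : 0 < Fintype.card (PC d i) := Fintype.card_pos_iff.2 ⟨I₀⟩
    exact_mod_cast this
  have hQ1 : 1 ≤ CE * (T ^ b) ^ ME := one_le_mul_of_one_le_of_one_le hCE (one_le_pow₀ hB1)
  obtain ⟨h, hh, u, hu, y, hy, hinj⟩ := construct R ((S : Set (Matrix.SpecialLinearGroup (Fin d) ℤ)) ^ k)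
    (β := T * (T ^ b) ^ d) (Q := CE * (T ^ b) ^ ME) (G := T ^ e) rfl hcard1 hβ rfl hQ1 hF
    (fun f hf => hF f⁻¹ (inv_mem_pow hS hf)) (hES i hid) (γ ^ n)
    (K₁ := cmp i U) (K₂ := cmp i V) (K₁' := cmp i Uᵀ) (K₂' := cmp i Vᵀ)
    (α := fun I => ∏ x ∈ I.1, a x) (fun I => Finset.prod_pos fun x _ => ha x)
    (by rw [hR, hsvd, cmp_mul, cmp_mul, cmp_diagonal])
    (by
      rw [hR, hinvg, cmp_mul, cmp_mul, cmp_diagonal]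
      simp only [Finset.prod_inv_distrib])
    (by rw [← cmp_mul, hU, cmp_one]) (by rw [← cmp_mul, hV, cmp_one])
    (hO U hU1) (hO Uᵀ fun i j => hU1 j i) (hO V hV1) (hO Vᵀ fun i j => hV1 j i) hI hgap (by
      calc _ ≤ T * (T * (T ^ b) ^ ME) ^ 3 * (T * (T * (T ^ b) ^ d)) ^ 25 := by gcongr
        _ = T ^ e := by rw [he]; ring)
  have hg : γ ^ n ∈ (S : Set (Matrix.SpecialLinearGroup (Fin d) ℤ)) ^ (K * n) := by
    rw [pow_mul]; exact Set.pow_mem_pow hγ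
  have hm : ∀ {p q : ℕ} {x z : Matrix.SpecialLinearGroup (Fin d) ℤ},
      x ∈ (S : Set (Matrix.SpecialLinearGroup (Fin d) ℤ)) ^ p →
      z ∈ (S : Set (Matrix.SpecialLinearGroup (Fin d) ℤ)) ^ q →
      x * z ∈ (S : Set (Matrix.SpecialLinearGroup (Fin d) ℤ)) ^ (p + q) := by
    intro p q x z hx hz
    rw [pow_add]; exact Set.mul_mem_mul hx hz
  have hA := hm (hm (hm hg hh) (inv_mem_pow hS hg)) hu
  have hBB := hm (hm hy hA) (inv_mem_pow hS hy)
  exact ⟨_, pow_mono hS (by omega) hA, _, pow_mono hS (by omega) hBB, hinj⟩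

end UT


/-- **Uniform Tits alternative for Zariski-dense subgroups of `SL_d(ℤ)`.** For every `d ≥ 2`
there is `m ≥ 1` such that for every finite symmetric `S ⊆ SL_d(ℤ)` containing `1` whose
generated subgroup is Zariski dense in `SL_d(ℝ)`, the ball `S ^ m` contains two elements
generating a free group of rank 2. -/
theorem uniform_tits_SL_Z (d : ℕ) (hd : 2 ≤ d) :
    ∃ m : ℕ, 1 ≤ m ∧
      ∀ S : Finset (Matrix.SpecialLinearGroup (Fin d) ℤ),
        (1 : Matrix.SpecialLinearGroup (Fin d) ℤ) ∈ S → (∀ s ∈ S, s⁻¹ ∈ S) →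
        -- Zariski density in `SL_d(ℝ)` of the subgroup generated by the image of `S`:
        (∀ p : MvPolynomial (Fin d × Fin d) ℝ,
          (∀ g : Matrix.SpecialLinearGroup (Fin d) ℝ,
            g ∈ Subgroup.closure
              ((Matrix.SpecialLinearGroup.map (n := Fin d) (Int.castRingHom ℝ)) ''
                (S : Set (Matrix.SpecialLinearGroup (Fin d) ℤ))) →
            MvPolynomial.eval (fun ij => (g : Matrix (Fin d) (Fin d) ℝ) ij.1 ij.2) p = 0) →
          ∀ g : Matrix.SpecialLinearGroup (Fin d) ℝ,
            MvPolynomial.eval (fun ij => (g : Matrix (Fin d) (Fin d) ℝ) ij.1 ij.2) p = 0) →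
        ∃ a ∈ (S : Set (Matrix.SpecialLinearGroup (Fin d) ℤ)) ^ m,
          ∃ b ∈ (S : Set (Matrix.SpecialLinearGroup (Fin d) ℤ)) ^ m,
            Function.Injective
              (FreeGroup.lift ![a, b] :
                FreeGroup (Fin 2) →* Matrix.SpecialLinearGroup (Fin d) ℤ) := by
  obtain ⟨m, hm, h⟩ := UT.final d hd
  refine ⟨m, hm, ?_⟩
  intro S h1 hinv hz
  exact h S ⟨h1, hinv, hz⟩
end

section
/- The ping-pong lemma (real case): Let d ≥ 2, and let ε > 0 and r > 2ε. Let a, b ∈ GL_d(ℝ). Suppose a is (r,ε)-proximal with attracting point v_a and repelling hyperplane H_a, a⁻¹ is (r,ε)-proximal with attracting point v_{a⁻¹} and repelling hyperplane H_{a⁻¹}, and similarly b and b⁻¹ are (r,ε)-proximal with data (v_b, H_b) and (v_{b⁻¹}, H_{b⁻¹}). Assume the separation conditions: each of the attracting points v_a, v_{a⁻¹} is at projective distance at least r from each of the repelling hyperplanes H_b and H_{b⁻¹}, and each of v_b, v_{b⁻¹} is at projective distance at least r from each of H_a and H_{a⁻¹}. Then a and b are independent (they generate a free group of rank 2). -/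
open Matrix Pointwise

/-- The standard projective distance between the lines spanned by two (nonzero) vectors of
`ℝᵈ`: `d([x],[y]) = √(‖x‖²‖y‖² - ⟨x,y⟩²) / (‖x‖‖y‖)`. -/
noncomputable def projDist {d : ℕ} (x y : Fin d → ℝ) : ℝ :=
  Real.sqrt ((∑ i, x i ^ 2) * (∑ i, y i ^ 2) - (∑ i, x i * y i) ^ 2) /
    (Real.sqrt (∑ i, x i ^ 2) * Real.sqrt (∑ i, y i ^ 2))

/-- The projective distance from the line `[x]` to (the projectivization of) a linear
subspace `H`. -/
noncomputable def projDistToSubspace {d : ℕ} (x : Fin d → ℝ)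
    (H : Submodule ℝ (Fin d → ℝ)) : ℝ :=
  sInf {r : ℝ | ∃ y ∈ H, y ≠ 0 ∧ r = projDist x y}

/-- `g` is `(r,ε)`-proximal with attracting point `v` and repelling hyperplane `H`:
`H` is a hyperplane, `v ≠ 0`, every point at projective distance `≥ ε` from `H` is sent
within `ε` of `[v]`, and `d([v], H) ≥ r`. -/
def IsProximal {d : ℕ} (g : Matrix (Fin d) (Fin d) ℝ) (r ε : ℝ)
    (v : Fin d → ℝ) (H : Submodule ℝ (Fin d → ℝ)) : Prop :=
  v ≠ 0 ∧ Module.finrank ℝ H = d - 1 ∧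
    (∀ p : Fin d → ℝ, p ≠ 0 → ε ≤ projDistToSubspace p H → projDist (g.mulVec p) v ≤ ε) ∧
    r ≤ projDistToSubspace v H

section Helpers

variable {F : Type*} [NormedAddCommGroup F] [InnerProductSpace ℝ F]

noncomputable def ppDist (X Y : F) : ℝ :=
  Real.sqrt (‖X‖ ^ 2 * ‖Y‖ ^ 2 - (inner ℝ X Y) ^ 2) / (‖X‖ * ‖Y‖)

theorem ppDist_comm (X Y : F) : ppDist X Y = ppDist Y X := by
  unfold ppDist
  rw [real_inner_comm, mul_comm (‖X‖ ^ 2), mul_comm ‖X‖]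

theorem ppDist_le_one (X Y : F) : ppDist X Y ≤ 1 := by
  unfold ppDist
  apply div_le_one_of_le₀ _ (by positivity)
  rw [Real.sqrt_le_left (by positivity)]
  nlinarith [sq_nonneg (inner ℝ X Y)]

theorem ppDist_mul_le {X Y : F} (hX : X ≠ 0) (hY : Y ≠ 0) (t : ℝ) :
    ppDist X Y * ‖X‖ ≤ ‖X - t • Y‖ := by
  have h1 : 0 < ‖X‖ := norm_pos_iff.2 hX
  have h2 : 0 < ‖Y‖ := norm_pos_iff.2 hY
  have : ppDist X Y * ‖X‖ = Real.sqrt (‖X‖ ^ 2 * ‖Y‖ ^ 2 - (inner ℝ X Y) ^ 2) / ‖Y‖ := by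
    unfold ppDist; field_simp
  rw [this, div_le_iff₀ h2, Real.sqrt_le_left (by positivity), mul_pow, norm_sub_sq_real,
    norm_smul, inner_smul_right, mul_pow, Real.norm_eq_abs, sq_abs]
  nlinarith [sq_nonneg (inner ℝ X Y - t * ‖Y‖ ^ 2)]

theorem ppDist_mul_eq {X Y : F} (hX : X ≠ 0) (hY : Y ≠ 0) :
    ppDist X Y * ‖X‖ = ‖X - (inner ℝ X Y / ‖Y‖ ^ 2) • Y‖ := by
  have h1 : 0 < ‖X‖ := norm_pos_iff.2 hX
  have h2 : 0 < ‖Y‖ := norm_pos_iff.2 hY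
  apply le_antisymm (ppDist_mul_le hX hY _)
  have : ppDist X Y * ‖X‖ = Real.sqrt (‖X‖ ^ 2 * ‖Y‖ ^ 2 - (inner ℝ X Y) ^ 2) / ‖Y‖ := by
    unfold ppDist; field_simp
  rw [this, le_div_iff₀ h2]
  apply Real.le_sqrt_of_sq_le
  rw [mul_pow, norm_sub_sq_real,
    norm_smul, inner_smul_right, mul_pow, Real.norm_eq_abs, sq_abs]
  apply le_of_eq
  field_simp
  ring

theorem ppDist_triangle {X Y Z : F} (hX : X ≠ 0) (hY : Y ≠ 0) (hZ : Z ≠ 0) :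
    ppDist X Z ≤ ppDist X Y + ppDist Y Z := by
  have h1 : 0 < ‖X‖ := norm_pos_iff.2 hX
  have h2 : 0 < ‖Y‖ := norm_pos_iff.2 hY
  set s := inner ℝ X Y / ‖Y‖ ^ 2 with hs
  set t := inner ℝ Y Z / ‖Z‖ ^ 2 with ht
  have e1 := ppDist_mul_le hX hZ (s * t)
  have e2 := ppDist_mul_eq hX hY
  have e3 := ppDist_mul_eq hY hZ
  have e4 : ‖X - (s * t) • Z‖ ≤ ‖X - s • Y‖ + |s| * ‖Y - t • Z‖ := by
    rw [← Real.norm_eq_abs, ← norm_smul]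
    refine le_trans (le_of_eq ?_) (norm_add_le _ _)
    congr 1
    module
  have e5 : |s| * ‖Y‖ ≤ ‖X‖ := by
    rw [hs, abs_div, abs_of_pos (by positivity : 0 < ‖Y‖ ^ 2), div_mul_eq_mul_div,
      div_le_iff₀ (by positivity)]
    nlinarith [abs_real_inner_le_norm X Y]
  have e6 : 0 ≤ ppDist Y Z := by unfold ppDist; positivity
  rw [← e2, ← e3] at e4
  have e7 : |s| * (ppDist Y Z * ‖Y‖) ≤ ppDist Y Z * ‖X‖ := by nlinarith
  have : ppDist X Z * ‖X‖ ≤ (ppDist X Y + ppDist Y Z) * ‖X‖ := by linarith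
  exact le_of_mul_le_mul_right this h1

theorem ppDist_exists [FiniteDimensional ℝ F] (hF : 2 ≤ Module.finrank ℝ F) {V : F} (hV : V ≠ 0)
    {s : ℝ} (hs0 : 0 ≤ s) (hs1 : s ≤ 1) : ∃ P : F, P ≠ 0 ∧ ppDist V P = s := by
  have h1 : 0 < ‖V‖ := norm_pos_iff.2 hV
  have hne : (Submodule.span ℝ {V})ᗮ ≠ ⊥ := by
    intro h
    rw [Submodule.orthogonal_eq_bot_iff] at h
    have h3 := finrank_span_singleton (K := ℝ) hV
    rw [h, finrank_top] at h3
    omega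
  obtain ⟨U, hU, hU0⟩ := Submodule.exists_mem_ne_zero_of_ne_bot hne
  have h2 : 0 < ‖U‖ := norm_pos_iff.2 hU0
  have hVU : inner ℝ V U = 0 := Submodule.mem_orthogonal_singleton_iff_inner_right.1 hU
  set c := Real.sqrt (1 - s ^ 2)
  have hc : c ^ 2 = 1 - s ^ 2 := Real.sq_sqrt (by nlinarith)
  set P := c • V + (s * (‖V‖ / ‖U‖)) • U with hP
  have hPn2 : ‖P‖ ^ 2 = ‖V‖ ^ 2 := by
    rw [hP, norm_add_sq_real, norm_smul, norm_smul, inner_smul_left, inner_smul_right, hVU,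
      mul_pow, mul_pow, Real.norm_eq_abs, Real.norm_eq_abs, sq_abs, sq_abs, hc]
    field_simp
    ring
  have hPn : ‖P‖ = ‖V‖ := by
    rwa [pow_left_inj₀ (norm_nonneg _) (norm_nonneg _) two_ne_zero] at hPn2
  have hin : inner ℝ V P = c * ‖V‖ ^ 2 := by
    rw [hP, inner_add_right, inner_smul_right, inner_smul_right, hVU, real_inner_self_eq_norm_sq]
    ring
  refine ⟨P, ?_, ?_⟩
  · rw [← norm_pos_iff, hPn]; exact h1
  · unfold ppDist
    rw [hin, hPn]
    have : ‖V‖ ^ 2 * ‖V‖ ^ 2 - (c * ‖V‖ ^ 2) ^ 2 = (s * (‖V‖ * ‖V‖)) ^ 2 := by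
      rw [mul_pow, hc]; ring
    rw [this, Real.sqrt_sq (by positivity)]
    field_simp

end Helpers

theorem projDist_eq_ppDist {d : ℕ} (x y : Fin d → ℝ) :
    projDist x y = ppDist (WithLp.toLp 2 x) (WithLp.toLp 2 y) := by
  have h : ∀ z : Fin d → ℝ, ‖WithLp.toLp 2 z‖ ^ 2 = ∑ i, z i ^ 2 := by
    intro z
    simp [EuclideanSpace.norm_sq_eq]
  have h' : ∀ z : Fin d → ℝ, ‖WithLp.toLp 2 z‖ = Real.sqrt (∑ i, z i ^ 2) := by
    intro z
    rw [← h, Real.sqrt_sq (norm_nonneg _)]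
  unfold projDist ppDist
  rw [h, h, h', h']
  congr 5
  simp [mul_comm]

theorem projDist_triangle' {d : ℕ} {x y z : Fin d → ℝ} (hx : x ≠ 0) (hy : y ≠ 0) (hz : z ≠ 0) :
    projDist x z ≤ projDist x y + projDist y z := by
  simp only [projDist_eq_ppDist]
  exact ppDist_triangle (by simpa using hx) (by simpa using hy) (by simpa using hz)

theorem projDist_comm' {d : ℕ} (x y : Fin d → ℝ) : projDist x y = projDist y x := by
  simp only [projDist_eq_ppDist]
  exact ppDist_comm _ _

theorem projDist_exists {d : ℕ} (hd : 2 ≤ d) {v : Fin d → ℝ} (hv : v ≠ 0) {s : ℝ} (hs0 : 0 ≤ s)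
    (hs1 : s ≤ 1) : ∃ p : Fin d → ℝ, p ≠ 0 ∧ projDist v p = s := by
  obtain ⟨P, hP, h⟩ := ppDist_exists (F := EuclideanSpace ℝ (Fin d)) (by simpa using hd)
    (V := WithLp.toLp 2 v) (by simpa using hv) hs0 hs1
  exact ⟨WithLp.ofLp P, by simpa using hP, by rw [projDist_eq_ppDist]; exact h⟩

theorem projDist_bdd {d : ℕ} (x : Fin d → ℝ) (H : Submodule ℝ (Fin d → ℝ)) :
    BddBelow {r : ℝ | ∃ y ∈ H, y ≠ 0 ∧ r = projDist x y} := by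
  refine ⟨0, ?_⟩
  rintro _ ⟨y, -, -, rfl⟩
  unfold projDist
  positivity

theorem exists_ne_of_hyperplane {d : ℕ} (hd : 2 ≤ d) {H : Submodule ℝ (Fin d → ℝ)}
    (hH : Module.finrank ℝ H = d - 1) : ∃ y ∈ H, y ≠ 0 := by
  apply Submodule.exists_mem_ne_zero_of_ne_bot
  rintro rfl
  rw [finrank_bot] at hH
  omega

theorem projDistToSubspace_le_one {d : ℕ} (hd : 2 ≤ d) {H : Submodule ℝ (Fin d → ℝ)}
    (hH : Module.finrank ℝ H = d - 1) (x : Fin d → ℝ) : projDistToSubspace x H ≤ 1 := by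
  obtain ⟨y, hy, hy0⟩ := exists_ne_of_hyperplane hd hH
  refine (csInf_le (projDist_bdd x H) ⟨y, hy, hy0, rfl⟩).trans ?_
  rw [projDist_eq_ppDist]
  exact ppDist_le_one _ _

theorem projDistToSubspace_triangle {d : ℕ} (hd : 2 ≤ d) {H : Submodule ℝ (Fin d → ℝ)}
    (hH : Module.finrank ℝ H = d - 1) {x p : Fin d → ℝ} (hx : x ≠ 0) (hp : p ≠ 0) :
    projDistToSubspace x H - projDist x p ≤ projDistToSubspace p H := by
  obtain ⟨y, hy, hy0⟩ := exists_ne_of_hyperplane hd hH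
  refine le_csInf (s := {r : ℝ | ∃ y ∈ H, y ≠ 0 ∧ r = projDist p y}) ⟨_, y, hy, hy0, rfl⟩ ?_
  rintro _ ⟨z, hz, hz0, rfl⟩
  have h1 := csInf_le (projDist_bdd x H) ⟨z, hz, hz0, rfl⟩
  have h2 := projDist_triangle' hx hp hz0
  unfold projDistToSubspace
  linarith

theorem GL_mulVec_ne {d : ℕ} (g : GL (Fin d) ℝ) {p : Fin d → ℝ} (hp : p ≠ 0) :
    (g : Matrix (Fin d) (Fin d) ℝ).mulVec p ≠ 0 := by
  intro h
  apply hp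
  have : ((g⁻¹ : GL (Fin d) ℝ) : Matrix (Fin d) (Fin d) ℝ).mulVec
      ((g : Matrix (Fin d) (Fin d) ℝ).mulVec p) = p := by
    rw [Matrix.mulVec_mulVec, ← Units.val_mul, inv_mul_cancel, Units.val_one, Matrix.one_mulVec]
  rw [← this, h, Matrix.mulVec_zero]

theorem word_maps {d : ℕ} (hd : 2 ≤ d) {ε r : ℝ} (hr : 2 * ε < r) {ι : Type*}
    (g : ι × Bool → GL (Fin d) ℝ) (v : ι × Bool → Fin d → ℝ)
    (H : ι × Bool → Submodule ℝ (Fin d → ℝ))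
    (hp : ∀ s, IsProximal (g s : Matrix (Fin d) (Fin d) ℝ) r ε (v s) (H s))
    (sep : ∀ s t : ι × Bool, (s.1 = t.1 → s.2 = t.2) → r ≤ projDistToSubspace (v s) (H t))
    (L : List (ι × Bool)) : ∀ (s : ι × Bool), FreeGroup.IsReduced (s :: L) →
    ∀ p : Fin d → ℝ, p ≠ 0 →
    ε ≤ projDistToSubspace p (H ((s :: L).getLast (List.cons_ne_nil _ _))) →
    projDist ((((s :: L).map g).prod : GL (Fin d) ℝ).val.mulVec p) (v s) ≤ ε := by
  induction L with
  | nil =>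
    intro s _ p hp0 h
    simpa using (hp s).2.2.1 p hp0 (by simpa using h)
  | cons t L ih =>
    intro s hred p hp0 h
    rw [FreeGroup.isReduced_cons_cons] at hred
    have h1 := ih t hred.2 p hp0 (by simpa using h)
    rw [List.map_cons, List.prod_cons, Units.val_mul, ← Matrix.mulVec_mulVec]
    have hq := GL_mulVec_ne ((t :: L).map g).prod hp0
    apply (hp s).2.2.1 _ hq
    have h2 := projDistToSubspace_triangle hd (hp s).2.1 (hp t).1 hq
    have h3 := sep t s (fun e => (hred.1 e.symm).symm)
    rw [projDist_comm'] at h2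
    linarith

theorem word_ne_one {d : ℕ} (hd : 2 ≤ d) {ε r : ℝ} (hε : 0 < ε) (hr : 2 * ε < r) {ι : Type*}
    (g : ι × Bool → GL (Fin d) ℝ) (v : ι × Bool → Fin d → ℝ)
    (H : ι × Bool → Submodule ℝ (Fin d → ℝ))
    (hp : ∀ s, IsProximal (g s : Matrix (Fin d) (Fin d) ℝ) r ε (v s) (H s))
    (sep : ∀ s t : ι × Bool, (s.1 = t.1 → s.2 = t.2) → r ≤ projDistToSubspace (v s) (H t))
    (L : List (ι × Bool)) (hL : FreeGroup.IsCyclicallyReduced L) (h1 : (L.map g).prod = 1) :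
    L = [] := by
  cases L with
  | nil => rfl
  | cons s L =>
    exfalso
    set t := (s :: L).getLast (List.cons_ne_nil _ _) with ht
    have hst : t.1 = s.1 → t.2 = s.2 :=
      hL.2 t (by rw [List.getLast?_eq_getLast_of_ne_nil (List.cons_ne_nil _ _)]; rfl) s (by simp)
    have hsep := sep s t (fun e => (hst e.symm).symm)
    have hr1 := hsep.trans (projDistToSubspace_le_one hd (hp t).2.1 _)
    obtain ⟨p, hp0, hpd⟩ := projDist_exists hd (hp s).1 (s := r / 2) (by linarith) (by linarith)
    have h2 := projDistToSubspace_triangle hd (hp t).2.1 (hp s).1 hp0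
    have h3 := word_maps hd hr g v H hp sep L s hL.1 p hp0 (by rw [← ht]; linarith)
    rw [h1, Units.val_one, Matrix.one_mulVec, projDist_comm'] at h3
    linarith

/-- **The ping-pong lemma.** If `a, a⁻¹, b, b⁻¹` are `(r,ε)`-proximal (`r > 2ε`) and the
attracting points of `a^{±1}` are `r`-far from the repelling hyperplanes of `b^{±1}` and
vice versa, then `a` and `b` generate a free group of rank 2. -/
theorem ping_pong_lemma {d : ℕ} (hd : 2 ≤ d) {ε r : ℝ} (hε : 0 < ε) (hr : 2 * ε < r)
    (a b : GL (Fin d) ℝ)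
    (va va' vb vb' : Fin d → ℝ) (Ha Ha' Hb Hb' : Submodule ℝ (Fin d → ℝ))
    (hpa : IsProximal (a : Matrix (Fin d) (Fin d) ℝ) r ε va Ha)
    (hpa' : IsProximal ((a⁻¹ : GL (Fin d) ℝ) : Matrix (Fin d) (Fin d) ℝ) r ε va' Ha')
    (hpb : IsProximal (b : Matrix (Fin d) (Fin d) ℝ) r ε vb Hb)
    (hpb' : IsProximal ((b⁻¹ : GL (Fin d) ℝ) : Matrix (Fin d) (Fin d) ℝ) r ε vb' Hb')
    (sep1 : r ≤ projDistToSubspace va Hb) (sep2 : r ≤ projDistToSubspace va Hb')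
    (sep3 : r ≤ projDistToSubspace va' Hb) (sep4 : r ≤ projDistToSubspace va' Hb')
    (sep5 : r ≤ projDistToSubspace vb Ha) (sep6 : r ≤ projDistToSubspace vb Ha')
    (sep7 : r ≤ projDistToSubspace vb' Ha) (sep8 : r ≤ projDistToSubspace vb' Ha') :
    Function.Injective (FreeGroup.lift ![a, b] : FreeGroup (Fin 2) →* GL (Fin d) ℝ) := by
  rw [injective_iff_map_eq_one]
  intro x hx
  let g : Fin 2 × Bool → GL (Fin d) ℝ := fun x => cond x.2 (![a, b] x.1) (![a, b] x.1)⁻¹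
  let v : Fin 2 × Bool → Fin d → ℝ := fun x => cond x.2 (![va, vb] x.1) (![va', vb'] x.1)
  let H : Fin 2 × Bool → Submodule ℝ (Fin d → ℝ) :=
    fun x => cond x.2 (![Ha, Hb] x.1) (![Ha', Hb'] x.1)
  have hp : ∀ s, IsProximal (g s : Matrix (Fin d) (Fin d) ℝ) r ε (v s) (H s) := by
    rintro ⟨i, c⟩
    fin_cases i <;> cases c
    exacts [hpa', hpa, hpb', hpb]
  have sep : ∀ s t : Fin 2 × Bool, (s.1 = t.1 → s.2 = t.2) →
      r ≤ projDistToSubspace (v s) (H t) := by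
    rintro s t hst
    by_cases h : s.1 = t.1
    · rw [← Prod.ext h (hst h)]
      exact (hp s).2.2.2
    · obtain ⟨i, c⟩ := s
      obtain ⟨j, e⟩ := t
      fin_cases i <;> fin_cases j <;> cases c <;> cases e <;> first | exact absurd rfl h | assumption
  have hc := FreeGroup.reduceCyclically.conj_conjugator_reduceCyclically x.toWord
  set C := FreeGroup.reduceCyclically.conjugator x.toWord
  set W := FreeGroup.reduceCyclically x.toWord with hW
  have hx' : x = FreeGroup.mk C * FreeGroup.mk W * (FreeGroup.mk C)⁻¹ := by
    rw [FreeGroup.inv_mk, FreeGroup.mul_mk, FreeGroup.mul_mk, hc, FreeGroup.mk_toWord]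
  have hW1 : FreeGroup.lift ![a, b] (FreeGroup.mk W) = 1 := by
    rw [hx', map_mul, map_mul, map_inv] at hx
    simpa using hx
  have hnil := word_ne_one hd hε hr g v H hp sep W
    (FreeGroup.reduceCyclically.isCyclicallyReduced FreeGroup.isReduced_toWord)
    (by rw [FreeGroup.lift_mk] at hW1; exact hW1)
  rw [hx', hnil, ← FreeGroup.one_eq_mk, mul_one, mul_inv_cancel]
end

section
/- Eigenvalue versus conjugation-minimal norm (Proposition 1, Archimedean case): For every d ≥ 1 there is a constant c = c(d) > 0 such that for every compact subset Ω of SL_d(ℂ) with 1 ∈ Ω, one has Λ(Ω^{d²}) ≥ c·E(Ω), where Λ(Ω^{d²}) = sup{ρ(y) : y ∈ Ω^{d²}} with ρ(y) the spectral radius of y (the maximal modulus of an eigenvalue of y), and E(Ω) = inf_{h ∈ SL_d(ℂ)} sup_{y ∈ Ω} ‖h·y·h⁻¹‖ with ‖·‖ the operator norm on d×d complex matrices. -/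
open Matrix Pointwise

/-- The `ℓ²`-norm of a vector in `ℂᵈ`. -/
noncomputable def cvNorm {d : ℕ} (x : Fin d → ℂ) : ℝ :=
  Real.sqrt (∑ i, ‖x i‖ ^ 2)

/-- The operator norm of a complex `d × d` matrix with respect to the Hermitian norm
on `ℂᵈ` (supremum over the closed unit ball). -/
noncomputable def cOpNorm {d : ℕ} (M : Matrix (Fin d) (Fin d) ℂ) : ℝ :=
  sSup {r : ℝ | ∃ x : Fin d → ℂ, cvNorm x ≤ 1 ∧ r = cvNorm (M.mulVec x)}

/-- The spectral radius of a complex matrix: the maximal modulus of an eigenvalue, i.e. of a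
root of the characteristic polynomial. -/
noncomputable def specRad {d : ℕ} (M : Matrix (Fin d) (Fin d) ℂ) : ℝ :=
  sSup {r : ℝ | ∃ μ ∈ M.charpoly.roots, r = ‖μ‖}

section Aux


theorem aux_nilp_elem {V : Type*} [AddCommGroup V] [Module ℂ V] [FiniteDimensional ℂ V]
    (A : Submodule ℂ (Module.End ℂ V)) (hmul : ∀ a ∈ A, ∀ b ∈ A, a * b ∈ A)
    (htr : ∀ a ∈ A, LinearMap.trace ℂ V a = 0) (a : Module.End ℂ V) (ha : a ∈ A) :
    IsNilpotent a := by
  have hg : ∀ g : Polynomial ℂ, a * Polynomial.aeval a g ∈ A := by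
    intro g
    induction g using Polynomial.induction_on' with
    | add p q hp hq => rw [map_add, mul_add]; exact A.add_mem hp hq
    | monomial n c =>
      rw [Polynomial.aeval_monomial, Algebra.commutes, ← mul_assoc, ← pow_succ',
        ← Algebra.commutes, ← Algebra.smul_def]
      refine A.smul_mem _ ?_
      induction n with
      | zero => simpa using ha
      | succ n ih => rw [pow_succ]; exact hmul _ ih _ ha
  obtain ⟨q, hq1, hq2⟩ := Polynomial.exists_eq_pow_rootMultiplicity_mul_and_not_dvd
    (minpoly ℂ a) (minpoly.ne_zero (Algebra.IsIntegral.isIntegral a)) 0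
  set n := Polynomial.rootMultiplicity 0 (minpoly ℂ a)
  simp only [map_zero, sub_zero] at hq1 hq2
  have hco : IsCoprime (Polynomial.X ^ (n+1) : Polynomial ℂ) q :=
    ((Polynomial.irreducible_X.coprime_iff_not_dvd).2 hq2).pow_left
  obtain ⟨u, v, huv⟩ := hco
  have hz : Polynomial.aeval a (Polynomial.X ^ n * q) = 0 := by
    rw [← hq1]; exact minpoly.aeval ℂ a
  set e := Polynomial.aeval a (u * Polynomial.X ^ (n+1)) with he
  have hid : IsIdempotentElem e := by
    have : (u * Polynomial.X ^ (n+1)) * (u * Polynomial.X ^ (n+1)) =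
       u * Polynomial.X ^ (n+1) - (Polynomial.X ^ n * q) * (u * v * Polynomial.X) := by
      linear_combination (u * Polynomial.X ^ (n+1)) * huv
    unfold IsIdempotentElem
    rw [he, ← map_mul, this, map_sub, map_mul (Polynomial.aeval a) (Polynomial.X ^ n * q), hz]
    simp
  have heA : e ∈ A := by
    have : u * Polynomial.X ^ (n+1) = Polynomial.X * (u * Polynomial.X ^ n) := by ring
    rw [he, this, map_mul, Polynomial.aeval_X]
    exact hg _
  have he0 : e = 0 := (LinearMap.IsIdempotentElem.trace_eq_zero_iff hid).1 (htr e heA)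
  refine ⟨n, ?_⟩
  have h1 : (Polynomial.X ^ n : Polynomial ℂ) =
      Polynomial.X ^ n * (u * Polynomial.X ^ (n+1)) + (Polynomial.X ^ n * q) * v := by
    linear_combination (-Polynomial.X ^ n) * huv
  have h2 := congrArg (Polynomial.aeval a) h1
  rw [map_add, map_mul _ (Polynomial.X ^ n), map_mul _ (Polynomial.X ^ n * q), hz, ← he, he0] at h2
  simpa using h2

attribute [local instance] LieRing.ofAssociativeRing

theorem aux_nilp_alg {V : Type*} [AddCommGroup V] [Module ℂ V] [FiniteDimensional ℂ V]
    (A : Submodule ℂ (Module.End ℂ V)) (hmul : ∀ a ∈ A, ∀ b ∈ A, a * b ∈ A)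
    (htr : ∀ a ∈ A, LinearMap.trace ℂ V a = 0) : ∃ m : ℕ, A ^ m = ⊥ := by
  let L : LieSubalgebra ℂ (Module.End ℂ V) :=
    { A with
      lie_mem' := by
        intro x y hx hy
        exact A.sub_mem (hmul _ hx _ hy) (hmul _ hy _ hx) }
  have hn : LieModule.IsNilpotent L V := by
    rw [LieModule.isNilpotent_iff_forall (R := ℂ)]
    intro x
    exact aux_nilp_elem A hmul htr x.1 x.2
  obtain ⟨m, hm⟩ := (LieModule.isNilpotent_iff ℂ L V).1 hn
  refine ⟨m, ?_⟩
  have key : ∀ k : ℕ, ∀ w ∈ A ^ k, ∀ v : V, w v ∈ LieModule.lowerCentralSeries ℂ L V k := by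
    intro k
    induction k with
    | zero => intro w _ v; simp
    | succ k ih =>
      intro w hw v
      have hpk : A ^ (k + 1) = A * A ^ k := pow_succ' A k
      rw [hpk] at hw
      refine Submodule.mul_induction_on hw ?_ ?_
      · intro x hx y hy
        rw [LieModule.lowerCentralSeries_succ]
        exact LieSubmodule.lie_mem_lie (x := (⟨x, hx⟩ : L)) (LieSubmodule.mem_top _) (ih y hy v)
      · intro x y hx hy
        rw [LinearMap.add_apply]
        exact add_mem hx hy
  rw [eq_bot_iff]
  intro w hw
  rw [Submodule.mem_bot]
  ext v
  have := key m w hw v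
  rw [hm] at this
  simpa using this

theorem aux_nilp_mat {d : ℕ}
    (A : Submodule ℂ (Matrix (Fin d) (Fin d) ℂ)) (hmul : ∀ a ∈ A, ∀ b ∈ A, a * b ∈ A)
    (htr : ∀ a ∈ A, a.trace = 0) : ∃ m : ℕ, A ^ m = ⊥ := by
  let f : Matrix (Fin d) (Fin d) ℂ →ₐ[ℂ] Module.End ℂ (Fin d → ℂ) :=
    (Matrix.toLinAlgEquiv' (R := ℂ) (n := Fin d)).toAlgHom
  have hf : Function.Injective f := (Matrix.toLinAlgEquiv' (R := ℂ) (n := Fin d)).injective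
  obtain ⟨m, hm⟩ := aux_nilp_alg (A.map f.toLinearMap) (by
    rintro _ ⟨a, ha, rfl⟩ _ ⟨b, hb, rfl⟩
    exact ⟨a * b, hmul a ha b hb, by simp⟩) (by
    rintro _ ⟨a, ha, rfl⟩
    rw [← htr a ha]
    exact Matrix.trace_toLin'_eq a)
  refine ⟨m, ?_⟩
  rw [← Submodule.map_pow] at hm
  rw [eq_bot_iff]
  intro w hw
  have : f.toLinearMap w ∈ (A ^ m).map f.toLinearMap := Submodule.mem_map_of_mem hw
  rw [hm, Submodule.mem_bot] at this
  exact (map_eq_zero_iff f hf).1 this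

/-- stabilisation of powers -/
theorem aux_stab {d : ℕ} (hd : 1 ≤ d) (N : Submodule ℂ (Matrix (Fin d) (Fin d) ℂ))
    (h1 : 1 ∈ N) : N ^ (d ^ 2) = N ^ (d ^ 2 - 1) := by
  have h1' : (1 : Submodule ℂ (Matrix (Fin d) (Fin d) ℂ)) ≤ N := by
    rw [Submodule.one_le]; exact h1
  have hmono : ∀ k, N ^ k ≤ N ^ (k+1) := fun k => by
    rw [pow_succ]
    calc N ^ k = N ^ k * 1 := (mul_one _).symm
      _ ≤ N ^ k * N := mul_le_mul_right h1' _
  by_contra hne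
  have hd2 : 1 ≤ d ^ 2 := Nat.one_le_pow _ _ hd
  have hstep : ∀ k, N ^ (k+1) = N ^ k → ∀ j, N ^ (k + j + 1) = N ^ (k+j) := by
    intro k hk j
    have : k + j + 1 = (k+1) + j := by ring
    rw [this, pow_add, hk, ← pow_add]
  have hlt : ∀ k, k ≤ d ^ 2 - 1 → N ^ k < N ^ (k+1) := by
    intro k hk
    refine lt_of_le_of_ne (hmono k) fun h => hne ?_
    have := hstep k h.symm (d ^ 2 - 1 - k)
    have e : k + (d ^ 2 - 1 - k) = d ^ 2 - 1 := by omega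
    rw [e] at this
    rwa [Nat.sub_add_cancel hd2] at this
  have hdim : ∀ k, k ≤ d ^ 2 → k + 1 ≤ Module.finrank ℂ (N ^ k : Submodule ℂ _) := by
    intro k
    induction k with
    | zero =>
      intro _
      have : Nonempty (Fin d) := ⟨⟨0, hd⟩⟩
      rw [pow_zero, Nat.succ_le_iff, Module.finrank_pos_iff, Submodule.nontrivial_iff_ne_bot]
      exact one_ne_zero
    | succ k ih =>
      intro hk
      have := Submodule.finrank_lt_finrank_of_lt (hlt k (by omega))
      have := ih (by omega)
      omega
  have h2 := hdim (d ^ 2) le_rfl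
  have h3 := Submodule.finrank_le (N ^ (d ^ 2))
  rw [Module.finrank_matrix] at h3
  simp only [Fintype.card_fin, Module.finrank_self, mul_one] at h3
  have : d * d = d ^ 2 := by ring
  omega

/-- combine -/
theorem aux_comb {d : ℕ} (hd : 1 ≤ d) (P S : Set (Matrix (Fin d) (Fin d) ℂ)) (h1 : 1 ∈ P)
    (hSP : S ⊆ P) (htr : ∀ s ∈ S, ∀ w ∈ P ^ (d ^ 2 - 1), (s * w).trace = 0) :
    ∃ m : ℕ, (Submodule.span ℂ S) ^ m = ⊥ := by
  set N := Submodule.span ℂ P with hN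
  set X := Submodule.span ℂ S with hX
  have h1N : (1 : Matrix (Fin d) (Fin d) ℂ) ∈ N := Submodule.subset_span h1
  have hst := aux_stab hd N h1N
  have hd2 : 1 ≤ d ^ 2 := Nat.one_le_pow _ _ hd
  set k := d ^ 2 - 1 with hk
  have hk1 : d ^ 2 = k + 1 := by omega
  rw [hk1] at hst
  have hst2 : ∀ j, N ^ (k + j) = N ^ k := by
    intro j
    induction j with
    | zero => rfl
    | succ j ih =>
      have : k + (j+1) = (k+1) + j := by ring
      rw [this, pow_add, hst, ← pow_add, ih]
  have hXN : X ≤ N := Submodule.span_mono hSP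
  have hone : (1 : Matrix (Fin d) (Fin d) ℂ) ∈ N ^ k := by
    simpa using Submodule.pow_mem_pow N h1N k
  obtain ⟨m, hm⟩ := aux_nilp_mat (X * N ^ k) (by
    have : (X * N ^ k) * (X * N ^ k) ≤ X * N ^ k := by
      calc (X * N ^ k) * (X * N ^ k) = X * (N ^ k * (X * N ^ k)) := by rw [mul_assoc]
        _ ≤ X * (N ^ k * (N * N ^ k)) := by gcongr
        _ = X * N ^ (k + (k + 1)) := by rw [← pow_succ', ← pow_add]
        _ = X * N ^ k := by rw [hst2]
    intro a ha b hb
    exact this (Submodule.mul_mem_mul ha hb)) (by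
    rw [hX, hN, Submodule.span_pow, Submodule.span_mul_span]
    intro a ha
    induction ha using Submodule.span_induction with
    | mem x hx =>
      obtain ⟨s, hs, w, hw, rfl⟩ := hx
      exact htr s hs w hw
    | zero => simp
    | add x y _ _ hx hy => simp [hx, hy]
    | smul c x _ hx => simp [hx])
  refine ⟨m, ?_⟩
  rw [eq_bot_iff, ← hm]
  have : X ≤ X * N ^ k := by
    intro x hx
    simpa using Submodule.mul_mem_mul hx hone
  exact pow_le_pow_left' this m

open scoped Matrix.Norms.L2Operator MatrixOrder ComplexOrder Topology

theorem aux_contr {d : ℕ} (S : Set (Matrix (Fin d) (Fin d) ℂ)) (B : ℝ)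
    (hB : ∀ x ∈ S, ‖x‖ ≤ B) (m : ℕ) (hm : (Submodule.span ℂ S) ^ m = ⊥) (ε : ℝ) (hε : 0 < ε) :
    ∃ h : Matrix (Fin d) (Fin d) ℂ, IsUnit h ∧ ∀ x ∈ S, ‖h * x * h⁻¹‖ ≤ ε := by
  set X := Submodule.span ℂ S with hX
  let b := Module.finBasis ℂ X
  set r := Module.finrank ℂ X
  -- coefficient bound
  obtain ⟨C, hC0, hC⟩ : ∃ C : ℝ, 0 ≤ C ∧ ∀ x : X, ∀ i, ‖b.repr x i‖ ≤ C * ‖x‖ := by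
    let f : X →L[ℂ] (Fin r → ℂ) := LinearMap.toContinuousLinearMap b.equivFun.toLinearMap
    refine ⟨‖f‖, f.opNorm_nonneg, fun x i => ?_⟩
    exact (norm_le_pi_norm (f x) i).trans (f.le_opNorm x)
  set D : ℝ := r * (C * B) with hD
  set t : ℝ := (D / ε) ^ 2 + 1 with ht
  have ht0 : 0 < t := by positivity
  let Φ : Matrix (Fin d) (Fin d) ℂ → Matrix (Fin d) (Fin d) ℂ := fun Y => ∑ i, star (b i : Matrix (Fin d) (Fin d) ℂ) * Y * (b i : Matrix (Fin d) (Fin d) ℂ)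
  have hΦ0 : ∀ Y : Matrix (Fin d) (Fin d) ℂ, 0 ≤ Y → 0 ≤ Φ Y := fun Y hY =>
    Finset.sum_nonneg fun i _ => star_left_conjugate_nonneg hY _
  have hΦk : ∀ k, 0 ≤ Φ^[k] 1 := by
    intro k
    induction k with
    | zero =>
      have h1 := star_mul_self_nonneg (1 : Matrix (Fin d) (Fin d) ℂ)
      rw [star_one, mul_one] at h1
      exact h1
    | succ k ih => rw [Function.iterate_succ_apply']; exact hΦ0 _ ih
  have hvan : ∀ k, ∀ z : Matrix (Fin d) (Fin d) ℂ, (∀ w ∈ X ^ k, w * z = 0) → Φ^[k] 1 * z = 0 := by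
    intro k
    induction k with
    | zero => intro z hz; simpa using hz 1 (by rw [pow_zero]; exact Submodule.one_le.1 le_rfl)
    | succ k ih =>
      intro z hz
      rw [Function.iterate_succ_apply']
      change (∑ i, star (b i : Matrix (Fin d) (Fin d) ℂ) * _ * (b i : Matrix (Fin d) (Fin d) ℂ)) * z = 0
      rw [Finset.sum_mul]
      refine Finset.sum_eq_zero fun i _ => ?_
      rw [mul_assoc, mul_assoc, ih, mul_zero]
      intro w hw
      rw [← mul_assoc]
      apply hz
      rw [pow_succ]
      exact Submodule.mul_mem_mul hw (b i).2
  have hvan' : Φ^[m] 1 = 0 := by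
    have := hvan m 1 (by
      intro w hw
      rw [hm, Submodule.mem_bot] at hw
      simp [hw])
    simpa using this
  set P : Matrix (Fin d) (Fin d) ℂ := ∑ k ∈ Finset.range m, t ^ k • Φ^[k] 1 with hP
  have hΦsum : t • Φ P = ∑ k ∈ Finset.range m, t ^ (k+1) • Φ^[k+1] 1 := by
    simp only [Φ, hP, Finset.smul_sum, Finset.mul_sum, Finset.sum_mul, Function.iterate_succ_apply']
    rw [Finset.sum_comm]
    refine Finset.sum_congr rfl fun k _ => Finset.sum_congr rfl fun i _ => ?_
    simp [pow_succ', smul_smul]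
  have hP1 : P = 1 + t • Φ P := by
    have h1 := Finset.sum_range_succ (fun k => t ^ k • Φ^[k] 1) m
    have h2 := Finset.sum_range_succ' (fun k => t ^ k • Φ^[k] 1) m
    rw [h1, hvan', smul_zero, add_zero, ← hP, ← hΦsum] at h2
    rw [pow_zero, one_smul, add_comm] at h2
    exact h2
  have hP0 : 0 ≤ P := Finset.sum_nonneg fun k _ => smul_nonneg (by positivity) (hΦk k)
  have hPi : ∀ i, t • (star (b i : Matrix (Fin d) (Fin d) ℂ) * P * (b i : Matrix (Fin d) (Fin d) ℂ)) ≤ P := by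
    intro i
    have h1 : star (b i : Matrix (Fin d) (Fin d) ℂ) * P * (b i : Matrix (Fin d) (Fin d) ℂ) ≤ Φ P :=
      Finset.single_le_sum (f := fun i => star (b i : Matrix (Fin d) (Fin d) ℂ) * P * (b i : Matrix (Fin d) (Fin d) ℂ))
        (fun j _ => star_left_conjugate_nonneg hP0 _) (Finset.mem_univ i)
    calc t • (star (b i : Matrix (Fin d) (Fin d) ℂ) * P * (b i : Matrix (Fin d) (Fin d) ℂ)) ≤ t • Φ P := smul_le_smul_of_nonneg_left h1 ht0.le
      _ ≤ 1 + t • Φ P := le_add_of_nonneg_left (hΦk 0)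
      _ = P := hP1.symm
  have hPu : IsUnit P := by
    have h1 : (t • Φ P).PosSemidef :=
      Matrix.nonneg_iff_posSemidef.1 (smul_nonneg ht0.le (hΦ0 P hP0))
    have h2 : P.PosDef := by
      rw [hP1]; exact Matrix.PosDef.one.add_posSemidef h1
    exact h2.isUnit
  obtain ⟨h, hh⟩ := CStarAlgebra.nonneg_iff_eq_star_mul_self.mp hP0
  have hu : IsUnit h := by
    rw [Matrix.isUnit_iff_isUnit_det] at hPu ⊢
    rw [hh, Matrix.det_mul] at hPu
    exact isUnit_of_mul_isUnit_right hPu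
  have hdet := (Matrix.isUnit_iff_isUnit_det h).1 hu
  have hinv : h * h⁻¹ = 1 := Matrix.mul_nonsing_inv h hdet
  have hbi : ∀ i, ‖h * (b i : Matrix (Fin d) (Fin d) ℂ) * h⁻¹‖ ^ 2 ≤ t⁻¹ := by
    intro i
    set y := h * (b i : Matrix (Fin d) (Fin d) ℂ) * h⁻¹ with hy
    have h1 := star_left_conjugate_le_conjugate (hPi i) h⁻¹
    have h2 : star h⁻¹ * P * h⁻¹ = 1 := by
      rw [hh, ← mul_assoc, ← star_mul, hinv, star_one, one_mul, hinv]
    have h3 : star h⁻¹ * (t • (star (b i : Matrix (Fin d) (Fin d) ℂ) * P * (b i : Matrix (Fin d) (Fin d) ℂ))) * h⁻¹ = t • (star y * y) := by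
      rw [hy, hh]; simp only [star_mul, mul_smul_comm, smul_mul_assoc, mul_assoc]
    rw [h2, h3] at h1
    have h4 := CStarAlgebra.norm_le_norm_of_nonneg_of_le
      (smul_nonneg ht0.le (star_mul_self_nonneg y)) h1
    rw [norm_smul, CStarRing.norm_star_mul_self, Real.norm_of_nonneg ht0.le] at h4
    have h5 : ‖(1 : Matrix (Fin d) (Fin d) ℂ)‖ ≤ 1 := by
      rw [← Matrix.diagonal_one, Matrix.l2_opNorm_diagonal]
      exact (pi_norm_le_iff_of_nonneg zero_le_one).2 fun i => by simp
    rw [sq, inv_eq_one_div, le_div_iff₀' ht0]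
    exact h4.trans h5
  have hbi' : ∀ i, ‖h * (b i : Matrix (Fin d) (Fin d) ℂ) * h⁻¹‖ ≤ (Real.sqrt t)⁻¹ := by
    intro i
    rw [← Real.sqrt_inv]
    exact Real.le_sqrt_of_sq_le (hbi i)
  refine ⟨h, hu, fun x hx => ?_⟩
  have hxX : x ∈ X := Submodule.subset_span hx
  obtain ⟨c, hc, hx1⟩ : ∃ c : Fin r → ℂ, (∀ i, ‖c i‖ ≤ C * ‖x‖) ∧ x = ∑ i, c i • (b i : Matrix (Fin d) (Fin d) ℂ) := by
    refine ⟨fun i => b.repr ⟨x, hxX⟩ i, fun i => hC ⟨x, hxX⟩ i, ?_⟩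
    have h1 := congrArg X.subtype (b.sum_repr ⟨x, hxX⟩)
    rw [map_sum] at h1
    exact h1.symm
  have hB0 : 0 ≤ B := (norm_nonneg _).trans (hB x hx)
  have hD0 : 0 ≤ D := by positivity
  have hs : D / ε ≤ Real.sqrt t := Real.le_sqrt_of_sq_le (by rw [ht]; linarith)
  have hs0 : 0 < Real.sqrt t := Real.sqrt_pos.2 ht0
  have hx2 : h * x * h⁻¹ = ∑ i, c i • (h * (b i : Matrix (Fin d) (Fin d) ℂ) * h⁻¹) := by
    simp only [hx1, Finset.mul_sum, Finset.sum_mul, mul_smul_comm, smul_mul_assoc]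
  rw [hx2]
  calc ‖∑ i, c i • (h * (b i : Matrix (Fin d) (Fin d) ℂ) * h⁻¹)‖
      ≤ ∑ i : Fin r, (C * B) * (Real.sqrt t)⁻¹ := by
        refine norm_sum_le_of_le _ fun i _ => ?_
        rw [norm_smul]
        refine mul_le_mul ((hc i).trans ?_) (hbi' i) (norm_nonneg _) (by positivity)
        exact mul_le_mul_of_nonneg_left (hB x hx) hC0
    _ = D / Real.sqrt t := by simp [hD]; ring
    _ ≤ ε := by
        rw [div_le_iff₀ hs0]
        rw [div_le_iff₀ hε] at hs
        linarith

theorem aux_core {d : ℕ} (hd : 1 ≤ d) (T : ℕ → Set (Matrix (Fin d) (Fin d) ℂ)) (E : ℕ → ℝ)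
    (hE : ∀ n, 1 ≤ E n) (h1 : ∀ n, 1 ∈ T n) (hb : ∀ n, ∀ y ∈ T n, ‖y‖ ≤ 2 * E n)
    (htr : ∀ n, ∀ y ∈ (T n) ^ (d ^ 2), ‖y.trace‖ ≤ d * (E n / (n + 1)))
    (hlow : ∀ g : Matrix (Fin d) (Fin d) ℂ, IsUnit g → ∀ n, ∃ y ∈ T n, E n / 2 ≤ ‖g * y * g⁻¹‖) :
    False := by
  let U : Ultrafilter ℕ := Filter.hyperfilter ℕ
  let S : Set (Matrix (Fin d) (Fin d) ℂ) :=
    {x | ∃ y : ℕ → Matrix (Fin d) (Fin d) ℂ, (∀ n, y n ∈ T n) ∧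
      Filter.Tendsto (fun n => (E n)⁻¹ • y n) U (𝓝 x)}
  let P : ℕ → Set (Matrix (Fin d) (Fin d) ℂ) := fun k =>
    {x | ∃ y : ℕ → Matrix (Fin d) (Fin d) ℂ, ∃ α : ℕ → ℝ, (∀ n, y n ∈ (T n) ^ k) ∧
      (∀ n, 0 ≤ α n) ∧ (∀ n, α n ≤ 1) ∧ Filter.Tendsto (fun n => α n • y n) U (𝓝 x)}
  have hE0 : ∀ n, 0 < E n := fun n => lt_of_lt_of_le one_pos (hE n)
  have hEi : ∀ n, 0 ≤ (E n)⁻¹ := fun n => (inv_pos.2 (hE0 n)).le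
  have hP1 : (1 : Matrix (Fin d) (Fin d) ℂ) ∈ P 1 :=
    ⟨fun _ => 1, fun _ => 1, fun n => by simpa using h1 n, fun _ => zero_le_one, fun _ => le_rfl,
      by simp⟩
  have hSP : S ⊆ P 1 := by
    rintro x ⟨y, hy, hx⟩
    exact ⟨y, fun n => (E n)⁻¹, fun n => by simpa using hy n, hEi,
      fun n => inv_le_one_of_one_le₀ (hE n), hx⟩
  have hPk : ∀ k, (P 1) ^ k ⊆ P k := by
    intro k
    induction k with
    | zero =>
      intro x hx
      rw [pow_zero, Set.mem_one] at hx
      subst hx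
      exact ⟨fun _ => 1, fun _ => 1, fun n => by simp, fun _ => zero_le_one,
        fun _ => le_rfl, by simp⟩
    | succ k ih =>
      intro x hx
      rw [pow_succ] at hx
      obtain ⟨a, ha, c, hc, rfl⟩ := Set.mem_mul.1 hx
      obtain ⟨y, α, hy, hα0, hα1, hl⟩ := ih ha
      obtain ⟨z, β, hz, hβ0, hβ1, hl'⟩ := hc
      refine ⟨fun n => y n * z n, fun n => α n * β n, fun n => ?_,
        fun n => mul_nonneg (hα0 n) (hβ0 n),
        fun n => mul_le_one₀ (hα1 n) (hβ0 n) (hβ1 n), ?_⟩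
      · rw [pow_succ]
        exact Set.mul_mem_mul (hy n) (by simpa using hz n)
      · have := hl.mul hl'
        refine this.congr fun n => ?_
        rw [smul_mul_smul_comm]
  have hd2 : 1 ≤ d ^ 2 := Nat.one_le_pow _ _ hd
  have hlim : Filter.Tendsto (fun n : ℕ => (d : ℝ) / ((n : ℝ) + 1)) U (𝓝 0) := by
    have : Filter.Tendsto (fun n : ℕ => (d : ℝ) / ((n : ℝ) + 1)) Filter.atTop (𝓝 0) :=
      tendsto_const_nhds.div_atTop
        (Filter.tendsto_atTop_add_const_right _ _ tendsto_natCast_atTop_atTop)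
    exact this.mono_left Nat.hyperfilter_le_atTop
  obtain ⟨m, hm⟩ := aux_comb hd (P 1) S hP1 hSP (by
    intro s hs w hw
    obtain ⟨y, hy, hl⟩ := hs
    obtain ⟨z, β, hz, hβ0, hβ1, hl'⟩ := hPk _ hw
    have hcont : Continuous fun M : Matrix (Fin d) (Fin d) ℂ => M.trace :=
      continuous_id.matrix_trace
    have h2 := (hcont.tendsto _).comp (hl.mul hl')
    refine tendsto_nhds_unique h2 ?_
    refine squeeze_zero_norm (fun n => ?_) hlim
    have hyz : y n * z n ∈ (T n) ^ (d ^ 2) := by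
      have e : d ^ 2 = (d ^ 2 - 1) + 1 := by omega
      rw [e, pow_succ']
      exact Set.mul_mem_mul (hy n) (hz n)
    have h3 := htr n _ hyz
    simp only [Function.comp]
    rw [smul_mul_smul_comm, Matrix.trace_smul, norm_smul, norm_mul,
      Real.norm_of_nonneg (hEi n), Real.norm_of_nonneg (hβ0 n)]
    have hn : (0 : ℝ) < (n : ℝ) + 1 := by positivity
    calc (E n)⁻¹ * β n * ‖(y n * z n).trace‖ ≤ (E n)⁻¹ * 1 * (d * (E n / (n + 1))) := by
          refine mul_le_mul (mul_le_mul_of_nonneg_left (hβ1 n) (hEi n)) h3 (norm_nonneg _) ?_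
          rw [mul_one]; exact hEi n
      _ = d / (n + 1) := by
          have := (hE0 n).ne'
          field_simp)
  have hsc : ∀ n, ∀ y ∈ T n, ‖(E n)⁻¹ • y‖ ≤ 2 := by
    intro n y hy
    rw [norm_smul, Real.norm_of_nonneg (hEi n), inv_mul_le_iff₀ (hE0 n)]
    linarith [hb n y hy]
  obtain ⟨g, hg, hgS⟩ := aux_contr S 2 (by
    rintro x ⟨y, hy, hx⟩
    exact le_of_tendsto hx.norm (Filter.Eventually.of_forall fun n => hsc n _ (hy n))) m hm (1/4)
    (by norm_num)
  choose y hy hyl using hlow g hg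
  have hprop : ProperSpace (Matrix (Fin d) (Fin d) ℂ) := FiniteDimensional.proper ℂ _
  obtain ⟨x, -, hx⟩ := (isCompact_closedBall (0 : Matrix (Fin d) (Fin d) ℂ) 2).ultrafilter_le_nhds
    (U.map fun n => (E n)⁻¹ • y n) (by
      rw [Filter.le_principal_iff]
      exact Filter.Eventually.of_forall (f := (U : Filter ℕ))
        (p := fun n => (E n)⁻¹ • y n ∈ Metric.closedBall (0 : Matrix (Fin d) (Fin d) ℂ) 2)
        fun n => by simpa using hsc n _ (hy n))
  have hx' : Filter.Tendsto (fun n => (E n)⁻¹ • y n) U (𝓝 x) := hx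
  have hle := hgS x ⟨y, hy, hx'⟩
  have hlt : (1/2 : ℝ) ≤ ‖g * x * g⁻¹‖ := by
    refine ge_of_tendsto ((tendsto_const_nhds.mul hx').mul tendsto_const_nhds).norm
      (Filter.Eventually.of_forall fun n => ?_)
    rw [mul_smul_comm, smul_mul_assoc, norm_smul, Real.norm_of_nonneg (hEi n)]
    rw [le_inv_mul_iff₀ (hE0 n)]
    linarith [hyl n]
  linarith


theorem aux_cvNorm {d : ℕ} (x : Fin d → ℂ) : cvNorm x = ‖(WithLp.toLp 2 x : EuclideanSpace ℂ (Fin d))‖ := by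
  rw [EuclideanSpace.norm_eq, cvNorm]

theorem aux_cOpNorm {d : ℕ} (M : Matrix (Fin d) (Fin d) ℂ) : cOpNorm M = ‖M‖ := by
  rw [Matrix.cstar_norm_def, ← ContinuousLinearMap.sSup_unitClosedBall_eq_norm, cOpNorm]
  congr 1
  ext r
  constructor
  · rintro ⟨x, hx, rfl⟩
    refine ⟨WithLp.toLp 2 x, ?_, ?_⟩
    · rw [aux_cvNorm] at hx
      simpa using hx
    · rw [aux_cvNorm]; simp
  · rintro ⟨x, hx, rfl⟩
    refine ⟨WithLp.ofLp x, ?_, ?_⟩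
    · rw [aux_cvNorm]
      simpa using hx
    · rw [aux_cvNorm, ← Matrix.ofLp_toEuclideanCLM]

theorem aux_le_specRad {d : ℕ} (M : Matrix (Fin d) (Fin d) ℂ) (μ : ℂ) (hμ : μ ∈ M.charpoly.roots) :
    ‖μ‖ ≤ specRad M := by
  refine le_csSup ?_ ⟨μ, hμ, rfl⟩
  have : {r : ℝ | ∃ μ ∈ M.charpoly.roots, r = ‖μ‖} =
      (fun μ : ℂ => ‖μ‖) '' (M.charpoly.roots.toFinset : Set ℂ) := by
    ext r; simp [eq_comm]
  rw [this]
  exact ((Finset.finite_toSet _).image _).bddAbove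

theorem aux_specRad_le {d : ℕ} (M : Matrix (Fin d) (Fin d) ℂ) : specRad M ≤ ‖M‖ := by
  refine Real.sSup_le ?_ (norm_nonneg _)
  rintro _ ⟨μ, hμ, rfl⟩
  have hs : μ ∈ spectrum ℂ M :=
    Matrix.mem_spectrum_of_isRoot_charpoly (Polynomial.isRoot_of_mem_roots hμ)
  have hprop : ProperSpace (Matrix (Fin d) (Fin d) ℂ) := FiniteDimensional.proper ℂ _
  rcases Nat.eq_zero_or_pos d with rfl | hd
  · simp [Matrix.charpoly] at hμ
  · have : Nonempty (Fin d) := ⟨⟨0, hd⟩⟩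
    exact spectrum.norm_le_norm_of_mem hs

theorem aux_trace_le {d : ℕ} (M : Matrix (Fin d) (Fin d) ℂ) : ‖M.trace‖ ≤ d * specRad M := by
  rw [Matrix.trace_eq_sum_roots_charpoly]
  have hc : M.charpoly.roots.card ≤ d := by
    have := Polynomial.card_roots' M.charpoly
    rwa [Matrix.charpoly_natDegree_eq_dim, Fintype.card_fin] at this
  have h0 : 0 ≤ specRad M := Real.sSup_nonneg (by rintro _ ⟨μ, -, rfl⟩; exact norm_nonneg _)
  have key : ∀ s : Multiset ℂ, (∀ μ ∈ s, ‖μ‖ ≤ specRad M) → ‖s.sum‖ ≤ s.card * specRad M := by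
    intro s
    induction s using Multiset.induction_on with
    | empty => simp
    | cons a s ih =>
      intro h
      rw [Multiset.sum_cons, Multiset.card_cons]
      have h1 := h a (Multiset.mem_cons_self _ _)
      have h2 := ih fun μ hμ => h μ (Multiset.mem_cons_of_mem hμ)
      have h3 := norm_add_le a s.sum
      push_cast
      linarith
  refine (key _ fun μ hμ => aux_le_specRad M μ hμ).trans ?_
  exact mul_le_mul_of_nonneg_right (by exact_mod_cast hc) h0

theorem aux_pow_bdd {d : ℕ} (Ω : Set (Matrix.SpecialLinearGroup (Fin d) ℂ)) (K : ℝ)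
    (hK : ∀ y ∈ Ω, ‖(y : Matrix (Fin d) (Fin d) ℂ)‖ ≤ K) (k : ℕ) :
    ∃ K' : ℝ, 0 ≤ K' ∧ ∀ y ∈ Ω ^ k, ‖(y : Matrix (Fin d) (Fin d) ℂ)‖ ≤ K' := by
  induction k with
  | zero =>
    refine ⟨_, norm_nonneg (1 : Matrix (Fin d) (Fin d) ℂ), fun y hy => ?_⟩
    rw [pow_zero, Set.mem_one] at hy
    simp [hy]
  | succ k ih =>
    obtain ⟨K', h0, hK'⟩ := ih
    refine ⟨K' * |K|, by positivity, fun y hy => ?_⟩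
    rw [pow_succ] at hy
    obtain ⟨a, ha, b, hb, rfl⟩ := Set.mem_mul.1 hy
    rw [Matrix.SpecialLinearGroup.coe_mul]
    exact (norm_mul_le _ _).trans
      (mul_le_mul (hK' a ha) ((hK b hb).trans (le_abs_self K)) (norm_nonneg _) h0)

theorem aux_bdd_spec {d : ℕ} (Ω : Set (Matrix.SpecialLinearGroup (Fin d) ℂ)) (K : ℝ)
    (hK : ∀ y ∈ Ω, ‖(y : Matrix (Fin d) (Fin d) ℂ)‖ ≤ K) (k : ℕ) :
    BddAbove ((fun y : Matrix.SpecialLinearGroup (Fin d) ℂ =>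
            specRad (y : Matrix (Fin d) (Fin d) ℂ)) '' (Ω ^ k)) := by
  obtain ⟨K', -, hK'⟩ := aux_pow_bdd Ω K hK k
  refine ⟨K', ?_⟩
  rintro _ ⟨y, hy, rfl⟩
  exact (aux_specRad_le _).trans (hK' y hy)

theorem aux_bdd_conj {d : ℕ} (Ω : Set (Matrix.SpecialLinearGroup (Fin d) ℂ)) (K : ℝ)
    (hK : ∀ y ∈ Ω, ‖(y : Matrix (Fin d) (Fin d) ℂ)‖ ≤ K)
    (h : Matrix.SpecialLinearGroup (Fin d) ℂ) :
    BddAbove ((fun y : Matrix.SpecialLinearGroup (Fin d) ℂ =>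
                cOpNorm ((h * y * h⁻¹ : Matrix.SpecialLinearGroup (Fin d) ℂ) :
                  Matrix (Fin d) (Fin d) ℂ)) '' Ω) := by
  refine ⟨‖(h : Matrix (Fin d) (Fin d) ℂ)‖ * K *
    ‖((h⁻¹ : Matrix.SpecialLinearGroup (Fin d) ℂ) : Matrix (Fin d) (Fin d) ℂ)‖, ?_⟩
  rintro _ ⟨y, hy, rfl⟩
  simp only [aux_cOpNorm]
  rw [Matrix.SpecialLinearGroup.coe_mul, Matrix.SpecialLinearGroup.coe_mul]
  refine (norm_mul_le _ _).trans (mul_le_mul_of_nonneg_right ?_ (norm_nonneg _))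
  exact (norm_mul_le _ _).trans (mul_le_mul_of_nonneg_left (hK y hy) (norm_nonneg _))

/-- Conjugation by `h` as a monoid homomorphism into matrices. -/
def auxConj {d : ℕ} (h : Matrix.SpecialLinearGroup (Fin d) ℂ) :
    Matrix.SpecialLinearGroup (Fin d) ℂ →* Matrix (Fin d) (Fin d) ℂ where
  toFun y := ((h * y * h⁻¹ : Matrix.SpecialLinearGroup (Fin d) ℂ) : Matrix (Fin d) (Fin d) ℂ)
  map_one' := by simp only [mul_one, mul_inv_cancel, Matrix.SpecialLinearGroup.coe_one]
  map_mul' a b := by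
    have e : h * (a * b) * h⁻¹ = (h * a * h⁻¹) * (h * b * h⁻¹) := by group
    rw [← Matrix.SpecialLinearGroup.coe_mul, ← e]

theorem aux_scale {d : ℕ} (hd : 1 ≤ d) (g : Matrix (Fin d) (Fin d) ℂ) (hg : IsUnit g) :
    ∃ s : Matrix.SpecialLinearGroup (Fin d) ℂ, ∀ y : Matrix.SpecialLinearGroup (Fin d) ℂ,
      ((s * y * s⁻¹ : Matrix.SpecialLinearGroup (Fin d) ℂ) : Matrix (Fin d) (Fin d) ℂ) =
        g * (y : Matrix (Fin d) (Fin d) ℂ) * g⁻¹ := by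
  have hdet := (Matrix.isUnit_iff_isUnit_det g).1 hg
  obtain ⟨c, hc⟩ := IsAlgClosed.exists_pow_nat_eq (g.det)⁻¹ hd
  have hc0 : c ≠ 0 := by
    rintro rfl
    rw [zero_pow (by omega)] at hc
    exact inv_ne_zero hdet.ne_zero hc.symm
  let s : Matrix.SpecialLinearGroup (Fin d) ℂ := ⟨c • g, by
    rw [Matrix.det_smul, Fintype.card_fin, hc, inv_mul_cancel₀ hdet.ne_zero]⟩
  have hs : (s : Matrix (Fin d) (Fin d) ℂ) = c • g := rfl
  have hsi : ((s⁻¹ : Matrix.SpecialLinearGroup (Fin d) ℂ) : Matrix (Fin d) (Fin d) ℂ)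
      = c⁻¹ • g⁻¹ := by
    have h1 : (s : Matrix (Fin d) (Fin d) ℂ) * (c⁻¹ • g⁻¹) = 1 := by
      rw [hs, smul_mul_smul_comm, mul_inv_cancel₀ hc0, one_smul, Matrix.mul_nonsing_inv g hdet]
    have h2 : ((s⁻¹ : Matrix.SpecialLinearGroup (Fin d) ℂ) : Matrix (Fin d) (Fin d) ℂ) * s = 1 := by
      rw [← Matrix.SpecialLinearGroup.coe_mul, inv_mul_cancel, Matrix.SpecialLinearGroup.coe_one]
    exact left_inv_eq_right_inv h2 h1
  refine ⟨s, fun y => ?_⟩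
  rw [Matrix.SpecialLinearGroup.coe_mul, Matrix.SpecialLinearGroup.coe_mul, hsi, hs,
    smul_mul_assoc, smul_mul_smul_comm, mul_inv_cancel₀ hc0, one_smul]

theorem aux_main (d : ℕ) (hd : 1 ≤ d) :
    ∃ c : ℝ, 0 < c ∧
      ∀ Ω : Set (Matrix.SpecialLinearGroup (Fin d) ℂ),
        IsCompact ((fun g : Matrix.SpecialLinearGroup (Fin d) ℂ =>
          (g : Matrix (Fin d) (Fin d) ℂ)) '' Ω) →
        (1 : Matrix.SpecialLinearGroup (Fin d) ℂ) ∈ Ω →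
        c * (⨅ h : Matrix.SpecialLinearGroup (Fin d) ℂ,
              sSup ((fun y : Matrix.SpecialLinearGroup (Fin d) ℂ =>
                cOpNorm ((h * y * h⁻¹ : Matrix.SpecialLinearGroup (Fin d) ℂ) :
                  Matrix (Fin d) (Fin d) ℂ)) '' Ω)) ≤
          sSup ((fun y : Matrix.SpecialLinearGroup (Fin d) ℂ =>
            specRad (y : Matrix (Fin d) (Fin d) ℂ)) '' (Ω ^ (d ^ 2))) := by
  by_contra hcon
  push Not at hcon
  choose Ω hcomp h1 hlt using fun n : ℕ => hcon (1 / ((n : ℝ) + 1)) (by positivity)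
  have hK : ∀ n, ∃ K : ℝ, ∀ y ∈ Ω n, ‖(y : Matrix (Fin d) (Fin d) ℂ)‖ ≤ K := by
    intro n
    obtain ⟨K, hK⟩ := (hcomp n).isBounded.exists_norm_le
    exact ⟨K, fun y hy => hK _ ⟨y, hy, rfl⟩⟩
  choose K hK using hK
  set Λ : ℕ → ℝ := fun n => sSup ((fun y : Matrix.SpecialLinearGroup (Fin d) ℂ =>
            specRad (y : Matrix (Fin d) (Fin d) ℂ)) '' ((Ω n) ^ (d ^ 2))) with hΛ
  set E : ℕ → ℝ := fun n => ⨅ h : Matrix.SpecialLinearGroup (Fin d) ℂ,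
              sSup ((fun y : Matrix.SpecialLinearGroup (Fin d) ℂ =>
                cOpNorm ((h * y * h⁻¹ : Matrix.SpecialLinearGroup (Fin d) ℂ) :
                  Matrix (Fin d) (Fin d) ℂ)) '' (Ω n)) with hE
  have hlt' : ∀ n, Λ n < 1 / ((n : ℝ) + 1) * E n := hlt
  have hspec : ∀ n, ∀ y ∈ (Ω n) ^ (d ^ 2), specRad (y : Matrix (Fin d) (Fin d) ℂ) ≤ Λ n :=
    fun n y hy => le_csSup (aux_bdd_spec (Ω n) (K n) (hK n) _) ⟨y, hy, rfl⟩
  have hd0 : (0 : ℝ) < d := by exact_mod_cast hd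
  have hΛ1 : ∀ n, 1 ≤ Λ n := by
    intro n
    have h2 := hspec n 1 (Set.one_mem_pow (h1 n))
    have h3 := aux_trace_le (1 : Matrix (Fin d) (Fin d) ℂ)
    rw [Matrix.trace_one, Fintype.card_fin, Complex.norm_natCast] at h3
    rw [Matrix.SpecialLinearGroup.coe_one] at h2
    have h4 : 1 ≤ specRad (1 : Matrix (Fin d) (Fin d) ℂ) := by
      by_contra hh
      push Not at hh
      nlinarith
    linarith
  have hEn : ∀ n, Λ n ≤ E n / (n + 1) := fun n => by
    have := (hlt' n).le
    rwa [one_div_mul_eq_div] at this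
  have hE1 : ∀ n, 1 ≤ E n := by
    intro n
    have h2 := (hΛ1 n).trans (hEn n)
    have hn : (0 : ℝ) < (n : ℝ) + 1 := by positivity
    rw [le_div_iff₀ hn] at h2
    have : (0 : ℝ) ≤ (n : ℝ) := Nat.cast_nonneg n
    linarith
  have hex : ∀ n, ∃ h : Matrix.SpecialLinearGroup (Fin d) ℂ,
      sSup ((fun y : Matrix.SpecialLinearGroup (Fin d) ℂ =>
                cOpNorm ((h * y * h⁻¹ : Matrix.SpecialLinearGroup (Fin d) ℂ) :
                  Matrix (Fin d) (Fin d) ℂ)) '' (Ω n)) < 2 * E n := fun n =>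
    exists_lt_of_ciInf_lt (show E n < 2 * E n by linarith [hE1 n])
  choose h hh using hex
  refine aux_core hd (fun n => auxConj (h n) '' (Ω n)) E hE1 ?_ ?_ ?_ ?_
  · intro n
    exact ⟨1, h1 n, map_one _⟩
  · rintro n _ ⟨y, hy, rfl⟩
    have h2 := (le_csSup (aux_bdd_conj (Ω n) (K n) (hK n) (h n)) ⟨y, hy, rfl⟩).trans (hh n).le
    rw [← aux_cOpNorm]
    exact h2
  · intro n y hy
    have e := Set.image_pow (auxConj (h n)) (Ω n) (d ^ 2)
    simp only [← e] at hy
    obtain ⟨z, hz, rfl⟩ := hy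
    have h2 : (auxConj (h n) z).trace = (z : Matrix (Fin d) (Fin d) ℂ).trace := by
      change ((h n * z * (h n)⁻¹ : Matrix.SpecialLinearGroup (Fin d) ℂ) :
        Matrix (Fin d) (Fin d) ℂ).trace = _
      rw [Matrix.SpecialLinearGroup.coe_mul, Matrix.trace_mul_comm,
        ← Matrix.SpecialLinearGroup.coe_mul, ← mul_assoc, inv_mul_cancel, one_mul]
    rw [h2]
    refine (aux_trace_le _).trans ?_
    exact mul_le_mul_of_nonneg_left ((hspec n z hz).trans (hEn n)) hd0.le
  · intro g hg n
    obtain ⟨s, hs⟩ := aux_scale hd g hg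
    have hbel : BddBelow (Set.range fun h : Matrix.SpecialLinearGroup (Fin d) ℂ =>
        sSup ((fun y : Matrix.SpecialLinearGroup (Fin d) ℂ =>
                cOpNorm ((h * y * h⁻¹ : Matrix.SpecialLinearGroup (Fin d) ℂ) :
                  Matrix (Fin d) (Fin d) ℂ)) '' (Ω n))) := by
      refine ⟨0, ?_⟩
      rintro _ ⟨k, rfl⟩
      refine Real.sSup_nonneg ?_
      rintro _ ⟨y, -, rfl⟩
      simp only [aux_cOpNorm]
      exact norm_nonneg _
    have h2 := ciInf_le hbel (s * h n)
    have h3 : E n / 2 < E n := by linarith [hE1 n]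
    obtain ⟨_, ⟨y, hy, rfl⟩, hlt2⟩ := exists_lt_of_lt_csSup (Set.Nonempty.image _ ⟨1, h1 n⟩)
      (lt_of_lt_of_le h3 h2)
    refine ⟨_, ⟨y, hy, rfl⟩, ?_⟩
    have h4 : s * h n * y * (s * h n)⁻¹ = s * (h n * y * (h n)⁻¹) * s⁻¹ := by group
    simp only [aux_cOpNorm, h4, hs] at hlt2
    exact hlt2.le

end Aux

/-- **Eigenvalue versus conjugation-minimal norm (Proposition 1, Archimedean case).**
For every `d ≥ 1` there is `c = c(d) > 0` such that for every compact `Ω ⊆ SL_d(ℂ)` with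
`1 ∈ Ω` one has `Λ(Ω^{d²}) ≥ c · E(Ω)`, where `Λ` is the supremum of spectral radii and
`E(Ω) = inf_h sup_{y ∈ Ω} ‖h y h⁻¹‖`. -/
theorem eigenvalue_vs_min_norm (d : ℕ) (hd : 1 ≤ d) :
    ∃ c : ℝ, 0 < c ∧
      ∀ Ω : Set (Matrix.SpecialLinearGroup (Fin d) ℂ),
        IsCompact ((fun g : Matrix.SpecialLinearGroup (Fin d) ℂ =>
          (g : Matrix (Fin d) (Fin d) ℂ)) '' Ω) →
        (1 : Matrix.SpecialLinearGroup (Fin d) ℂ) ∈ Ω →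
        c * (⨅ h : Matrix.SpecialLinearGroup (Fin d) ℂ,
              sSup ((fun y : Matrix.SpecialLinearGroup (Fin d) ℂ =>
                cOpNorm ((h * y * h⁻¹ : Matrix.SpecialLinearGroup (Fin d) ℂ) :
                  Matrix (Fin d) (Fin d) ℂ)) '' Ω)) ≤
          sSup ((fun y : Matrix.SpecialLinearGroup (Fin d) ℂ =>
            specRad (y : Matrix (Fin d) (Fin d) ℂ)) '' (Ω ^ (d ^ 2))) := by
  exact aux_main d hd
end
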